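/- arXiv:2412.00865 — 4 statements merged into one kernel-verified Lean document; each statement's English description precedes it below -/
import Mathlib

section
/- Let d ≥ 1 and set α* := (2−d)/2. For every α < 0 (with α ≠ α* when d ≥ 3) there exists a constant Λ > 0 such that for every D ≥ 0 (with the additional requirement D > 0 when α < α*) and every continuously differentiable function f : ℝ^d → ℝ satisfying ∫_{ℝ^d} |∇f(x)|² (D+|x|²)^α dx < ∞, ∫_{ℝ^d} |f(x)| (D+|x|²)^{α−1} dx < ∞ and ∫_{ℝ^d} f(x) (D+|x|²)^{α−1} dx = 0, one has Λ ∫_{ℝ^d} |f(x)|² (D+|x|²)^{α−1} dx ≤ ∫_{ℝ^d} |∇f(x)|² (D+|x|²)^α dx. -/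
open MeasureTheory Real

/-!
Applying Euler's identity `∫ DG(x) x = -d ∫ G` to `G = f² (D + |x|²) ^ (α - 1)` and estimating
`2 f (∇f · x)` by Young's inequality gives, with `α* = (2 - d) / 2`, a Hardy inequality up to the
term `2 (1 - α) D ∫ f² (D + |x|²) ^ (α - 2)`. For `α > α*` this term has the good sign; its
constant does not depend on `D`, so `D = 0` is reached by regularization. For `α < α*` the term has
the wrong sign, but outside a ball of radius comparable to `√D` it is absorbed. Inside that ball a
Poincaré inequality controls `f - c` for a suitable constant `c`, with a constant that is
independent of `D` by scaling. The mean-zero condition then allows `f - c` to be replaced by `f`,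
since the weight is integrable in this case.

The finiteness of `∫ f² (D + |x|²) ^ (α - 1)` comes from applying the inequalities to truncations
of `f`, for which it follows from the integrability of `|f| (D + |x|²) ^ (α - 1)`, and passing to
the limit with Fatou's lemma.
-/

open Filter Function Metric Module Set Topology
open scoped ENNReal

section EulerIdentity

variable {E F : Type*} [NormedAddCommGroup E] [NormedSpace ℝ E] [NormedAddCommGroup F]
  [NormedSpace ℝ F]

lemma fderiv_apply_self_eq_sum {ι : Type*} [Fintype ι] (b : Basis ι ℝ E) (G : E → F) (x : E) :
    fderiv ℝ G x x = ∑ i, b.coord i x • fderiv ℝ G x (b i) := by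
  conv_lhs => rw [← b.sum_repr x, map_sum]
  simp

lemma fderiv_comp_const_smul_smul_apply_self {χ : E → ℝ} {G : E → F} (hχ : Differentiable ℝ χ)
    (hG : Differentiable ℝ G) (ε : ℝ) (x : E) :
    fderiv ℝ (fun y ↦ χ (ε • y) • G y) x x =
      χ (ε • x) • fderiv ℝ G x x + fderiv ℝ χ (ε • x) (ε • x) • G x := by
  have hχε : HasFDerivAt (fun y ↦ χ (ε • y)) ((fderiv ℝ χ (ε • x)).comp (ε • .id ℝ E)) x :=
    (hχ _).hasFDerivAt.comp x ((hasFDerivAt_id x).const_smul ε)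
  have hprod : HasFDerivAt (fun y ↦ χ (ε • y) • G y) _ x := hχε.smul (hG x).hasFDerivAt
  simp [hprod.fderiv]

variable [MeasurableSpace E] [BorelSpace E] {μ : Measure E}

lemma tendsto_integral_comp_const_smul_smul {χ : E → ℝ} {C : ℝ} {G : E → F} (hχ : Continuous χ)
    (hC : ∀ y, ‖χ y‖ ≤ C) (hG : Integrable G μ) :
    Tendsto (fun ε : ℝ ↦ ∫ x, χ (ε • x) • G x ∂μ) (𝓝 0) (𝓝 (χ 0 • ∫ x, G x ∂μ)) := by
  rw [← integral_smul]
  refine tendsto_integral_filter_of_dominated_convergence (fun x ↦ C * ‖G x‖)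
    (.of_forall fun ε ↦ ?_) (.of_forall fun ε ↦ .of_forall fun x ↦ ?_) (hG.norm.const_mul C)
    (.of_forall fun x ↦ ?_)
  · exact (hχ.comp (continuous_const_smul ε)).measurable.aestronglyMeasurable.smul hG.1
  · grw [norm_smul, hC]
  · have : Continuous fun ε : ℝ ↦ χ (ε • x) := by fun_prop
    exact (this.tendsto' 0 _ (by rw [zero_smul])).smul_const (G x)

variable [FiniteDimensional ℝ E] [μ.IsAddHaarMeasure] {G : E → F}

theorem integral_fderiv_apply_self_of_hasCompactSupport (hG : ContDiff ℝ 1 G)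
    (hsupp : HasCompactSupport G) :
    ∫ x, fderiv ℝ G x x ∂μ = -((finrank ℝ E : ℝ) • ∫ x, G x ∂μ) := by
  let b := finBasis ℝ E
  let coord : Fin (finrank ℝ E) → E →L[ℝ] ℝ := fun i ↦ (b.coord i).toContinuousLinearMap
  have hDG : Continuous (fderiv ℝ G) := hG.continuous_fderiv one_ne_zero
  have hDG_supp (v : E) : HasCompactSupport fun x ↦ fderiv ℝ G x v := hsupp.fderiv_apply ℝ v
  have integrable_coord_smul (i) : Integrable (fun x ↦ coord i x • fderiv ℝ G x (b i)) μ :=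
    ((coord i).continuous.smul (hDG.clm_apply continuous_const)).integrable_of_hasCompactSupport
      (hDG_supp (b i)).smul_left
  have by_parts (i) : ∫ x, coord i x • fderiv ℝ G x (b i) ∂μ = -∫ x, G x ∂μ := by
    have hcoord (x : E) : fderiv ℝ (coord i) x (b i) = 1 := by
      rw [(coord i).fderiv]
      simp [coord]
    have hGi : Integrable G μ := hG.continuous.integrable_of_hasCompactSupport hsupp
    have := integral_smul_fderiv_eq_neg_fderiv_smul_of_integrable (μ := μ) (f := coord i) (g := G)
      (v := b i) (by simpa only [hcoord, one_smul] using hGi) (integrable_coord_smul i)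
      (((coord i).continuous.smul hG.continuous).integrable_of_hasCompactSupport hsupp.smul_left)
      (fun x _ ↦ (coord i).differentiableAt) (fun x _ ↦ hG.differentiable one_ne_zero x)
    simpa only [hcoord, one_smul] using this
  calc ∫ x, fderiv ℝ G x x ∂μ = ∫ x, ∑ i, coord i x • fderiv ℝ G x (b i) ∂μ :=
        integral_congr_ae (.of_forall fun x ↦ fderiv_apply_self_eq_sum b G x)
    _ = ∑ i, ∫ x, coord i x • fderiv ℝ G x (b i) ∂μ :=
        integral_finsetSum _ fun i _ ↦ integrable_coord_smul i
    _ = -((finrank ℝ E : ℝ) • ∫ x, G x ∂μ) := by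
        simp [by_parts, Nat.cast_smul_eq_nsmul]

theorem integral_fderiv_apply_self (hG : ContDiff ℝ 1 G) (hGi : Integrable G μ)
    (hDGi : Integrable (fun x ↦ fderiv ℝ G x x) μ) :
    ∫ x, fderiv ℝ G x x ∂μ = -((finrank ℝ E : ℝ) • ∫ x, G x ∂μ) := by
  obtain ⟨χ⟩ : Nonempty (ContDiffBump (0 : E)) := inferInstance
  have hχ : ContDiff ℝ 1 χ := χ.contDiff
  have hχ_le (y : E) : ‖χ y‖ ≤ 1 := (Real.norm_of_nonneg χ.nonneg).trans_le χ.le_one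
  have hχ_zero : χ 0 = 1 := χ.one_of_mem_closedBall (mem_closedBall_self χ.rIn_pos.le)
  -- `y ↦ Dχ(y) y` is bounded and vanishes at `0`, so the error made by the cutoff `χ (ε • x)`
  -- disappears in the limit `ε → 0`.
  let ψ (y : E) : ℝ := fderiv ℝ χ y y
  have hψ : Continuous ψ := (hχ.continuous_fderiv one_ne_zero).clm_apply continuous_id
  obtain ⟨C, hψ_le⟩ : ∃ C, ∀ y, ‖ψ y‖ ≤ C := hψ.bounded_above_of_compact_support <|
    (χ.hasCompactSupport.fderiv (𝕜 := ℝ)).mono fun y hy h ↦ hy (by simp [ψ, h])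
  have integrable_smul {η : E → ℝ} {B : ℝ} {H : E → F} (hη : Continuous η) (hB : ∀ y, ‖η y‖ ≤ B)
      (hH : Integrable H μ) (ε : ℝ) : Integrable (fun x ↦ η (ε • x) • H x) μ :=
    hH.bdd_smul B (hη.comp (continuous_const_smul ε)).measurable.aestronglyMeasurable
      (.of_forall fun x ↦ hB _)
  have cutoff_identity {ε : ℝ} (hε : ε ≠ 0) :
      ∫ x, χ (ε • x) • fderiv ℝ G x x ∂μ + ∫ x, ψ (ε • x) • G x ∂μ =
        -((finrank ℝ E : ℝ) • ∫ x, χ (ε • x) • G x ∂μ) := by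
    have euler := integral_fderiv_apply_self_of_hasCompactSupport (μ := μ)
      (G := fun x ↦ χ (ε • x) • G x) ((hχ.comp (contDiff_const_smul ε)).smul hG)
      (χ.hasCompactSupport.comp_smul hε).smul_right
    rw [← euler, ← integral_add (integrable_smul χ.continuous hχ_le hDGi ε)
      (integrable_smul hψ hψ_le hGi ε)]
    simp only [ψ, fderiv_comp_const_smul_smul_apply_self (hχ.differentiable one_ne_zero)
      (hG.differentiable one_ne_zero)]
  have lhs_tendsto := (tendsto_integral_comp_const_smul_smul χ.continuous hχ_le hDGi).add
    (tendsto_integral_comp_const_smul_smul hψ hψ_le hGi)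
  have rhs_tendsto := ((tendsto_integral_comp_const_smul_smul χ.continuous hχ_le hGi).const_smul
    (finrank ℝ E : ℝ)).neg
  simp only [hχ_zero, ψ, map_zero, zero_smul, one_smul, add_zero] at lhs_tendsto rhs_tendsto
  refine tendsto_nhds_unique (lhs_tendsto.mono_left nhdsWithin_le_nhds)
    ((rhs_tendsto.mono_left nhdsWithin_le_nhds).congr' (f₁ := _) (l₁ := 𝓝[≠] 0) ?_)
  filter_upwards [self_mem_nhdsWithin] with ε hε using (cutoff_identity hε).symm

end EulerIdentity

section LocalPoincare

lemma sq_lintegral_le_lintegral_sq {X : Type*} [MeasurableSpace X] {ν : Measure X}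
    [IsProbabilityMeasure ν] {g : X → ℝ≥0∞} (hg : AEMeasurable g ν) :
    (∫⁻ x, g x ∂ν) ^ 2 ≤ ∫⁻ x, g x ^ 2 ∂ν := by
  have h := eLpNorm_le_eLpNorm_of_exponent_le (p := 1) (q := 2) one_le_two
    hg.aestronglyMeasurable
  rw [eLpNorm_one_eq_lintegral_enorm] at h
  calc (∫⁻ x, g x ∂ν) ^ 2 ≤ eLpNorm g 2 ν ^ 2 := by gcongr; exact h
    _ = ∫⁻ x, g x ^ 2 ∂ν := by
      simpa using eLpNorm_nnreal_pow_eq_lintegral (f := g) (p := 2) (μ := ν) two_ne_zero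

variable {E F : Type*} [NormedAddCommGroup E] [NormedSpace ℝ E] [NormedAddCommGroup F]
  [NormedSpace ℝ F] {f : E → F} {s : Set E}

lemma enorm_sub_sq_le_lintegral_fderiv (hf : ContDiff ℝ 1 f) (x y : E) :
    ‖f x - f y‖ₑ ^ 2 ≤
      ‖x - y‖ₑ ^ 2 * ∫⁻ t in Icc (0 : ℝ) 1, ‖fderiv ℝ f (t • x + (1 - t) • y)‖ₑ ^ 2 := by
  let γ (t : ℝ) : E := t • x + (1 - t) • y
  have hγ (t : ℝ) : HasDerivAt γ (x - y) t :=
    (((hasDerivAt_id t).smul_const x).fun_add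
      (((hasDerivAt_id t).const_sub 1).smul_const y)).congr_deriv (by simp [sub_eq_add_neg])
  have hγ_smooth : ContDiff ℝ 1 γ := by fun_prop
  have speed (t : ℝ) : ‖deriv (f ∘ γ) t‖ₑ ≤ ‖x - y‖ₑ * ‖fderiv ℝ f (γ t)‖ₑ := by
    rw [((hf.differentiable one_ne_zero _).hasFDerivAt.comp_hasDerivAt t (hγ t)).deriv, mul_comm]
    exact (fderiv ℝ f (γ t)).le_opENorm _
  have hDf : Continuous fun t ↦ ‖fderiv ℝ f (γ t)‖ₑ :=
    ((hf.continuous_fderiv one_ne_zero).comp hγ_smooth.continuous).enorm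
  have : IsProbabilityMeasure (volume.restrict (Icc (0 : ℝ) 1)) := ⟨by simp⟩
  calc ‖f x - f y‖ₑ ^ 2 = ‖(f ∘ γ) 1 - (f ∘ γ) 0‖ₑ ^ 2 := by simp [γ]
    _ ≤ (∫⁻ t in Icc (0 : ℝ) 1, ‖x - y‖ₑ * ‖fderiv ℝ f (γ t)‖ₑ) ^ 2 := by
      grw [enorm_sub_le_lintegral_deriv_of_contDiffOn_Icc (hf.comp hγ_smooth).contDiffOn
        zero_le_one]
      gcongr with t
      exact speed t
    _ ≤ _ := by
      rw [lintegral_const_mul' _ _ enorm_ne_top, mul_pow]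
      gcongr
      exact sq_lintegral_le_lintegral_sq hDf.measurable.aemeasurable

variable [FiniteDimensional ℝ E] [MeasurableSpace E] [BorelSpace E] {μ : Measure E}
  [μ.IsAddHaarMeasure] {h : E → ℝ≥0∞}

lemma lintegral_comp_smul_add (hh : Measurable h) {t : ℝ} (ht : t ≠ 0) (v : E) :
    ∫⁻ x, h (t • x + v) ∂μ = ENNReal.ofReal |(t ^ finrank ℝ E)⁻¹| * ∫⁻ x, h x ∂μ := by
  calc ∫⁻ x, h (t • x + v) ∂μ = ∫⁻ y, h (y + v) ∂(μ.map (t • ·)) :=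
        (lintegral_map (f := fun y ↦ h (y + v)) (by fun_prop) (by fun_prop)).symm
    _ = _ := by
      rw [Measure.map_addHaar_smul μ ht, lintegral_smul_measure, smul_eq_mul,
        lintegral_add_right_eq_self]

lemma lintegral_comp_smul_add_le (hh : Measurable h) {t : ℝ} (ht : 1 / 2 ≤ t) (v : E) :
    ∫⁻ x, h (t • x + v) ∂μ ≤ 2 ^ finrank ℝ E * ∫⁻ x, h x ∂μ := by
  have ht0 : 0 < t := by linarith
  rw [lintegral_comp_smul_add hh ht0.ne']
  gcongr
  refine ENNReal.ofReal_le_of_le_toReal ?_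
  rw [abs_of_pos (by positivity), ← inv_pow, ENNReal.toReal_pow, ENNReal.toReal_ofNat]
  gcongr
  exact inv_le_of_inv_le₀ two_pos (by linarith)

lemma setLIntegral_setLIntegral_comp_convexCombo_le (hh : Measurable h) (s : Set E) (t : ℝ) :
    ∫⁻ y in s, ∫⁻ x in s, h (t • x + (1 - t) • y) ∂μ ∂μ ≤
      2 ^ finrank ℝ E * (∫⁻ x, h x ∂μ) * μ s := by
  -- For `t ≥ 1 / 2` the inner variable `x` is rescaled by a factor at least `1 / 2`; otherwise
  -- `y` is.
  wlog ht : 1 / 2 ≤ t generalizing t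
  · rw [lintegral_lintegral_swap (by fun_prop)]
    simpa [add_comm] using this (1 - t) (by linarith)
  grw [lintegral_mono fun y ↦ (setLIntegral_le_lintegral s _).trans
    (lintegral_comp_smul_add_le hh ht _)]
  simp

lemma setLIntegral_setLIntegral_enorm_sub_sq_le (hf : ContDiff ℝ 1 f) (hs : Convex ℝ s)
    (hsm : MeasurableSet s) :
    ∫⁻ y in s, ∫⁻ x in s, ‖f x - f y‖ₑ ^ 2 ∂μ ∂μ ≤
      ediam s ^ 2 * (2 ^ finrank ℝ E * (∫⁻ x in s, ‖fderiv ℝ f x‖ₑ ^ 2 ∂μ) * μ s) := by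
  have hDf : Measurable fun x ↦ ‖fderiv ℝ f x‖ₑ ^ 2 :=
    (hf.continuous_fderiv one_ne_zero).enorm.measurable.pow_const 2
  let h : E → ℝ≥0∞ := s.indicator fun x ↦ ‖fderiv ℝ f x‖ₑ ^ 2
  have hh : Measurable h := hDf.indicator hsm
  have segment_le {x y : E} (hx : x ∈ s) (hy : y ∈ s) :
      ‖f x - f y‖ₑ ^ 2 ≤ ediam s ^ 2 * ∫⁻ t in Icc (0 : ℝ) 1, h (t • x + (1 - t) • y) := by
    grw [enorm_sub_sq_le_lintegral_fderiv hf x y, ← edist_eq_enorm_sub,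
      edist_le_ediam_of_mem hx hy]
    refine mul_le_mul_right (setLIntegral_mono' measurableSet_Icc fun t ht ↦ ?_) _
    have : t • x + (1 - t) • y ∈ s := hs hx hy ht.1 (sub_nonneg.2 ht.2) (add_sub_cancel _ _)
    simp only [h, indicator_of_mem this, le_refl]
  have tonelli : ∫⁻ t in Icc (0 : ℝ) 1, ∫⁻ y in s, ∫⁻ x in s, h (t • x + (1 - t) • y) ∂μ ∂μ =
      ∫⁻ y in s, ∫⁻ x in s, (∫⁻ t in Icc (0 : ℝ) 1, h (t • x + (1 - t) • y)) ∂μ ∂μ := by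
    rw [lintegral_lintegral_swap (by fun_prop)]
    congr with y
    rw [lintegral_lintegral_swap (by fun_prop)]
  calc ∫⁻ y in s, ∫⁻ x in s, ‖f x - f y‖ₑ ^ 2 ∂μ ∂μ
    _ ≤ ∫⁻ y in s, ∫⁻ x in s,
          ediam s ^ 2 * (∫⁻ t in Icc (0 : ℝ) 1, h (t • x + (1 - t) • y)) ∂μ ∂μ :=
      setLIntegral_mono' hsm fun y hy ↦ setLIntegral_mono' hsm fun x hx ↦ segment_le hx hy
    _ = ediam s ^ 2 * ∫⁻ t in Icc (0 : ℝ) 1, ∫⁻ y in s, ∫⁻ x in s,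
          h (t • x + (1 - t) • y) ∂μ ∂μ := by
      rw [tonelli, ← lintegral_const_mul _ (by fun_prop)]
      congr with y
      rw [lintegral_const_mul _ (by fun_prop)]
    _ ≤ _ := by
      grw [lintegral_mono fun t ↦ setLIntegral_setLIntegral_comp_convexCombo_le hh s t]
      simp [h, lintegral_indicator hsm]

lemma exists_setLIntegral_enorm_sub_sq_le (hf : ContDiff ℝ 1 f) (hs : Convex ℝ s)
    (hsm : MeasurableSet s) (hμs : μ s ≠ ∞) :
    ∃ c, ∫⁻ x in s, ‖f x - c‖ₑ ^ 2 ∂μ ≤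
      ediam s ^ 2 * (2 ^ finrank ℝ E * ∫⁻ x in s, ‖fderiv ℝ f x‖ₑ ^ 2 ∂μ) := by
  by_cases hμs₀ : μ s = 0
  · exact ⟨0, by simp [Measure.restrict_eq_zero.2 hμs₀]⟩
  have hmeas : Measurable fun p : E × E ↦ ‖f p.2 - f p.1‖ₑ ^ 2 :=
    ((hf.continuous.comp continuous_snd).sub
      (hf.continuous.comp continuous_fst)).enorm.measurable.pow_const 2
  obtain ⟨y, -, hy⟩ := exists_le_setLAverage hμs₀ hμs
    (hmeas.lintegral_prod_right' (ν := μ.restrict s)).aemeasurable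
  refine ⟨f y, hy.trans ?_⟩
  rw [setLAverage_eq]
  refine ENNReal.div_le_of_le_mul ?_
  simpa only [mul_assoc] using setLIntegral_setLIntegral_enorm_sub_sq_le hf hs hsm

lemma ofReal_setIntegral_norm_sq {X H : Type*} [TopologicalSpace X] [MeasurableSpace X]
    [OpensMeasurableSpace X] {ν : Measure X} [IsFiniteMeasureOnCompacts ν] [NormedAddCommGroup H]
    {g : X → H} {s : Set X} (hg : Continuous g) (hs : IsCompact s) (hsm : MeasurableSet s) :
    ENNReal.ofReal (∫ x in s, ‖g x‖ ^ 2 ∂ν) = ∫⁻ x in s, ‖g x‖ₑ ^ 2 ∂ν := by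
  rw [ofReal_integral_eq_lintegral_ofReal
    ((by fun_prop : ContinuousOn (fun x ↦ ‖g x‖ ^ 2) s).integrableOn_compact' hs hsm)
    (.of_forall fun x ↦ by positivity)]
  simp [ENNReal.ofReal_pow]

theorem exists_setIntegral_norm_sub_sq_le (hf : ContDiff ℝ 1 f) (hs : Convex ℝ s)
    (hsc : IsCompact s) :
    ∃ c, ∫ x in s, ‖f x - c‖ ^ 2 ∂μ ≤
      diam s ^ 2 * 2 ^ finrank ℝ E * ∫ x in s, ‖fderiv ℝ f x‖ ^ 2 ∂μ := by
  obtain ⟨c, hc⟩ := exists_setLIntegral_enorm_sub_sq_le hf hs hsc.measurableSet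
    (hsc.measure_ne_top (μ := μ))
  refine ⟨c, (ENNReal.ofReal_le_ofReal_iff (by positivity)).1 ?_⟩
  rw [ENNReal.ofReal_mul (by positivity),
    ofReal_setIntegral_norm_sq (by fun_prop) hsc hsc.measurableSet,
    ofReal_setIntegral_norm_sq (hf.continuous_fderiv one_ne_zero) hsc hsc.measurableSet]
  convert hc using 1
  rw [ENNReal.ofReal_mul (by positivity), ENNReal.ofReal_pow diam_nonneg, Metric.diam,
    ENNReal.ofReal_toReal hsc.isBounded.ediam_ne_top, ENNReal.ofReal_pow zero_le_two,
    ENNReal.ofReal_ofNat, mul_assoc]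

end LocalPoincare

section RadialWeight

/-- The weight `x ↦ (D + |x|²) ^ p` of the Hardy–Poincaré inequality. For `p < 0` and `D = 0` it
is singular at the origin, where it takes the junk value `0 ^ p = 0`. -/
noncomputable def radialWeight {E : Type*} [NormedAddCommGroup E] (D p : ℝ) (x : E) : ℝ :=
  (D + ‖x‖ ^ 2) ^ p

variable {E : Type*} [NormedAddCommGroup E] {D p : ℝ}

lemma radialWeight_nonneg (hD : 0 ≤ D) (x : E) : 0 ≤ radialWeight D p x := by
  unfold radialWeight
  positivity

lemma radialWeight_eq_sub_one_mul (hD : 0 < D) (x : E) :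
    radialWeight D p x = radialWeight D (p - 1) x * (D + ‖x‖ ^ 2) := by
  have : 0 < D + ‖x‖ ^ 2 := by positivity
  rw [radialWeight, radialWeight, ← rpow_add_one this.ne', sub_add_cancel]

lemma mul_radialWeight_sub_one_le (hD : 0 < D) (x : E) :
    D * radialWeight D (p - 1) x ≤ radialWeight D p x := by
  rw [radialWeight_eq_sub_one_mul (p := p) hD, mul_comm]
  have := radialWeight_nonneg (p := p - 1) hD.le x
  gcongr
  exact le_add_of_nonneg_right (by positivity)

lemma radialWeight_le_rpow (hD : 0 < D) (hp : p ≤ 0) (x : E) : radialWeight D p x ≤ D ^ p :=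
  rpow_le_rpow_of_nonpos hD (le_add_of_nonneg_right (by positivity)) hp

-- Outside the ball, `D ≤ δ ‖x‖²`.
lemma mul_radialWeight_sub_one_le_add_indicator (hD : 0 < D) (hp : p ≤ 0) {δ : ℝ} (hδ : 0 < δ)
    (x : E) :
    D * radialWeight D (p - 1) x ≤
      δ * radialWeight D p x + (closedBall 0 √(D / δ)).indicator (fun _ ↦ D ^ p) x := by
  by_cases hx : x ∈ closedBall 0 √(D / δ)
  · rw [indicator_of_mem hx]
    calc D * radialWeight D (p - 1) x ≤ radialWeight D p x := mul_radialWeight_sub_one_le hD x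
      _ ≤ D ^ p := radialWeight_le_rpow hD hp x
      _ ≤ _ := le_add_of_nonneg_left (mul_nonneg hδ.le (radialWeight_nonneg hD.le x))
  · rw [indicator_of_notMem hx, add_zero, radialWeight_eq_sub_one_mul (p := p) hD, mul_left_comm,
      mul_comm D]
    rw [mem_closedBall_zero_iff, not_le, sqrt_lt (by positivity) (norm_nonneg x),
      div_lt_iff₀ hδ] at hx
    gcongr
    · exact radialWeight_nonneg hD.le x
    · nlinarith

lemma continuous_radialWeight (hD : 0 < D) : Continuous (radialWeight D p : E → ℝ) :=
  Continuous.rpow_const (by fun_prop) fun x ↦ .inl (by positivity)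

section Integrals

variable [MeasurableSpace E] [BorelSpace E] {μ : Measure E} {g : E → ℝ}

lemma integrable_radialWeight [NormedSpace ℝ E] [FiniteDimensional ℝ E] [μ.IsAddHaarMeasure]
    (hD : 0 < D) (hp : 2 * p < -finrank ℝ E) : Integrable (radialWeight D p) μ := by
  have japanese : Integrable (fun x : E ↦ (1 + ‖x‖ ^ 2) ^ p) μ := by
    convert integrable_rpow_neg_one_add_norm_sq (E := E) (μ := μ) (r := -2 * p) (by linarith)
    ring
  have hp' : p ≤ 0 := by
    have : (0 : ℝ) ≤ finrank ℝ E := by positivity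
    linarith
  have hmin : 0 < min D 1 := lt_min hD one_pos
  refine (japanese.const_mul (min D 1 ^ p)).mono' (continuous_radialWeight hD).aestronglyMeasurable
    (.of_forall fun x ↦ ?_)
  rw [Real.norm_of_nonneg (radialWeight_nonneg hD.le x), ← mul_rpow hmin.le (by positivity)]
  refine rpow_le_rpow_of_nonpos (by positivity) ?_ hp'
  rw [mul_add, mul_one]
  gcongr
  · exact min_le_left ..
  · exact mul_le_of_le_one_left (by positivity) (min_le_right ..)

lemma integrable_sq_mul_radialWeight_sub_one (hD : 0 < D) (hg : Continuous g)
    (hA : Integrable (fun x ↦ g x ^ 2 * radialWeight D p x) μ) :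
    Integrable (fun x ↦ g x ^ 2 * radialWeight D (p - 1) x) μ := by
  refine (hA.const_mul D⁻¹).mono' ((hg.pow 2).mul
    (continuous_radialWeight hD)).aestronglyMeasurable (.of_forall fun x ↦ ?_)
  rw [Real.norm_of_nonneg (mul_nonneg (sq_nonneg _) (radialWeight_nonneg hD.le x)),
    le_inv_mul_iff₀ hD, mul_left_comm]
  gcongr
  exact mul_radialWeight_sub_one_le hD x

lemma mul_integral_sq_mul_radialWeight_sub_one_le [ProperSpace E] [IsFiniteMeasureOnCompacts μ]
    {δ : ℝ} (hD : 0 < D) (hp : p ≤ 0) (hδ : 0 < δ) (hg : Continuous g)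
    (hA : Integrable (fun x ↦ g x ^ 2 * radialWeight D p x) μ) :
    D * ∫ x, g x ^ 2 * radialWeight D (p - 1) x ∂μ ≤
      δ * ∫ x, g x ^ 2 * radialWeight D p x ∂μ +
        D ^ p * ∫ x in closedBall 0 √(D / δ), g x ^ 2 ∂μ := by
  have hgB : Integrable ((closedBall 0 √(D / δ)).indicator fun x ↦ g x ^ 2) μ :=
    ((hg.pow 2).continuousOn.integrableOn_compact (isCompact_closedBall _ _)).integrable_indicator
      measurableSet_closedBall
  rw [← integral_indicator measurableSet_closedBall, ← integral_const_mul, ← integral_const_mul,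
    ← integral_const_mul, ← integral_add (hA.const_mul δ) (hgB.const_mul _)]
  refine integral_mono ((integrable_sq_mul_radialWeight_sub_one hD hg hA).const_mul D)
    ((hA.const_mul δ).add (hgB.const_mul _)) fun x ↦ ?_
  calc D * (g x ^ 2 * radialWeight D (p - 1) x) = g x ^ 2 * (D * radialWeight D (p - 1) x) := by
        ring
    _ ≤ g x ^ 2 * (δ * radialWeight D p x +
          (closedBall 0 √(D / δ)).indicator (fun _ ↦ D ^ p) x) := by
      gcongr
      exact mul_radialWeight_sub_one_le_add_indicator hD hp hδ x
    _ = δ * (g x ^ 2 * radialWeight D p x) +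
          D ^ p * (closedBall 0 √(D / δ)).indicator (fun x ↦ g x ^ 2) x := by
      by_cases hx : x ∈ closedBall 0 √(D / δ) <;> simp only [hx, indicator_of_mem,
        indicator_of_notMem, not_false_eq_true] <;> ring

end Integrals

variable [InnerProductSpace ℝ E]

lemma contDiff_radialWeight (hD : 0 < D) : ContDiff ℝ 1 (radialWeight D p : E → ℝ) :=
  (contDiff_const.add (contDiff_norm_sq ℝ)).rpow_const_of_ne fun x ↦ by positivity

lemma fderiv_radialWeight_apply_self (hD : 0 < D) (x : E) :
    fderiv ℝ (radialWeight D p) x x =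
      2 * p * (radialWeight D p x - D * radialWeight D (p - 1) x) := by
  have hbase : HasFDerivAt (fun y : E ↦ D + ‖y‖ ^ 2) (2 • innerSL ℝ x) x :=
    (hasStrictFDerivAt_norm_sq x).hasFDerivAt.const_add D
  have hweight : HasFDerivAt (radialWeight D p) _ x :=
    hbase.rpow_const (p := p) (.inl (by positivity))
  rw [hweight.fderiv, radialWeight_eq_sub_one_mul (p := p) hD]
  simp only [radialWeight, smul_apply, innerSL_apply_apply,
    real_inner_self_eq_norm_sq, smul_eq_mul, nsmul_eq_mul]
  ring

end RadialWeight

section HardyIdentity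

variable {E : Type*} [NormedAddCommGroup E] [InnerProductSpace ℝ E] {α D η : ℝ} {g : E → ℝ}

/-- The radial derivative of `g²` against the weight `(D + |x|²) ^ (α - 1)`: the term
`∇(g²) · x` that appears when Euler's identity is applied to `g²` times the weight. -/
noncomputable def radialCrossTerm (D α : ℝ) (g : E → ℝ) (x : E) : ℝ :=
  2 * g x * fderiv ℝ g x x * radialWeight D (α - 1) x

lemma fderiv_sq_mul_radialWeight_apply_self (hD : 0 < D) (hg : Differentiable ℝ g) (x : E) :
    fderiv ℝ (fun y ↦ g y ^ 2 * radialWeight D (α - 1) y) x x = radialCrossTerm D α g x +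
      2 * (α - 1) *
        (g x ^ 2 * radialWeight D (α - 1) x - D * (g x ^ 2 * radialWeight D (α - 1 - 1) x)) := by
  have hprod : HasFDerivAt (fun y ↦ g y ^ 2 * radialWeight D (α - 1) y) _ x :=
    ((hg x).hasFDerivAt.pow 2).mul
      ((contDiff_radialWeight hD).differentiable one_ne_zero x).hasFDerivAt
  simp only [hprod.fderiv, add_apply, smul_apply, fderiv_radialWeight_apply_self hD,
    radialCrossTerm, smul_eq_mul, nsmul_eq_mul]
  ring

lemma abs_radialCrossTerm_le (hD : 0 < D) (hη : 0 < η) (x : E) :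
    |radialCrossTerm D α g x| ≤ η * (g x ^ 2 * radialWeight D (α - 1) x) +
      η⁻¹ * (‖fderiv ℝ g x‖ ^ 2 * radialWeight D α x) := by
  have hw := radialWeight_nonneg (p := α - 1) hD.le x
  have hDg : |fderiv ℝ g x x| ≤ ‖fderiv ℝ g x‖ * ‖x‖ := (fderiv ℝ g x).le_opNorm x
  calc |radialCrossTerm D α g x|
    _ = 2 * |g x| * |fderiv ℝ g x x| * radialWeight D (α - 1) x := by
      rw [radialCrossTerm, abs_mul, abs_mul, abs_mul, abs_two, abs_of_nonneg hw]
    _ ≤ (η * |g x| ^ 2 + η⁻¹ * |fderiv ℝ g x x| ^ 2) * radialWeight D (α - 1) x := by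
      gcongr
      exact two_mul_le_add_mul_sq hη
    _ ≤ (η * |g x| ^ 2 + η⁻¹ * (‖fderiv ℝ g x‖ ^ 2 * (D + ‖x‖ ^ 2))) *
          radialWeight D (α - 1) x := by
      grw [hDg, mul_pow, ← le_add_of_nonneg_left hD.le]
    _ = _ := by
      rw [radialWeight_eq_sub_one_mul (p := α) hD, sq_abs]
      ring

variable [MeasurableSpace E] {μ : Measure E}

lemma abs_integral_radialCrossTerm_le (hD : 0 < D) (hη : 0 < η)
    (hA : Integrable (fun x ↦ g x ^ 2 * radialWeight D (α - 1) x) μ)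
    (hGr : Integrable (fun x ↦ ‖fderiv ℝ g x‖ ^ 2 * radialWeight D α x) μ) :
    |∫ x, radialCrossTerm D α g x ∂μ| ≤ η * ∫ x, g x ^ 2 * radialWeight D (α - 1) x ∂μ +
      η⁻¹ * ∫ x, ‖fderiv ℝ g x‖ ^ 2 * radialWeight D α x ∂μ := by
  rw [← integral_const_mul, ← integral_const_mul,
    ← integral_add (hA.const_mul _) (hGr.const_mul _)]
  exact norm_integral_le_of_norm_le (f := radialCrossTerm D α g)
    ((hA.const_mul _).add (hGr.const_mul _)) (.of_forall (abs_radialCrossTerm_le hD hη))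

variable [BorelSpace E]

lemma integrable_radialCrossTerm (hD : 0 < D) (hg : ContDiff ℝ 1 g)
    (hA : Integrable (fun x ↦ g x ^ 2 * radialWeight D (α - 1) x) μ)
    (hGr : Integrable (fun x ↦ ‖fderiv ℝ g x‖ ^ 2 * radialWeight D α x) μ) :
    Integrable (radialCrossTerm D α g) μ := by
  have hDg : Continuous fun x ↦ fderiv ℝ g x x :=
    (hg.continuous_fderiv one_ne_zero).clm_apply continuous_id
  have hcont : Continuous (radialCrossTerm D α g) :=
    ((hg.continuous.const_mul 2).mul hDg).mul (continuous_radialWeight hD)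
  exact ((hA.const_mul 1).add (hGr.const_mul 1⁻¹)).mono' hcont.aestronglyMeasurable
    (.of_forall fun x ↦ abs_radialCrossTerm_le hD one_pos x)

variable [FiniteDimensional ℝ E] [μ.IsAddHaarMeasure]

theorem integral_sq_mul_radialWeight_identity (hD : 0 < D) (hg : ContDiff ℝ 1 g)
    (hA : Integrable (fun x ↦ g x ^ 2 * radialWeight D (α - 1) x) μ)
    (hGr : Integrable (fun x ↦ ‖fderiv ℝ g x‖ ^ 2 * radialWeight D α x) μ) :
    (finrank ℝ E + 2 * (α - 1)) * ∫ x, g x ^ 2 * radialWeight D (α - 1) x ∂μ +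
        2 * (1 - α) * (D * ∫ x, g x ^ 2 * radialWeight D (α - 1 - 1) x ∂μ) =
      -∫ x, radialCrossTerm D α g x ∂μ := by
  have hfderiv := fderiv_sq_mul_radialWeight_apply_self (α := α) hD (hg.differentiable one_ne_zero)
  have hA' := (integrable_sq_mul_radialWeight_sub_one hD hg.continuous hA).const_mul D
  have hcross := integrable_radialCrossTerm hD hg hA hGr
  have hrest := (hA.sub hA').const_mul (2 * (α - 1))
  have euler := integral_fderiv_apply_self (μ := μ) ((hg.pow 2).mul (contDiff_radialWeight hD)) hA
    ((hcross.add hrest).congr (.of_forall fun x ↦ (hfderiv x).symm))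
  simp only [hfderiv, smul_eq_mul] at euler
  simp only [Pi.sub_apply] at hrest
  rw [integral_add hcross hrest, integral_const_mul, integral_sub hA hA', integral_const_mul]
    at euler
  linear_combination euler

theorem hardy_of_critical_lt (hD : 0 < D) (hα : α ≤ 1) (hm : 0 < finrank ℝ E + 2 * (α - 1))
    (hg : ContDiff ℝ 1 g)
    (hA : Integrable (fun x ↦ g x ^ 2 * radialWeight D (α - 1) x) μ)
    (hGr : Integrable (fun x ↦ ‖fderiv ℝ g x‖ ^ 2 * radialWeight D α x) μ) :
    (finrank ℝ E + 2 * (α - 1)) ^ 2 / 4 * ∫ x, g x ^ 2 * radialWeight D (α - 1) x ∂μ ≤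
      ∫ x, ‖fderiv ℝ g x‖ ^ 2 * radialWeight D α x ∂μ := by
  have identity := integral_sq_mul_radialWeight_identity hD hg hA hGr
  set m : ℝ := finrank ℝ E + 2 * (α - 1)
  have cross := neg_le_of_abs_le (abs_integral_radialCrossTerm_le hD (half_pos hm) hA hGr)
  have definite_sign : 0 ≤ 2 * (1 - α) * (D * ∫ x, g x ^ 2 * radialWeight D (α - 1 - 1) x ∂μ) :=
    mul_nonneg (by linarith) <| mul_nonneg hD.le <|
      integral_nonneg fun x ↦ mul_nonneg (sq_nonneg _) (radialWeight_nonneg hD.le x)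
  set A := ∫ x, g x ^ 2 * radialWeight D (α - 1) x ∂μ
  set Gr := ∫ x, ‖fderiv ℝ g x‖ ^ 2 * radialWeight D α x ∂μ
  have absorbed : m / 2 * A ≤ (m / 2)⁻¹ * Gr := by linarith
  calc m ^ 2 / 4 * A = m / 2 * (m / 2 * A) := by ring
    _ ≤ m / 2 * ((m / 2)⁻¹ * Gr) := by gcongr
    _ = Gr := by field_simp

theorem hardy_with_local_term_of_lt_critical (hD : 0 < D) {m δ : ℝ} (hα : α ≤ 1)
    (hm : m = 2 * (1 - α) - finrank ℝ E) (hm₀ : 0 < m) (hδ : 0 < δ)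
    (hδm : 2 * (1 - α) * δ ≤ m / 4) (hg : ContDiff ℝ 1 g)
    (hA : Integrable (fun x ↦ g x ^ 2 * radialWeight D (α - 1) x) μ)
    (hGr : Integrable (fun x ↦ ‖fderiv ℝ g x‖ ^ 2 * radialWeight D α x) μ) :
    m ^ 2 / 8 * ∫ x, g x ^ 2 * radialWeight D (α - 1) x ∂μ ≤
      ∫ x, ‖fderiv ℝ g x‖ ^ 2 * radialWeight D α x ∂μ +
        m / 4 * (2 * (1 - α)) * D ^ (α - 1) * ∫ x in closedBall 0 √(D / δ), g x ^ 2 ∂μ := by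
  have identity := integral_sq_mul_radialWeight_identity hD hg hA hGr
  have cross := le_of_abs_le (abs_integral_radialCrossTerm_le hD (η := m / 4) (by linarith) hA hGr)
  have tail := mul_integral_sq_mul_radialWeight_sub_one_le hD (by linarith) hδ hg.continuous hA
  have hA₀ : 0 ≤ ∫ x, g x ^ 2 * radialWeight D (α - 1) x ∂μ :=
    integral_nonneg fun x ↦ mul_nonneg (sq_nonneg _) (radialWeight_nonneg hD.le x)
  have tail' := mul_le_mul_of_nonneg_left tail (show 0 ≤ 2 * (1 - α) by linarith)
  have absorb := mul_le_mul_of_nonneg_right hδm hA₀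
  set A := ∫ x, g x ^ 2 * radialWeight D (α - 1) x ∂μ
  set Gr := ∫ x, ‖fderiv ℝ g x‖ ^ 2 * radialWeight D α x ∂μ
  set L := ∫ x in closedBall 0 √(D / δ), g x ^ 2 ∂μ
  have absorbed : m / 2 * A ≤ (m / 4)⁻¹ * Gr + 2 * (1 - α) * (D ^ (α - 1) * L) := by
    subst hm
    linarith
  calc m ^ 2 / 8 * A = m / 4 * (m / 2 * A) := by ring
    _ ≤ m / 4 * ((m / 4)⁻¹ * Gr + 2 * (1 - α) * (D ^ (α - 1) * L)) := by gcongr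
    _ = Gr + m / 4 * (2 * (1 - α)) * D ^ (α - 1) * L := by field_simp

end HardyIdentity

section Truncation

lemma integrable_and_integral_le_of_tendsto {X ι : Type*} [MeasurableSpace X] {ν : Measure X}
    {l : Filter ι} [l.NeBot] [l.IsCountablyGenerated] {h : ι → X → ℝ} {k : X → ℝ} {C : ℝ}
    (hint : ∀ i, Integrable (h i) ν) (hnonneg : ∀ i x, 0 ≤ h i x) (hC : ∀ i, ∫ x, h i x ∂ν ≤ C)
    (hlim : ∀ᵐ x ∂ν, Tendsto (fun i ↦ h i x) l (𝓝 (k x))) :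
    Integrable k ν ∧ ∫ x, k x ∂ν ≤ C := by
  have hC₀ : 0 ≤ C := (l.nonempty_of_neBot).elim fun i ↦ (integral_nonneg (hnonneg i)).trans (hC i)
  have hk : 0 ≤ᵐ[ν] k := by
    filter_upwards [hlim] with x hx using ge_of_tendsto' hx fun i ↦ hnonneg i x
  have hkm : AEStronglyMeasurable k ν :=
    aestronglyMeasurable_of_tendsto_ae l (fun i ↦ (hint i).1) hlim
  have fatou : ∫⁻ x, ENNReal.ofReal (k x) ∂ν ≤ ENNReal.ofReal C := calc
    ∫⁻ x, ENNReal.ofReal (k x) ∂ν = ∫⁻ x, liminf (fun i ↦ ENNReal.ofReal (h i x)) l ∂ν :=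
      lintegral_congr_ae <| by
        filter_upwards [hlim] with x hx using (ENNReal.tendsto_ofReal hx).liminf_eq.symm
    _ ≤ liminf (fun i ↦ ∫⁻ x, ENNReal.ofReal (h i x) ∂ν) l :=
      lintegral_liminf_le' fun i ↦ (hint i).1.aemeasurable.ennreal_ofReal
    _ ≤ liminf (fun _ ↦ ENNReal.ofReal C) l := by
      refine liminf_le_liminf (.of_forall fun i ↦ ?_)
      rw [← ofReal_integral_eq_lintegral_ofReal (hint i) (.of_forall (hnonneg i))]
      exact ENNReal.ofReal_le_ofReal (hC i)
    _ = ENNReal.ofReal C := liminf_const _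
  refine ⟨⟨hkm, (hasFiniteIntegral_iff_ofReal hk).2 (fatou.trans_lt ENNReal.ofReal_lt_top)⟩, ?_⟩
  rw [integral_eq_lintegral_of_nonneg_ae hk hkm]
  exact ENNReal.toReal_le_of_le_ofReal hC₀ fatou

/-- A smooth truncation of the identity: bounded by `1 / ε` and `1`-Lipschitz, and tending to `s`
as `ε → 0`. -/
noncomputable def smoothTruncation (ε s : ℝ) : ℝ :=
  s / (1 + (ε * s) ^ 2)

lemma contDiff_smoothTruncation (ε : ℝ) : ContDiff ℝ 1 (smoothTruncation ε) :=
  contDiff_id.div (by fun_prop) fun s ↦ by positivity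

lemma sq_smoothTruncation_le_sq (ε s : ℝ) : smoothTruncation ε s ^ 2 ≤ s ^ 2 := by
  rw [smoothTruncation, div_pow]
  exact div_le_self (sq_nonneg s) (one_le_pow₀ (le_add_of_nonneg_right (sq_nonneg _)))

lemma sq_smoothTruncation_le_inv_mul_abs {ε : ℝ} (hε : 0 < ε) (s : ℝ) :
    smoothTruncation ε s ^ 2 ≤ ε⁻¹ * |s| := by
  have hden : 1 ≤ 1 + (ε * s) ^ 2 := le_add_of_nonneg_right (sq_nonneg _)
  have amgm : ε * |s| ≤ (1 + (ε * s) ^ 2) ^ 2 := by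
    rw [← sq_abs (ε * s), abs_mul, abs_of_pos hε] at hden ⊢
    nlinarith [sq_nonneg (ε * |s| - 1)]
  rw [smoothTruncation, div_pow, div_le_iff₀ (by positivity), mul_assoc, le_inv_mul_iff₀ hε,
    ← sq_abs s]
  calc ε * |s| ^ 2 = |s| * (ε * |s|) := by ring
    _ ≤ |s| * (1 + (ε * s) ^ 2) ^ 2 := by gcongr

lemma abs_deriv_smoothTruncation_le (ε s : ℝ) : |deriv (smoothTruncation ε) s| ≤ 1 := by
  have hden : HasDerivAt (fun s ↦ 1 + (ε * s) ^ 2) (2 * (ε * s) * ε) s := by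
    simpa using (((hasDerivAt_id s).const_mul ε).pow 2).const_add 1
  have hT : HasDerivAt (smoothTruncation ε) _ s := (hasDerivAt_id s).div hden (by positivity)
  rw [hT.deriv, abs_div, abs_of_pos (a := (1 + (ε * s) ^ 2) ^ 2) (by positivity),
    div_le_one (by positivity), abs_le]
  constructor <;> simp only [id] <;> nlinarith [sq_nonneg (ε * s), sq_nonneg ((ε * s) ^ 2)]

lemma tendsto_smoothTruncation (s : ℝ) :
    Tendsto (fun ε ↦ smoothTruncation ε s) (𝓝 0) (𝓝 s) := by
  have : Continuous fun ε ↦ smoothTruncation ε s :=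
    continuous_const.div (by fun_prop) fun ε ↦ by positivity
  exact this.tendsto' 0 s (by simp [smoothTruncation])

lemma integrable_sq_smoothTruncation_comp_mul {X : Type*} [TopologicalSpace X]
    [MeasurableSpace X] [OpensMeasurableSpace X] {μ : Measure X} {f w : X → ℝ} {ε : ℝ}
    (hε : 0 < ε) (hf : Continuous f) (hw : ∀ x, 0 ≤ w x) (hwm : AEStronglyMeasurable w μ)
    (hfw : Integrable (fun x ↦ |f x| * w x) μ) :
    Integrable (fun x ↦ smoothTruncation ε (f x) ^ 2 * w x) μ := by
  have hT := (contDiff_smoothTruncation ε).continuous.comp hf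
  refine (hfw.const_mul ε⁻¹).mono' ((hT.pow 2).measurable.aestronglyMeasurable.mul hwm)
    (.of_forall fun x ↦ ?_)
  rw [Real.norm_of_nonneg (mul_nonneg (sq_nonneg _) (hw x)), ← mul_assoc]
  have := hw x
  gcongr
  exact sq_smoothTruncation_le_inv_mul_abs hε _

variable {E : Type*} [NormedAddCommGroup E] [NormedSpace ℝ E] {f : E → ℝ}

lemma fderiv_smoothTruncation_comp (hf : Differentiable ℝ f) (ε : ℝ) (x : E) :
    fderiv ℝ (fun y ↦ smoothTruncation ε (f y)) x =
      deriv (smoothTruncation ε) (f x) • fderiv ℝ f x :=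
  (((contDiff_smoothTruncation ε).differentiable one_ne_zero _).hasDerivAt.comp_hasFDerivAt x
    (hf x).hasFDerivAt).fderiv

lemma norm_fderiv_smoothTruncation_comp_le (hf : Differentiable ℝ f) (ε : ℝ) (x : E) :
    ‖fderiv ℝ (fun y ↦ smoothTruncation ε (f y)) x‖ ≤ ‖fderiv ℝ f x‖ := by
  grw [fderiv_smoothTruncation_comp hf, norm_smul, Real.norm_eq_abs,
    abs_deriv_smoothTruncation_le, one_mul]

variable [MeasurableSpace E] [OpensMeasurableSpace E] {μ : Measure E} {v w : E → ℝ}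

lemma integrable_norm_sq_fderiv_smoothTruncation_comp_mul (hf : ContDiff ℝ 1 f)
    (hfv : Integrable (fun x ↦ ‖fderiv ℝ f x‖ ^ 2 * v x) μ) (ε : ℝ) :
    Integrable (fun x ↦ ‖fderiv ℝ (fun y ↦ smoothTruncation ε (f y)) x‖ ^ 2 * v x) μ := by
  have hT' : Continuous fun x ↦ ‖deriv (smoothTruncation ε) (f x)‖ ^ 2 :=
    (((contDiff_smoothTruncation ε).continuous_deriv le_rfl).comp hf.continuous).norm.pow 2
  simp_rw [fderiv_smoothTruncation_comp (hf.differentiable one_ne_zero), norm_smul, mul_pow,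
    mul_assoc]
  refine hfv.bdd_mul (c := 1) hT'.measurable.aestronglyMeasurable (.of_forall fun x ↦ ?_)
  rw [norm_pow, norm_norm]
  exact pow_le_one₀ (norm_nonneg _) (abs_deriv_smoothTruncation_le _ _)

theorem integrable_sq_mul_and_le_of_forall_contDiff {B : Set E} {Λ N : ℝ} (hΛ : 0 < Λ)
    (hN : 0 ≤ N) (hw : ∀ x, 0 ≤ w x) (hv : ∀ x, 0 ≤ v x) (hwm : AEStronglyMeasurable w μ)
    (hΛN : ∀ g : E → ℝ, ContDiff ℝ 1 g → Integrable (fun x ↦ g x ^ 2 * w x) μ →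
      Integrable (fun x ↦ ‖fderiv ℝ g x‖ ^ 2 * v x) μ →
      Λ * ∫ x, g x ^ 2 * w x ∂μ ≤
        ∫ x, ‖fderiv ℝ g x‖ ^ 2 * v x ∂μ + N * ∫ x in B, g x ^ 2 ∂μ)
    (hf : ContDiff ℝ 1 f) (hfB : IntegrableOn (fun x ↦ f x ^ 2) B μ)
    (hfw : Integrable (fun x ↦ |f x| * w x) μ)
    (hfv : Integrable (fun x ↦ ‖fderiv ℝ f x‖ ^ 2 * v x) μ) :
    Integrable (fun x ↦ f x ^ 2 * w x) μ ∧
      Λ * ∫ x, f x ^ 2 * w x ∂μ ≤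
        ∫ x, ‖fderiv ℝ f x‖ ^ 2 * v x ∂μ + N * ∫ x in B, f x ^ 2 ∂μ := by
  let ε (n : ℕ) : ℝ := 1 / (n + 1)
  have hε (n : ℕ) : 0 < ε n := by positivity
  let T (n : ℕ) (x : E) : ℝ := smoothTruncation (ε n) (f x)
  have hT (n : ℕ) : ContDiff ℝ 1 (T n) := (contDiff_smoothTruncation _).comp hf
  have integrable_sq (n : ℕ) :=
    integrable_sq_smoothTruncation_comp_mul (hε n) hf.continuous hw hwm hfw
  have integrable_grad (n : ℕ) := integrable_norm_sq_fderiv_smoothTruncation_comp_mul hf hfv (ε n)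
  have grad_le (n : ℕ) :
      ∫ x, ‖fderiv ℝ (T n) x‖ ^ 2 * v x ∂μ ≤ ∫ x, ‖fderiv ℝ f x‖ ^ 2 * v x ∂μ := by
    refine integral_mono (integrable_grad n) hfv fun x ↦ ?_
    have := hv x
    dsimp only
    grw [norm_fderiv_smoothTruncation_comp_le (hf.differentiable one_ne_zero)]
  have local_le (n : ℕ) : ∫ x in B, T n x ^ 2 ∂μ ≤ ∫ x in B, f x ^ 2 ∂μ :=
    integral_mono_of_nonneg (.of_forall fun x ↦ sq_nonneg _) hfB
      (.of_forall fun x ↦ sq_smoothTruncation_le_sq _ _)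
  obtain ⟨hint, hle⟩ := integrable_and_integral_le_of_tendsto (l := atTop)
    (C := Λ⁻¹ * (∫ x, ‖fderiv ℝ f x‖ ^ 2 * v x ∂μ + N * ∫ x in B, f x ^ 2 ∂μ)) integrable_sq
    (fun n x ↦ mul_nonneg (sq_nonneg _) (hw x))
    (fun n ↦ by
      rw [le_inv_mul_iff₀ hΛ]
      grw [← grad_le n, ← local_le n]
      exact hΛN (T n) (hT n) (integrable_sq n) (integrable_grad n))
    (.of_forall fun x ↦ (((tendsto_smoothTruncation (f x)).comp
      tendsto_one_div_add_atTop_nhds_zero_nat).pow 2).mul_const (w x))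
  exact ⟨hint, (le_inv_mul_iff₀ hΛ).1 hle⟩

end Truncation

section Supercritical

lemma radialWeight_le_radialWeight_of_le {E : Type*} [NormedAddCommGroup E] {D D' p : ℝ}
    (hD : 0 ≤ D) (hDD' : D ≤ D') (hp : p ≤ 0) {x : E} (hx : x ≠ 0) :
    radialWeight D' p x ≤ radialWeight D p x :=
  have := norm_pos_iff.2 hx
  rpow_le_rpow_of_nonpos (by positivity) (by gcongr) hp

lemma tendsto_radialWeight {E : Type*} [NormedAddCommGroup E] {D : ℝ} (hD : 0 ≤ D) (p : ℝ) {x : E}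
    (hx : x ≠ 0) : Tendsto (fun D' ↦ radialWeight D' p x) (𝓝 D) (𝓝 (radialWeight D p x)) := by
  have := norm_pos_iff.2 hx
  exact (tendsto_id.add_const _).rpow_const (.inl (ne_of_gt (by positivity)))

lemma integrable_mul_radialWeight_of_le {E : Type*} [NormedAddCommGroup E] [MeasurableSpace E]
    [BorelSpace E] {μ : Measure E} [NullSingletonClass μ] {D D' p : ℝ} {h : E → ℝ} (hD : 0 ≤ D)
    (hDD' : D < D') (hp : p ≤ 0) (hh : AEStronglyMeasurable h μ)
    (hw : Integrable (fun x ↦ h x * radialWeight D p x) μ) :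
    Integrable (fun x ↦ h x * radialWeight D' p x) μ := by
  have hD' := hD.trans_lt hDD'
  refine hw.mono (hh.mul (continuous_radialWeight hD').aestronglyMeasurable) ?_
  filter_upwards [Measure.ae_ne μ 0] with x hx
  rw [norm_mul, norm_mul, Real.norm_of_nonneg (radialWeight_nonneg hD'.le x),
    Real.norm_of_nonneg (radialWeight_nonneg hD x)]
  gcongr
  exact radialWeight_le_radialWeight_of_le hD hDD'.le hp hx

variable {E : Type*} [NormedAddCommGroup E] [InnerProductSpace ℝ E] [FiniteDimensional ℝ E]
  [MeasurableSpace E] [BorelSpace E] {μ : Measure E} [μ.IsAddHaarMeasure] {α D : ℝ} {f : E → ℝ}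

lemma integrable_and_hardy_of_critical_lt_of_pos (hD : 0 < D) (hα : α ≤ 1)
    (hm : 0 < finrank ℝ E + 2 * (α - 1)) (hf : ContDiff ℝ 1 f)
    (hfw : Integrable (fun x ↦ |f x| * radialWeight D (α - 1) x) μ)
    (hGr : Integrable (fun x ↦ ‖fderiv ℝ f x‖ ^ 2 * radialWeight D α x) μ) :
    Integrable (fun x ↦ f x ^ 2 * radialWeight D (α - 1) x) μ ∧
      (finrank ℝ E + 2 * (α - 1)) ^ 2 / 4 * ∫ x, f x ^ 2 * radialWeight D (α - 1) x ∂μ ≤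
        ∫ x, ‖fderiv ℝ f x‖ ^ 2 * radialWeight D α x ∂μ := by
  simpa using integrable_sq_mul_and_le_of_forall_contDiff (B := ∅) (N := 0)
    (Λ := (finrank ℝ E + 2 * (α - 1)) ^ 2 / 4) (by positivity) le_rfl
    (radialWeight_nonneg hD.le) (radialWeight_nonneg hD.le)
    (continuous_radialWeight hD).aestronglyMeasurable
    (fun g hg hA hB ↦ by simpa using hardy_of_critical_lt hD hα hm hg hA hB) hf
    integrableOn_empty hfw hGr

theorem integrable_and_hardy_of_critical_lt (hD : 0 ≤ D) (hα : α ≤ 0)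
    (hm : 0 < finrank ℝ E + 2 * (α - 1)) (hf : ContDiff ℝ 1 f)
    (hfw : Integrable (fun x ↦ |f x| * radialWeight D (α - 1) x) μ)
    (hGr : Integrable (fun x ↦ ‖fderiv ℝ f x‖ ^ 2 * radialWeight D α x) μ) :
    Integrable (fun x ↦ f x ^ 2 * radialWeight D (α - 1) x) μ ∧
      (finrank ℝ E + 2 * (α - 1)) ^ 2 / 4 * ∫ x, f x ^ 2 * radialWeight D (α - 1) x ∂μ ≤
        ∫ x, ‖fderiv ℝ f x‖ ^ 2 * radialWeight D α x ∂μ := by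
  have : Nontrivial E := finrank_pos_iff.1 <| by
    exact_mod_cast show (0 : ℝ) < finrank ℝ E by linarith
  let D' (n : ℕ) : ℝ := D + 1 / (n + 1)
  have hDD' (n : ℕ) : D < D' n := lt_add_of_pos_right D (by positivity)
  have hD' (n : ℕ) : 0 < D' n := hD.trans_lt (hDD' n)
  have hD'_tendsto : Tendsto D' atTop (𝓝 D) := by
    simpa only [add_zero] using (tendsto_one_div_add_atTop_nhds_zero_nat (𝕜 := ℝ)).const_add D
  have integrable_grad (n : ℕ) := integrable_mul_radialWeight_of_le hD (hDD' n) hα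
    ((hf.continuous_fderiv one_ne_zero).norm.pow 2).aestronglyMeasurable hGr
  have grad_le (n : ℕ) : ∫ x, ‖fderiv ℝ f x‖ ^ 2 * radialWeight (D' n) α x ∂μ ≤
      ∫ x, ‖fderiv ℝ f x‖ ^ 2 * radialWeight D α x ∂μ := by
    refine integral_mono_ae (integrable_grad n) hGr ?_
    filter_upwards [Measure.ae_ne μ 0] with x hx
    gcongr
    exact radialWeight_le_radialWeight_of_le hD (hDD' n).le hα hx
  have regularized (n : ℕ) := integrable_and_hardy_of_critical_lt_of_pos (hD' n) (by linarith) hm hf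
    (integrable_mul_radialWeight_of_le hD (hDD' n) (by linarith)
      hf.continuous.abs.aestronglyMeasurable hfw) (integrable_grad n)
  have hΛ : 0 < (finrank ℝ E + 2 * (α - 1)) ^ 2 / 4 := by positivity
  rw [← le_inv_mul_iff₀ hΛ]
  refine integrable_and_integral_le_of_tendsto (l := atTop) (fun n ↦ (regularized n).1)
    (fun n x ↦ mul_nonneg (sq_nonneg _) (radialWeight_nonneg (hD' n).le x))
    (fun n ↦ (le_inv_mul_iff₀ hΛ).2 ((regularized n).2.trans (grad_le n))) ?_
  filter_upwards [Measure.ae_ne μ 0] with x hx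
  exact ((tendsto_radialWeight hD _ hx).comp hD'_tendsto).const_mul _

end Supercritical

section Subcritical

lemma rpow_mul_setIntegral_closedBall_le {E : Type*} [NormedAddCommGroup E] [ProperSpace E]
    [MeasurableSpace E] [BorelSpace E] {μ : Measure E} [IsFiniteMeasureOnCompacts μ] {D p : ℝ}
    (hD : 0 < D) (hp : p ≤ 0) {h : E → ℝ} (hh : Continuous h) (hh₀ : ∀ x, 0 ≤ h x)
    (hhw : Integrable (fun x ↦ h x * radialWeight D p x) μ) (R : ℝ) :
    (D + R ^ 2) ^ p * ∫ x in closedBall 0 R, h x ∂μ ≤ ∫ x, h x * radialWeight D p x ∂μ := by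
  rw [← integral_const_mul]
  calc ∫ x in closedBall 0 R, (D + R ^ 2) ^ p * h x ∂μ
    _ ≤ ∫ x in closedBall 0 R, h x * radialWeight D p x ∂μ := by
      refine setIntegral_mono_on ((hh.continuousOn.integrableOn_compact
        (isCompact_closedBall 0 R)).const_mul _) hhw.integrableOn measurableSet_closedBall
        fun x hx ↦ ?_
      rw [mul_comm]
      refine mul_le_mul_of_nonneg_left (rpow_le_rpow_of_nonpos (by positivity) ?_ hp) (hh₀ x)
      have := mem_closedBall_zero_iff.1 hx
      gcongr
    _ ≤ ∫ x, h x * radialWeight D p x ∂μ :=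
      setIntegral_le_integral hhw
        (.of_forall fun x ↦ mul_nonneg (hh₀ x) (radialWeight_nonneg hD.le x))

lemma integrable_sq_mul_and_integral_le_of_integral_mul_eq_zero {X : Type*} [MeasurableSpace X]
    {ν : Measure X} {f w : X → ℝ} {c : ℝ} (hw : ∀ x, 0 ≤ w x) (hwi : Integrable w ν)
    (hfw : Integrable (fun x ↦ f x * w x) ν) (hfw₀ : ∫ x, f x * w x ∂ν = 0)
    (hc : Integrable (fun x ↦ (f x - c) ^ 2 * w x) ν) :
    Integrable (fun x ↦ f x ^ 2 * w x) ν ∧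
      ∫ x, f x ^ 2 * w x ∂ν ≤ ∫ x, (f x - c) ^ 2 * w x ∂ν := by
  have expand : (fun x ↦ f x ^ 2 * w x) =
      fun x ↦ ((f x - c) ^ 2 * w x + 2 * c * (f x * w x)) - c ^ 2 * w x := by
    ext x
    ring
  have hsum : Integrable (fun x ↦ (f x - c) ^ 2 * w x + 2 * c * (f x * w x)) ν :=
    hc.add (hfw.const_mul (2 * c))
  rw [expand]
  refine ⟨hsum.sub (hwi.const_mul _), ?_⟩
  rw [integral_sub hsum (hwi.const_mul _), integral_add hc (hfw.const_mul _), integral_const_mul,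
    integral_const_mul, hfw₀, mul_zero, add_zero]
  exact sub_le_self _ (mul_nonneg (sq_nonneg c) (integral_nonneg hw))

variable {E : Type*} [NormedAddCommGroup E] [InnerProductSpace ℝ E] [FiniteDimensional ℝ E]
  [MeasurableSpace E] [BorelSpace E] {μ : Measure E} [μ.IsAddHaarMeasure] {α D : ℝ} {f : E → ℝ}

lemma exists_rpow_mul_setIntegral_sub_sq_le (hD : 0 < D) (hα : α ≤ 0) {δ : ℝ} (hδ : 0 < δ)
    (hf : ContDiff ℝ 1 f)
    (hGr : Integrable (fun x ↦ ‖fderiv ℝ f x‖ ^ 2 * radialWeight D α x) μ) :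
    ∃ c, D ^ (α - 1) * ∫ x in closedBall 0 √(D / δ), (f x - c) ^ 2 ∂μ ≤
      4 / δ * 2 ^ finrank ℝ E * (1 + 1 / δ) ^ (-α) *
        ∫ x, ‖fderiv ℝ f x‖ ^ 2 * radialWeight D α x ∂μ := by
  obtain ⟨c, hc⟩ := exists_setIntegral_norm_sub_sq_le (μ := μ) hf
    (convex_closedBall (0 : E) √(D / δ)) (isCompact_closedBall _ _)
  simp only [Real.norm_eq_abs, sq_abs] at hc
  have grad_le := rpow_mul_setIntegral_closedBall_le hD hα
    (h := fun x ↦ ‖fderiv ℝ f x‖ ^ 2) ((hf.continuous_fderiv one_ne_zero).norm.pow 2)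
    (fun x ↦ sq_nonneg _) hGr √(D / δ)
  set local_grad := ∫ x in closedBall 0 √(D / δ), ‖fderiv ℝ f x‖ ^ 2 ∂μ
  have : 0 ≤ local_grad := integral_nonneg fun x ↦ sq_nonneg _
  have diam_sq_le : diam (closedBall (0 : E) √(D / δ)) ^ 2 ≤ D * (4 / δ) := calc
    diam (closedBall (0 : E) √(D / δ)) ^ 2 ≤ (2 * √(D / δ)) ^ 2 := by
      gcongr
      exact diam_closedBall (sqrt_nonneg _)
    _ = D * (4 / δ) := by
      rw [mul_pow, sq_sqrt (by positivity)]
      ring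
  have hbase : (D + √(D / δ) ^ 2) ^ α = D ^ α * (1 + 1 / δ) ^ α := by
    rw [← mul_rpow hD.le (by positivity), sq_sqrt (by positivity)]
    ring_nf
  refine ⟨c, ?_⟩
  calc D ^ (α - 1) * ∫ x in closedBall 0 √(D / δ), (f x - c) ^ 2 ∂μ
    _ ≤ D ^ (α - 1) * (D * (4 / δ) * 2 ^ finrank ℝ E * local_grad) := by
      grw [hc, diam_sq_le]
    _ = 4 / δ * 2 ^ finrank ℝ E * (1 + 1 / δ) ^ (-α) *
          (D ^ α * (1 + 1 / δ) ^ α * local_grad) := by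
      rw [rpow_sub_one hD.ne', rpow_neg (by positivity)]
      field_simp
    _ ≤ _ := by
      rw [← hbase]
      gcongr

lemma integrable_and_hardy_with_local_term_of_lt_critical (hD : 0 < D) {m δ : ℝ} (hα : α ≤ 1)
    (hm : m = 2 * (1 - α) - finrank ℝ E) (hm₀ : 0 < m) (hδ : 0 < δ)
    (hδm : 2 * (1 - α) * δ ≤ m / 4) (hf : ContDiff ℝ 1 f)
    (hfw : Integrable (fun x ↦ |f x| * radialWeight D (α - 1) x) μ)
    (hGr : Integrable (fun x ↦ ‖fderiv ℝ f x‖ ^ 2 * radialWeight D α x) μ) :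
    Integrable (fun x ↦ f x ^ 2 * radialWeight D (α - 1) x) μ ∧
      m ^ 2 / 8 * ∫ x, f x ^ 2 * radialWeight D (α - 1) x ∂μ ≤
        ∫ x, ‖fderiv ℝ f x‖ ^ 2 * radialWeight D α x ∂μ +
          m / 4 * (2 * (1 - α)) * D ^ (α - 1) * ∫ x in closedBall 0 √(D / δ), f x ^ 2 ∂μ := by
  have hN : 0 ≤ m / 4 * (2 * (1 - α)) * D ^ (α - 1) :=
    mul_nonneg (mul_nonneg (by positivity) (by linarith)) (by positivity)
  refine integrable_sq_mul_and_le_of_forall_contDiff (by positivity) hN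
    (radialWeight_nonneg hD.le) (radialWeight_nonneg hD.le)
    (continuous_radialWeight hD).aestronglyMeasurable
    (fun g ↦ hardy_with_local_term_of_lt_critical hD hα hm hm₀ hδ hδm) hf
    ((hf.continuous.pow 2).continuousOn.integrableOn_compact (isCompact_closedBall _ _)) hfw hGr

theorem exists_integral_sub_sq_le_of_lt_critical (μ : Measure E) [μ.IsAddHaarMeasure]
    (hα : α ≤ 0) (hm : finrank ℝ E < 2 * (1 - α)) :
    ∃ C : ℝ, 0 < C ∧ ∀ D : ℝ, 0 < D → ∀ f : E → ℝ, ContDiff ℝ 1 f →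
      Integrable (fun x ↦ ‖fderiv ℝ f x‖ ^ 2 * radialWeight D α x) μ →
      Integrable (fun x ↦ |f x| * radialWeight D (α - 1) x) μ →
      ∃ c, Integrable (fun x ↦ (f x - c) ^ 2 * radialWeight D (α - 1) x) μ ∧
        ∫ x, (f x - c) ^ 2 * radialWeight D (α - 1) x ∂μ ≤
          C * ∫ x, ‖fderiv ℝ f x‖ ^ 2 * radialWeight D α x ∂μ := by
  obtain ⟨m, hm_eq⟩ : ∃ m, m = 2 * (1 - α) - finrank ℝ E := ⟨_, rfl⟩
  have hm₀ : 0 < m := by linarith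
  have hα' : 0 < 2 * (1 - α) := by linarith
  let δ : ℝ := m / 4 / (2 * (1 - α))
  have hδ : 0 < δ := by positivity
  let P : ℝ := 4 / δ * 2 ^ finrank ℝ E * (1 + 1 / δ) ^ (-α)
  have hΛ : 0 < m ^ 2 / 8 := by positivity
  refine ⟨(m ^ 2 / 8)⁻¹ * (1 + m / 4 * (2 * (1 - α)) * P), by positivity,
    fun D hD f hf hGr hfw ↦ ?_⟩
  obtain ⟨c, hc⟩ := exists_rpow_mul_setIntegral_sub_sq_le hD hα hδ hf hGr
  have hweight : Integrable (radialWeight D (α - 1)) μ := integrable_radialWeight hD (by linarith)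
  have hfcw : Integrable (fun x ↦ |f x - c| * radialWeight D (α - 1) x) μ := by
    refine (hfw.add (hweight.const_mul |c|)).mono' ((hf.continuous.sub continuous_const).abs.mul
      (continuous_radialWeight hD)).aestronglyMeasurable (.of_forall fun x ↦ ?_)
    have hw := radialWeight_nonneg (p := α - 1) hD.le x
    rw [Real.norm_of_nonneg (mul_nonneg (abs_nonneg _) hw), Pi.add_apply, ← add_mul]
    grw [abs_sub]
  obtain ⟨hint, hle⟩ := integrable_and_hardy_with_local_term_of_lt_critical hD
    (f := fun x ↦ f x - c) (by linarith) hm_eq hm₀ hδ (mul_div_cancel₀ _ hα'.ne').le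
    (hf.sub contDiff_const) hfcw (by simpa only [fderiv_sub_const] using hGr)
  refine ⟨c, hint, ?_⟩
  simp only [fderiv_sub_const] at hle
  rw [mul_assoc, le_inv_mul_iff₀ hΛ]
  grw [hle, mul_assoc _ (D ^ _), hc]
  exact le_of_eq (by ring)

theorem exists_hardyPoincare_of_lt_critical (μ : Measure E) [μ.IsAddHaarMeasure]
    (hα : α ≤ 0) (hm : finrank ℝ E < 2 * (1 - α)) :
    ∃ Λ : ℝ, 0 < Λ ∧ ∀ D : ℝ, 0 < D → ∀ f : E → ℝ, ContDiff ℝ 1 f →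
      Integrable (fun x ↦ ‖fderiv ℝ f x‖ ^ 2 * radialWeight D α x) μ →
      Integrable (fun x ↦ |f x| * radialWeight D (α - 1) x) μ →
      ∫ x, f x * radialWeight D (α - 1) x ∂μ = 0 →
      Integrable (fun x ↦ f x ^ 2 * radialWeight D (α - 1) x) μ ∧
        Λ * ∫ x, f x ^ 2 * radialWeight D (α - 1) x ∂μ ≤
          ∫ x, ‖fderiv ℝ f x‖ ^ 2 * radialWeight D α x ∂μ := by
  obtain ⟨C, hC, h⟩ := exists_integral_sub_sq_le_of_lt_critical μ hα hm
  refine ⟨C⁻¹, inv_pos.2 hC, fun D hD f hf hGr hfw hmean ↦ ?_⟩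
  obtain ⟨c, hint, hle⟩ := h D hD f hf hGr hfw
  have hw := radialWeight_nonneg (E := E) (p := α - 1) hD.le
  have hfw' : Integrable (fun x ↦ f x * radialWeight D (α - 1) x) μ :=
    (integrable_norm_iff (f := fun x ↦ f x * radialWeight D (α - 1) x)
      (hf.continuous.mul (continuous_radialWeight hD)).aestronglyMeasurable).1 <| by
      simpa only [norm_mul, Real.norm_eq_abs, abs_of_nonneg (hw _)] using hfw
  obtain ⟨hint_sq, hsq_le⟩ := integrable_sq_mul_and_integral_le_of_integral_mul_eq_zero hw
    (integrable_radialWeight hD (by linarith)) hfw' hmean hint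
  exact ⟨hint_sq, (inv_mul_le_iff₀ hC).2 (hsq_le.trans hle)⟩

end Subcritical

theorem hardy_poincare_general {E : Type*} [NormedAddCommGroup E] [InnerProductSpace ℝ E]
    [FiniteDimensional ℝ E] [MeasurableSpace E] [BorelSpace E] (μ : Measure E)
    [μ.IsAddHaarMeasure] (α : ℝ) (hα : α ≤ 0)
    (hα' : α ≠ (2 - finrank ℝ E) / 2) :
    ∃ Λ : ℝ, 0 < Λ ∧
      ∀ D : ℝ, 0 ≤ D → (α < (2 - finrank ℝ E) / 2 → 0 < D) →
        ∀ f : E → ℝ, ContDiff ℝ 1 f →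
          Integrable (fun x ↦ ‖fderiv ℝ f x‖ ^ 2 * (D + ‖x‖ ^ 2) ^ α) μ →
          Integrable (fun x ↦ |f x| * (D + ‖x‖ ^ 2) ^ (α - 1)) μ →
          (α < (2 - finrank ℝ E) / 2 → ∫ x, f x * (D + ‖x‖ ^ 2) ^ (α - 1) ∂μ = 0) →
          Integrable (fun x ↦ f x ^ 2 * (D + ‖x‖ ^ 2) ^ (α - 1)) μ ∧
            Λ * ∫ x, f x ^ 2 * (D + ‖x‖ ^ 2) ^ (α - 1) ∂μ ≤
              ∫ x, ‖fderiv ℝ f x‖ ^ 2 * (D + ‖x‖ ^ 2) ^ α ∂μ := by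
  rcases hα'.lt_or_gt with hlt | hgt
  · obtain ⟨Λ, hΛ, h⟩ := exists_hardyPoincare_of_lt_critical μ hα (by linarith)
    exact ⟨Λ, hΛ, fun D _ hD f hf hGr hfw hmean ↦ h D (hD hlt) f hf hGr hfw (hmean hlt)⟩
  · have hm : 0 < finrank ℝ E + 2 * (α - 1) := by linarith
    exact ⟨(finrank ℝ E + 2 * (α - 1)) ^ 2 / 4, by positivity, fun D hD _ f hf hGr hfw _ ↦
      integrable_and_hardy_of_critical_lt hD hα hm hf hfw hGr⟩

/-- **Hardy–Poincaré inequality** (Bonforte–Dolbeault–Grillo–Vázquez; Lemma 2.3). -/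
theorem hardy_poincare (d : ℕ) (hd : 1 ≤ d) (α : ℝ) (hα : α < 0)
    (hα' : 3 ≤ d → α ≠ (2 - (d : ℝ)) / 2) :
    ∃ Λ : ℝ, 0 < Λ ∧
      ∀ D : ℝ, 0 ≤ D → (α < (2 - (d : ℝ)) / 2 → 0 < D) →
        ∀ f : EuclideanSpace ℝ (Fin d) → ℝ, ContDiff ℝ 1 f →
          Integrable (fun x => ‖fderiv ℝ f x‖ ^ 2 * (D + ‖x‖ ^ 2) ^ α) →
          Integrable (fun x => |f x| * (D + ‖x‖ ^ 2) ^ (α - 1)) →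
          (∫ x, f x * (D + ‖x‖ ^ 2) ^ (α - 1)) = 0 →
          Λ * ∫ x, (f x) ^ 2 * (D + ‖x‖ ^ 2) ^ (α - 1) ≤
            ∫ x, ‖fderiv ℝ f x‖ ^ 2 * (D + ‖x‖ ^ 2) ^ α := by
  have hdim : finrank ℝ (EuclideanSpace ℝ (Fin d)) = d := finrank_euclideanSpace_fin
  have hα_ne : α ≠ (2 - (d : ℝ)) / 2 := fun h ↦
    hα' (by exact_mod_cast show (2 : ℝ) < d by linarith) h
  obtain ⟨Λ, hΛ, h⟩ := hardy_poincare_general (E := EuclideanSpace ℝ (Fin d)) volume α hα.le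
    (by rwa [hdim])
  rw [hdim] at h
  exact ⟨Λ, hΛ, fun D hD hD' f hf hGr hfw hmean ↦ (h D hD hD' f hf hGr hfw fun _ ↦ hmean).2⟩
end

section
/- There exists a constant Λ > 0 (depending only on d, γ, C₁, C₂) such that for every continuously differentiable g : ℝ^d → ℂ with ∫_{ℝ^d} |∇(g/M)|² M² dv < ∞ and ∫_{ℝ^d} |g|² ⟨v⟩^{−2} dv < ∞, setting P(g) := (∫_{ℝ^d} M²⟨v⟩^{−2} dv)^{−1} ∫_{ℝ^d} g M ⟨v⟩^{−2} dv, one has Λ ∫_{ℝ^d} |g(v) − P(g) M(v)|² ⟨v⟩^{−2} dv ≤ ∫_{ℝ^d} |∇(g/M)(v)|² M(v)² dv. -/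
open MeasureTheory Real

/-!
Put `h = g / M`, so that `P(g)` is the mean of `h` for the finite measure `M² ⟨v⟩⁻² dv`. By Jensen
the variance of `h` is at most the mean of `‖h x - h y‖²` over pairs `(x, y)`, and the fundamental
theorem of calculus bounds `‖h x - h y‖²` by `‖x - y‖² ∫₀¹ ‖∇h(z)‖² dt`, `z = (1 - t) y + t x`.

Write `p_a(v) = ⟨v⟩^(-2a)`. Then `‖x - y‖² p_{γ+1}(x) p_{γ+1}(y) ≤ 2 p_γ(x) p_γ(y)`, and
`⟨z⟩² ≤ 2 (t² ⟨x⟩² + (1 - t)² ⟨y⟩²)` yields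
`p_γ(x) p_γ(y) ≤ 4^γ p_γ(z) (t^(2γ) p_γ(y) + (1 - t)^(2γ) p_γ(x))`. In the first summand
substitute `z` for `x`: the Jacobian `t^(-d)` is absorbed by `t^(2γ)` because `2γ > d`, and the
remaining weight `p_γ(y)` is integrable for the same reason. The second summand is symmetric.
-/

open scoped ENNReal

section Jensen

variable {α : Type*} [MeasurableSpace α]

theorem lintegral_sq_le_lintegral_sq {μ : Measure α} [IsProbabilityMeasure μ] {f : α → ℝ≥0∞}
    (hf : AEMeasurable f μ) : (∫⁻ a, f a ∂μ) ^ 2 ≤ ∫⁻ a, f a ^ 2 ∂μ := by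
  have hölder := ENNReal.lintegral_mul_le_Lp_mul_Lq μ HolderConjugate.two_two hf
    (aemeasurable_const (b := (1 : ℝ≥0∞)))
  simp only [Pi.mul_apply, mul_one, ENNReal.rpow_two, one_pow, lintegral_one, measure_univ,
    ENNReal.one_rpow] at hölder
  calc (∫⁻ a, f a ∂μ) ^ 2 ≤ ((∫⁻ a, f a ^ 2 ∂μ) ^ (1 / 2 : ℝ)) ^ 2 := pow_le_pow_left' hölder 2
    _ = ∫⁻ a, f a ^ 2 ∂μ := by rw [← ENNReal.rpow_mul_natCast]; norm_num

variable {F : Type*} [NormedAddCommGroup F] [NormedSpace ℝ F] [CompleteSpace F]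

theorem enorm_sub_integral_sq_le_lintegral {μ : Measure α} [IsProbabilityMeasure μ] {h : α → F}
    (hh : AEStronglyMeasurable h μ) (c : F) :
    ‖c - ∫ a, h a ∂μ‖ₑ ^ 2 ≤ ∫⁻ a, ‖c - h a‖ₑ ^ 2 ∂μ := by
  have hdiff : AEStronglyMeasurable (fun a => c - h a) μ := aestronglyMeasurable_const.sub hh
  have hjensen : (∫⁻ a, ‖c - h a‖ₑ ∂μ) ^ 2 ≤ ∫⁻ a, ‖c - h a‖ₑ ^ 2 ∂μ :=
    lintegral_sq_le_lintegral_sq hdiff.enorm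
  by_cases hfin : HasFiniteIntegral (fun a => c - h a) μ
  · have hint : Integrable h μ :=
      ((integrable_const c).sub ⟨hdiff, hfin⟩).congr (.of_forall fun a => sub_sub_cancel c (h a))
    calc ‖c - ∫ a, h a ∂μ‖ₑ ^ 2 = ‖∫ a, (c - h a) ∂μ‖ₑ ^ 2 := by
          rw [integral_sub (integrable_const c) hint, integral_const, probReal_univ, one_smul]
      _ ≤ (∫⁻ a, ‖c - h a‖ₑ ∂μ) ^ 2 := pow_le_pow_left' (enorm_integral_le_lintegral_enorm _) 2
      _ ≤ ∫⁻ a, ‖c - h a‖ₑ ^ 2 ∂μ := hjensen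
  · rw [hasFiniteIntegral_iff_enorm, not_lt_top_iff] at hfin
    rw [hfin, ENNReal.top_pow two_ne_zero, top_le_iff] at hjensen
    exact hjensen ▸ le_top

theorem measure_univ_mul_enorm_sub_average_sq_le {ν : Measure α} [IsFiniteMeasure ν] {h : α → F}
    (hh : AEStronglyMeasurable h ν) (c : F) :
    ν Set.univ * ‖c - ⨍ a, h a ∂ν‖ₑ ^ 2 ≤ ∫⁻ a, ‖c - h a‖ₑ ^ 2 ∂ν := by
  rcases eq_zero_or_neZero ν with rfl | _
  · simp
  · rw [← measure_mul_laverage]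
    gcongr
    exact enorm_sub_integral_sq_le_lintegral (hh.smul_measure _) c

theorem measure_univ_mul_lintegral_enorm_sub_average_sq_le {ν : Measure α} [IsFiniteMeasure ν]
    {h : α → F} (hh : AEStronglyMeasurable h ν) :
    ν Set.univ * ∫⁻ x, ‖h x - ⨍ y, h y ∂ν‖ₑ ^ 2 ∂ν ≤
      ∫⁻ z, ‖h z.1 - h z.2‖ₑ ^ 2 ∂ν.prod ν := by
  have hpairs : AEStronglyMeasurable (fun z : α × α => h z.1 - h z.2) (ν.prod ν) :=
    hh.comp_fst.sub hh.comp_snd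
  rw [← lintegral_const_mul' _ _ (measure_ne_top ν _),
    lintegral_prod _ (hpairs.enorm.pow_const 2)]
  exact lintegral_mono fun x => measure_univ_mul_enorm_sub_average_sq_le hh (h x)

end Jensen

section Segments

variable {E : Type*} [NormedAddCommGroup E] [NormedSpace ℝ E]
  {F : Type*} [NormedAddCommGroup F] [NormedSpace ℝ F]

theorem enorm_sub_sq_le_lintegral_fderiv_segment {h : E → F} (hh : ContDiff ℝ 1 h) (x y : E) :
    ‖h x - h y‖ₑ ^ 2 ≤ ‖x - y‖ₑ ^ 2 *
      ∫⁻ t in Set.Ioo (0 : ℝ) 1, ‖fderiv ℝ h ((1 - t) • y + t • x)‖ₑ ^ 2 := by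
  let c : ℝ → E := fun t => (1 - t) • y + t • x
  have hc : ContDiff ℝ 1 c := by fun_prop
  have hderiv (t : ℝ) : deriv (h ∘ c) t = fderiv ℝ h (c t) (x - y) := by
    have hct : HasDerivAt c (x - y) t :=
      AffineMap.hasDerivAt_lineMap.congr_of_eventuallyEq
        (.of_forall fun t => (AffineMap.lineMap_apply_module y x t).symm)
    exact ((hh.differentiable one_ne_zero (c t)).hasFDerivAt.comp_hasDerivAt t hct).deriv
  have hcont : Continuous fun t => fderiv ℝ h (c t) :=
    (hh.continuous_fderiv one_ne_zero).comp hc.continuous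
  have : IsProbabilityMeasure (volume.restrict (Set.Ioo (0 : ℝ) 1)) := ⟨by simp⟩
  have hle : ‖h x - h y‖ₑ ≤ ‖x - y‖ₑ * ∫⁻ t in Set.Ioo (0 : ℝ) 1, ‖fderiv ℝ h (c t)‖ₑ :=
    calc ‖h x - h y‖ₑ = ‖(h ∘ c) 1 - (h ∘ c) 0‖ₑ := by simp [c]
      _ ≤ ∫⁻ t in Set.Ioo (0 : ℝ) 1, ‖deriv (h ∘ c) t‖ₑ := by
        rw [restrict_Ioo_eq_restrict_Icc]
        exact enorm_sub_le_lintegral_deriv_of_contDiffOn_Icc (hh.comp hc).contDiffOn zero_le_one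
      _ ≤ ∫⁻ t in Set.Ioo (0 : ℝ) 1, ‖x - y‖ₑ * ‖fderiv ℝ h (c t)‖ₑ := by
        refine lintegral_mono fun t => ?_
        rw [hderiv, mul_comm]
        exact (fderiv ℝ h (c t)).le_opENorm _
      _ = _ := lintegral_const_mul' _ _ enorm_ne_top
  calc ‖h x - h y‖ₑ ^ 2 ≤ (‖x - y‖ₑ * ∫⁻ t in Set.Ioo (0 : ℝ) 1, ‖fderiv ℝ h (c t)‖ₑ) ^ 2 :=
        pow_le_pow_left' hle 2
    _ ≤ _ := by
      rw [mul_pow]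
      gcongr
      exact lintegral_sq_le_lintegral_sq hcont.enorm.aemeasurable

variable [FiniteDimensional ℝ E] [MeasurableSpace E] [BorelSpace E] (μ : Measure E)
  [μ.IsAddHaarMeasure]

theorem lintegral_comp_add_smul {f : E → ℝ≥0∞} (hf : Measurable f) (c : E) {t : ℝ} (ht : t ≠ 0) :
    ∫⁻ x, f (c + t • x) ∂μ =
      ENNReal.ofReal |(t ^ Module.finrank ℝ E)⁻¹| * ∫⁻ x, f x ∂μ := by
  calc ∫⁻ x, f (c + t • x) ∂μ = ∫⁻ x, f (c + x) ∂Measure.map (t • ·) μ := by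
        rw [lintegral_map (by fun_prop) (by fun_prop)]
    _ = _ := by
        rw [Measure.map_addHaar_smul μ ht, lintegral_smul_measure, lintegral_add_left_eq_self,
          smul_eq_mul]

theorem lintegral_prod_comp_segment {f : E → ℝ≥0∞} (hf : Measurable f) (ν : Measure E) [SFinite ν]
    (s : ℝ) {t : ℝ} (ht : t ≠ 0) :
    ∫⁻ z, f (s • z.2 + t • z.1) ∂μ.prod ν =
      ENNReal.ofReal |(t ^ Module.finrank ℝ E)⁻¹| * (ν Set.univ * ∫⁻ x, f x ∂μ) := by
  rw [lintegral_prod_symm' _ (by fun_prop)]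
  simp only [lintegral_comp_add_smul μ hf _ ht, lintegral_const]
  ring

end Segments

theorem add_rpow_le_two_rpow_mul {a b p : ℝ} (ha : 0 ≤ a) (hb : 0 ≤ b) (hp : 0 ≤ p) :
    (a + b) ^ p ≤ 2 ^ p * (a ^ p + b ^ p) := by
  wlog hab : a ≤ b generalizing a b
  · simpa only [add_comm] using this hb ha (le_of_not_ge hab)
  calc (a + b) ^ p ≤ (2 * b) ^ p := rpow_le_rpow (by positivity) (by linarith) hp
    _ = 2 ^ p * b ^ p := mul_rpow zero_le_two hb
    _ ≤ 2 ^ p * (a ^ p + b ^ p) := by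
      gcongr
      exact le_add_of_nonneg_left (by positivity)

section BracketWeight

variable {E : Type*} [NormedAddCommGroup E]

/-- The weight `⟨v⟩^(-2a) = (1 + |v|²)^(-a)`: up to constants, `M²` is the weight of exponent `γ`
and `M² ⟨v⟩⁻²` the one of exponent `γ + 1`. -/
noncomputable def bracketWeight (a : ℝ) (v : E) : ℝ := (1 + ‖v‖ ^ 2) ^ (-a)

theorem bracketWeight_pos (a : ℝ) (v : E) : 0 < bracketWeight a v := by
  unfold bracketWeight
  positivity

theorem bracketWeight_add_one (a : ℝ) (v : E) :
    bracketWeight (a + 1) v = bracketWeight a v / (1 + ‖v‖ ^ 2) := by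
  unfold bracketWeight
  rw [neg_add, ← sub_eq_add_neg, rpow_sub_one (by positivity)]

theorem sqrt_one_add_norm_sq_rpow_neg_sq (a : ℝ) (v : E) :
    (√(1 + ‖v‖ ^ 2) ^ (-a)) ^ 2 = bracketWeight a v := by
  rw [sqrt_eq_rpow, rpow_pow_comm (by positivity), ← rpow_mul_natCast (by positivity)]
  norm_num [bracketWeight]

theorem norm_sub_sq_mul_bracketWeight_le (a : ℝ) (x y : E) :
    ‖x - y‖ ^ 2 * (bracketWeight (a + 1) x * bracketWeight (a + 1) y) ≤
      2 * (bracketWeight a x * bracketWeight a y) := by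
  have hnorm : ‖x - y‖ ^ 2 ≤ 2 * ((1 + ‖x‖ ^ 2) * (1 + ‖y‖ ^ 2)) :=
    calc ‖x - y‖ ^ 2 ≤ (‖x‖ + ‖y‖) ^ 2 := by gcongr; exact norm_sub_le x y
      _ ≤ 2 * ((1 + ‖x‖ ^ 2) * (1 + ‖y‖ ^ 2)) := by
        nlinarith [sq_nonneg (‖x‖ - ‖y‖), mul_nonneg (sq_nonneg ‖x‖) (sq_nonneg ‖y‖)]
  have hweight : 0 ≤ bracketWeight a x * bracketWeight a y :=
    (mul_pos (bracketWeight_pos a x) (bracketWeight_pos a y)).le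
  rw [bracketWeight_add_one, bracketWeight_add_one, div_mul_div_comm, ← mul_div_assoc,
    div_le_iff₀ (by positivity)]
  calc ‖x - y‖ ^ 2 * (bracketWeight a x * bracketWeight a y)
      ≤ 2 * ((1 + ‖x‖ ^ 2) * (1 + ‖y‖ ^ 2)) * (bracketWeight a x * bracketWeight a y) := by gcongr
    _ = _ := by ring

theorem continuous_bracketWeight (a : ℝ) : Continuous (bracketWeight a : E → ℝ) :=
  Continuous.rpow_const (by fun_prop) fun v => Or.inl (by positivity)

variable [NormedSpace ℝ E]

theorem one_add_norm_sq_segment_le {s t : ℝ} (hst : s + t = 1) (x y : E) :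
    1 + ‖s • y + t • x‖ ^ 2 ≤ 2 * (t ^ 2 * (1 + ‖x‖ ^ 2) + s ^ 2 * (1 + ‖y‖ ^ 2)) := by
  calc 1 + ‖s • y + t • x‖ ^ 2 ≤ (s + t) ^ 2 + (‖s • y‖ + ‖t • x‖) ^ 2 := by
        rw [hst, one_pow]
        gcongr
        exact norm_add_le _ _
    _ ≤ 2 * (s ^ 2 + t ^ 2) + 2 * (‖s • y‖ ^ 2 + ‖t • x‖ ^ 2) := add_le_add add_sq_le add_sq_le
    _ = 2 * (t ^ 2 * (1 + ‖x‖ ^ 2) + s ^ 2 * (1 + ‖y‖ ^ 2)) := by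
      rw [norm_smul, norm_smul, mul_pow, mul_pow, norm_eq_abs, norm_eq_abs, sq_abs, sq_abs]
      ring

theorem bracketWeight_mul_le_segment {a : ℝ} (ha : 0 ≤ a) {s t : ℝ} (hs : 0 ≤ s) (ht : 0 ≤ t)
    (hst : s + t = 1) (x y : E) :
    bracketWeight a x * bracketWeight a y ≤
      4 ^ a * (bracketWeight a (s • y + t • x) *
        (t ^ (2 * a) * bracketWeight a y + s ^ (2 * a) * bracketWeight a x)) := by
  set X : ℝ := 1 + ‖x‖ ^ 2 with hX
  set Y : ℝ := 1 + ‖y‖ ^ 2 with hY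
  set Z : ℝ := 1 + ‖s • y + t • x‖ ^ 2 with hZ
  have hX0 : 0 < X := by positivity
  have hY0 : 0 < Y := by positivity
  have hZ0 : 0 < Z := by positivity
  have hZle : Z ^ a ≤ 4 ^ a * (t ^ (2 * a) * X ^ a + s ^ (2 * a) * Y ^ a) :=
    calc Z ^ a ≤ (2 * (t ^ 2 * X + s ^ 2 * Y)) ^ a :=
          rpow_le_rpow hZ0.le (one_add_norm_sq_segment_le hst x y) ha
      _ = 2 ^ a * (t ^ 2 * X + s ^ 2 * Y) ^ a := mul_rpow zero_le_two (by positivity)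
      _ ≤ 2 ^ a * (2 ^ a * ((t ^ 2 * X) ^ a + (s ^ 2 * Y) ^ a)) := by
        gcongr
        exact add_rpow_le_two_rpow_mul (by positivity) (by positivity) ha
      _ = 4 ^ a * (t ^ (2 * a) * X ^ a + s ^ (2 * a) * Y ^ a) := by
        rw [mul_rpow (sq_nonneg t) hX0.le, mul_rpow (sq_nonneg s) hY0.le, rpow_mul ht,
          rpow_mul hs, rpow_two, rpow_two, ← mul_assoc, ← mul_rpow zero_le_two zero_le_two]
        norm_num
  simp only [bracketWeight, ← hX, ← hY, ← hZ, rpow_neg hX0.le, rpow_neg hY0.le, rpow_neg hZ0.le]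
  calc (X ^ a)⁻¹ * (Y ^ a)⁻¹ = Z ^ a * ((Z ^ a)⁻¹ * (X ^ a)⁻¹ * (Y ^ a)⁻¹) := by field_simp
    _ ≤ 4 ^ a * (t ^ (2 * a) * X ^ a + s ^ (2 * a) * Y ^ a) *
        ((Z ^ a)⁻¹ * (X ^ a)⁻¹ * (Y ^ a)⁻¹) := by gcongr
    _ = _ := by field_simp

theorem enorm_sub_sq_mul_bracketWeight_le_segment {a : ℝ} (ha : 0 ≤ a) {s t : ℝ} (hs : 0 ≤ s)
    (ht : 0 ≤ t) (hst : s + t = 1) (x y : E) :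
    ‖x - y‖ₑ ^ 2 * (ENNReal.ofReal (bracketWeight (a + 1) x) *
        ENNReal.ofReal (bracketWeight (a + 1) y)) ≤
      ENNReal.ofReal (2 * 4 ^ a) * (ENNReal.ofReal (bracketWeight a (s • y + t • x)) *
        (ENNReal.ofReal (t ^ (2 * a)) * ENNReal.ofReal (bracketWeight a y) +
          ENNReal.ofReal (s ^ (2 * a)) * ENNReal.ofReal (bracketWeight a x))) := by
  have hpos (b : ℝ) (v : E) := (bracketWeight_pos b v).le
  have hx := hpos a x
  have hy := hpos a y
  rw [← ofReal_norm, ← ENNReal.ofReal_pow (norm_nonneg _), ← ENNReal.ofReal_mul (hpos _ _),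
    ← ENNReal.ofReal_mul (by positivity), ← ENNReal.ofReal_mul (by positivity),
    ← ENNReal.ofReal_mul (by positivity), ← ENNReal.ofReal_add (by positivity) (by positivity),
    ← ENNReal.ofReal_mul (hpos _ _), ← ENNReal.ofReal_mul (by positivity)]
  refine ENNReal.ofReal_le_ofReal ((norm_sub_sq_mul_bracketWeight_le a x y).trans ?_)
  rw [mul_assoc]
  refine mul_le_mul_of_nonneg_left ?_ zero_le_two
  exact bracketWeight_mul_le_segment ha hs ht hst x y

variable {F : Type*} [NormedAddCommGroup F] [NormedSpace ℝ F]

theorem enorm_sub_sq_mul_bracketWeight_le_lintegral {a : ℝ} (ha : 0 ≤ a) {h : E → F}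
    (hh : ContDiff ℝ 1 h) (x y : E) :
    ‖h x - h y‖ₑ ^ 2 * (ENNReal.ofReal (bracketWeight (a + 1) x) *
        ENNReal.ofReal (bracketWeight (a + 1) y)) ≤
      ENNReal.ofReal (2 * 4 ^ a) * ∫⁻ t in Set.Ioo (0 : ℝ) 1,
        ‖fderiv ℝ h ((1 - t) • y + t • x)‖ₑ ^ 2 *
            ENNReal.ofReal (bracketWeight a ((1 - t) • y + t • x)) *
          (ENNReal.ofReal (t ^ (2 * a)) * ENNReal.ofReal (bracketWeight a y) +
            ENNReal.ofReal ((1 - t) ^ (2 * a)) * ENNReal.ofReal (bracketWeight a x)) := by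
  set r : ℝ≥0∞ := ENNReal.ofReal (bracketWeight (a + 1) x) *
    ENNReal.ofReal (bracketWeight (a + 1) y)
  have hr_ne_top : ‖x - y‖ₑ ^ 2 * r ≠ ∞ := by finiteness
  calc ‖h x - h y‖ₑ ^ 2 * r
      ≤ ‖x - y‖ₑ ^ 2 *
          (∫⁻ t in Set.Ioo (0 : ℝ) 1, ‖fderiv ℝ h ((1 - t) • y + t • x)‖ₑ ^ 2) * r := by
        gcongr
        exact enorm_sub_sq_le_lintegral_fderiv_segment hh x y
    _ = ∫⁻ t in Set.Ioo (0 : ℝ) 1,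
          ‖x - y‖ₑ ^ 2 * r * ‖fderiv ℝ h ((1 - t) • y + t • x)‖ₑ ^ 2 := by
        rw [lintegral_const_mul' _ _ hr_ne_top, mul_right_comm]
    _ ≤ _ := by
        rw [← lintegral_const_mul' _ _ ENNReal.ofReal_ne_top]
        refine setLIntegral_mono' measurableSet_Ioo fun t ht => ?_
        calc _ ≤ _ := mul_le_mul_left (enorm_sub_sq_mul_bracketWeight_le_segment ha
              (sub_nonneg.2 ht.2.le) ht.1.le (sub_add_cancel 1 t) x y) _
          _ = _ := by ring

end BracketWeight

section BracketMeasure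

variable {E : Type*} [NormedAddCommGroup E] [MeasurableSpace E]

/-- The measure `⟨v⟩^(-2a) dμ(v)`: for the exponent `γ` it controls the gradient, for `γ + 1` the
variance. -/
noncomputable def bracketMeasure (μ : Measure E) (a : ℝ) : Measure E :=
  μ.withDensity fun v => ENNReal.ofReal (bracketWeight a v)

instance sFinite_bracketMeasure (μ : Measure E) [SFinite μ] (a : ℝ) :
    SFinite (bracketMeasure μ a) := by
  unfold bracketMeasure
  infer_instance

variable [BorelSpace E]

@[fun_prop]
theorem measurable_bracketWeight (a : ℝ) : Measurable (bracketWeight a : E → ℝ) :=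
  (continuous_bracketWeight a).measurable

theorem lintegral_bracketMeasure (μ : Measure E) (a : ℝ) (f : E → ℝ≥0∞) :
    ∫⁻ x, f x ∂bracketMeasure μ a = ∫⁻ x, f x * ENNReal.ofReal (bracketWeight a x) ∂μ := by
  rw [bracketMeasure, lintegral_withDensity_eq_lintegral_mul_non_measurable _ (by fun_prop)
    (.of_forall fun _ => ENNReal.ofReal_lt_top)]
  simp only [Pi.mul_apply, mul_comm]

theorem lintegral_prod_bracketMeasure (μ : Measure E) [SFinite μ] (a : ℝ)
    (f : E × E → ℝ≥0∞) :
    ∫⁻ z, f z ∂(bracketMeasure μ a).prod (bracketMeasure μ a) =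
      ∫⁻ z, f z * (ENNReal.ofReal (bracketWeight a z.1) * ENNReal.ofReal (bracketWeight a z.2))
        ∂μ.prod μ := by
  rw [bracketMeasure, prod_withDensity (by fun_prop) (by fun_prop),
    lintegral_withDensity_eq_lintegral_mul_non_measurable _ (by fun_prop)
      (.of_forall fun _ => by finiteness)]
  simp only [Pi.mul_apply, mul_comm]

theorem bracketMeasure_univ_ne_zero (μ : Measure E) [NeZero μ] (a : ℝ) :
    bracketMeasure μ a Set.univ ≠ 0 := by
  rw [Measure.measure_univ_ne_zero, bracketMeasure, Ne,
    withDensity_eq_zero_iff (by fun_prop)]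
  intro hzero
  obtain ⟨v, hv⟩ := hzero.exists
  exact (ENNReal.ofReal_pos.2 (bracketWeight_pos a v)).ne' hv

theorem ofReal_smul_bracketMeasure_le_withDensity (μ : Measure E) {a c : ℝ} (hc : 0 ≤ c)
    {f : E → ℝ} (hf : ∀ v, c * bracketWeight a v ≤ f v) :
    ENNReal.ofReal c • bracketMeasure μ a ≤ μ.withDensity fun v => ENNReal.ofReal (f v) := by
  rw [bracketMeasure, ← withDensity_smul _ (by fun_prop)]
  refine withDensity_mono (.of_forall fun v => ?_)
  simpa only [Pi.smul_apply, smul_eq_mul, ENNReal.ofReal_mul hc] using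
    ENNReal.ofReal_le_ofReal (hf v)

theorem withDensity_le_ofReal_smul_bracketMeasure (μ : Measure E) {a c : ℝ} (hc : 0 ≤ c)
    {f : E → ℝ} (hf : ∀ v, f v ≤ c * bracketWeight a v) :
    μ.withDensity (fun v => ENNReal.ofReal (f v)) ≤ ENNReal.ofReal c • bracketMeasure μ a := by
  rw [bracketMeasure, ← withDensity_smul _ (by fun_prop)]
  refine withDensity_mono (.of_forall fun v => ?_)
  simpa only [Pi.smul_apply, smul_eq_mul, ENNReal.ofReal_mul hc] using
    ENNReal.ofReal_le_ofReal (hf v)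

variable [NormedSpace ℝ E] [FiniteDimensional ℝ E] (μ : Measure E) [μ.IsAddHaarMeasure]

theorem isFiniteMeasure_bracketMeasure {a : ℝ} (ha : (Module.finrank ℝ E : ℝ) / 2 < a) :
    IsFiniteMeasure (bracketMeasure μ a) := by
  refine isFiniteMeasure_withDensity_ofReal ?_
  have hint := integrable_rpow_neg_one_add_norm_sq (E := E) (μ := μ) (r := 2 * a) (by linarith)
  simpa only [neg_mul_eq_mul_neg, mul_div_cancel_left₀ _ (two_ne_zero' ℝ)] using! hint.2

end BracketMeasure

theorem ofReal_rpow_mul_ofReal_abs_inv_pow_le_one {n : ℕ} {b t : ℝ} (hn : n ≤ b) (ht₀ : 0 < t)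
    (ht₁ : t ≤ 1) : ENNReal.ofReal (t ^ b) * ENNReal.ofReal |(t ^ n)⁻¹| ≤ 1 := by
  rw [← ENNReal.ofReal_mul (by positivity), ENNReal.ofReal_le_one, abs_of_pos (by positivity),
    ← div_eq_mul_inv, div_le_one (by positivity), ← rpow_natCast]
  exact rpow_le_rpow_of_exponent_ge ht₀ ht₁ hn

section PairPoincare

variable {E : Type*} [NormedAddCommGroup E] [NormedSpace ℝ E] [FiniteDimensional ℝ E]
  [MeasurableSpace E] [BorelSpace E]

variable (μ : Measure E) [μ.IsAddHaarMeasure]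

theorem lintegral_prod_comp_segment_mul_bracketWeight_le {f : E → ℝ≥0∞} (hf : Measurable f) {a : ℝ}
    (ha : (Module.finrank ℝ E : ℝ) / 2 < a) (s : ℝ) {t : ℝ} (ht₀ : 0 < t) (ht₁ : t ≤ 1) :
    ∫⁻ z, f (s • z.2 + t • z.1) *
        (ENNReal.ofReal (t ^ (2 * a)) * ENNReal.ofReal (bracketWeight a z.2)) ∂μ.prod μ ≤
      bracketMeasure μ a Set.univ * ∫⁻ x, f x ∂μ := by
  calc _ = ∫⁻ z, ENNReal.ofReal (t ^ (2 * a)) *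
          (ENNReal.ofReal (bracketWeight a z.2) * f (s • z.2 + t • z.1)) ∂μ.prod μ := by
        congr with z
        ring
    _ = ENNReal.ofReal (t ^ (2 * a)) *
          ∫⁻ z, f (s • z.2 + t • z.1) ∂μ.prod (bracketMeasure μ a) := by
        rw [lintegral_const_mul' _ _ ENNReal.ofReal_ne_top, bracketMeasure,
          prod_withDensity_right (by fun_prop),
          lintegral_withDensity_eq_lintegral_mul _ (by fun_prop) (by fun_prop)]
        rfl
    _ = ENNReal.ofReal (t ^ (2 * a)) * ENNReal.ofReal |(t ^ Module.finrank ℝ E)⁻¹| *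
          (bracketMeasure μ a Set.univ * ∫⁻ x, f x ∂μ) := by
        rw [lintegral_prod_comp_segment μ hf _ s ht₀.ne', mul_assoc]
    _ ≤ _ := mul_le_of_le_one_left'
        (ofReal_rpow_mul_ofReal_abs_inv_pow_le_one (by linarith) ht₀ ht₁)

theorem lintegral_prod_comp_segment_mul_add_le {f : E → ℝ≥0∞} (hf : Measurable f) {a : ℝ}
    (ha : (Module.finrank ℝ E : ℝ) / 2 < a) {t : ℝ} (ht : t ∈ Set.Ioo (0 : ℝ) 1) :
    ∫⁻ z, f ((1 - t) • z.2 + t • z.1) *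
        (ENNReal.ofReal (t ^ (2 * a)) * ENNReal.ofReal (bracketWeight a z.2) +
          ENNReal.ofReal ((1 - t) ^ (2 * a)) * ENNReal.ofReal (bracketWeight a z.1)) ∂μ.prod μ ≤
      2 * (bracketMeasure μ a Set.univ * ∫⁻ x, f x ∂μ) := by
  simp only [mul_add]
  rw [lintegral_add_left (by fun_prop), two_mul (bracketMeasure μ a Set.univ * _)]
  refine add_le_add
    (lintegral_prod_comp_segment_mul_bracketWeight_le μ hf ha (1 - t) ht.1 ht.2.le) ?_
  calc _ = ∫⁻ z, f (t • z.2 + (1 - t) • z.1) * (ENNReal.ofReal ((1 - t) ^ (2 * a)) *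
          ENNReal.ofReal (bracketWeight a z.2)) ∂μ.prod μ := by
        rw [← lintegral_prod_swap]
        simp only [Prod.fst_swap, Prod.snd_swap, add_comm]
    _ ≤ _ := lintegral_prod_comp_segment_mul_bracketWeight_le μ hf ha t (sub_pos.2 ht.2)
        (sub_le_self 1 ht.1.le)

variable {F : Type*} [NormedAddCommGroup F] [NormedSpace ℝ F]

theorem lintegral_prod_bracketMeasure_enorm_sub_sq_le {a : ℝ}
    (ha : (Module.finrank ℝ E : ℝ) / 2 < a) {h : E → F} (hh : ContDiff ℝ 1 h) :
    ∫⁻ z, ‖h z.1 - h z.2‖ₑ ^ 2 ∂(bracketMeasure μ (a + 1)).prod (bracketMeasure μ (a + 1)) ≤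
      ENNReal.ofReal (4 * 4 ^ a) *
        (bracketMeasure μ a Set.univ * ∫⁻ x, ‖fderiv ℝ h x‖ₑ ^ 2 ∂bracketMeasure μ a) := by
  have ha₀ : 0 ≤ a := (by positivity : (0 : ℝ) ≤ Module.finrank ℝ E / 2).trans ha.le
  rw [lintegral_bracketMeasure μ a]
  set f : E → ℝ≥0∞ := fun v => ‖fderiv ℝ h v‖ₑ ^ 2 * ENNReal.ofReal (bracketWeight a v)
  have hf : Measurable f := by fun_prop
  let G : E × E → ℝ → ℝ≥0∞ := fun z t => f ((1 - t) • z.2 + t • z.1) *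
    (ENNReal.ofReal (t ^ (2 * a)) * ENNReal.ofReal (bracketWeight a z.2) +
      ENNReal.ofReal ((1 - t) ^ (2 * a)) * ENNReal.ofReal (bracketWeight a z.1))
  have hG : Measurable (Function.uncurry G) := by
    simp only [Function.uncurry_def, G]
    fun_prop
  calc _ = ∫⁻ z, ‖h z.1 - h z.2‖ₑ ^ 2 * (ENNReal.ofReal (bracketWeight (a + 1) z.1) *
          ENNReal.ofReal (bracketWeight (a + 1) z.2)) ∂μ.prod μ := by
        rw [lintegral_prod_bracketMeasure]
    _ ≤ ∫⁻ z, (ENNReal.ofReal (2 * 4 ^ a) * ∫⁻ t in Set.Ioo (0 : ℝ) 1, G z t) ∂μ.prod μ :=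
        lintegral_mono fun z => enorm_sub_sq_mul_bracketWeight_le_lintegral ha₀ hh z.1 z.2
    _ = ENNReal.ofReal (2 * 4 ^ a) * ∫⁻ t in Set.Ioo (0 : ℝ) 1, (∫⁻ z, G z t ∂μ.prod μ) := by
        rw [lintegral_const_mul' _ _ ENNReal.ofReal_ne_top,
          lintegral_lintegral_swap hG.aemeasurable]
    _ ≤ ENNReal.ofReal (2 * 4 ^ a) * ∫⁻ _ in Set.Ioo (0 : ℝ) 1,
          2 * (bracketMeasure μ a Set.univ * ∫⁻ x, f x ∂μ) := by
        gcongr ENNReal.ofReal (2 * 4 ^ a) * ?_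
        exact setLIntegral_mono' measurableSet_Ioo fun t ht =>
          lintegral_prod_comp_segment_mul_add_le μ hf ha ht
    _ = _ := by
        rw [setLIntegral_const, volume_Ioo, sub_zero, ENNReal.ofReal_one, mul_one, ← mul_assoc,
          ← ENNReal.ofReal_ofNat 2, ← ENNReal.ofReal_mul (by positivity)]
        ring_nf

end PairPoincare

section Poincare

variable {E : Type*} [NormedAddCommGroup E] [NormedSpace ℝ E] [FiniteDimensional ℝ E]
  [MeasurableSpace E] [BorelSpace E] (μ : Measure E) [μ.IsAddHaarMeasure]
  {F : Type*} [NormedAddCommGroup F] [NormedSpace ℝ F] [CompleteSpace F]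

theorem measure_univ_mul_lintegral_enorm_sub_average_sq_le_of_le_bracketMeasure {a : ℝ}
    (ha : (Module.finrank ℝ E : ℝ) / 2 < a) {c : ℝ≥0∞} (hc : c ≠ ∞) {ν : Measure E}
    (hν : ν ≤ c • bracketMeasure μ (a + 1)) {h : E → F} (hh : ContDiff ℝ 1 h) :
    ν Set.univ * ∫⁻ x, ‖h x - ⨍ y, h y ∂ν‖ₑ ^ 2 ∂ν ≤
      c ^ 2 * ENNReal.ofReal (4 * 4 ^ a) * bracketMeasure μ a Set.univ *
        ∫⁻ x, ‖fderiv ℝ h x‖ₑ ^ 2 ∂bracketMeasure μ a := by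
  have : IsFiniteMeasure (bracketMeasure μ (a + 1)) :=
    isFiniteMeasure_bracketMeasure μ (ha.trans (lt_add_one a))
  have : IsFiniteMeasure (c • bracketMeasure μ (a + 1)) := Measure.smul_finite _ hc
  have : IsFiniteMeasure ν := isFiniteMeasure_of_le _ hν
  calc _ ≤ ∫⁻ z, ‖h z.1 - h z.2‖ₑ ^ 2 ∂ν.prod ν :=
        measure_univ_mul_lintegral_enorm_sub_average_sq_le hh.continuous.aestronglyMeasurable
    _ ≤ ∫⁻ z, ‖h z.1 - h z.2‖ₑ ^ 2
          ∂(c • bracketMeasure μ (a + 1)).prod (c • bracketMeasure μ (a + 1)) :=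
        lintegral_mono' (Measure.prod_mono hν hν) le_rfl
    _ = c ^ 2 * ∫⁻ z, ‖h z.1 - h z.2‖ₑ ^ 2
          ∂(bracketMeasure μ (a + 1)).prod (bracketMeasure μ (a + 1)) := by
        rw [Measure.prod_smul_left, Measure.prod_smul_right, lintegral_smul_measure,
          lintegral_smul_measure, smul_eq_mul, smul_eq_mul, ← mul_assoc, sq]
    _ ≤ _ := by
        rw [mul_assoc, mul_assoc]
        gcongr
        exact lintegral_prod_bracketMeasure_enorm_sub_sq_le μ ha hh

theorem mul_lintegral_enorm_sub_average_sq_le_of_bracketMeasure_comparable {a : ℝ}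
    (ha : (Module.finrank ℝ E : ℝ) / 2 < a) {c₁ c₂ : ℝ≥0∞} (hc₂ : c₂ ≠ ∞) {ν σ : Measure E}
    (hν₁ : c₁ • bracketMeasure μ (a + 1) ≤ ν) (hν₂ : ν ≤ c₂ • bracketMeasure μ (a + 1))
    (hσ : c₁ • bracketMeasure μ a ≤ σ) {h : E → F} (hh : ContDiff ℝ 1 h) :
    c₁ ^ 2 * bracketMeasure μ (a + 1) Set.univ * ∫⁻ x, ‖h x - ⨍ y, h y ∂ν‖ₑ ^ 2 ∂ν ≤
      c₂ ^ 2 * ENNReal.ofReal (4 * 4 ^ a) * bracketMeasure μ a Set.univ *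
        ∫⁻ x, ‖fderiv ℝ h x‖ₑ ^ 2 ∂σ := by
  set V : ℝ≥0∞ := ∫⁻ x, ‖h x - ⨍ y, h y ∂ν‖ₑ ^ 2 ∂ν
  set B : ℝ≥0∞ := c₂ ^ 2 * ENNReal.ofReal (4 * 4 ^ a) * bracketMeasure μ a Set.univ
  calc c₁ ^ 2 * bracketMeasure μ (a + 1) Set.univ * V
      = c₁ * ((c₁ • bracketMeasure μ (a + 1)) Set.univ * V) := by
        rw [Measure.smul_apply, smul_eq_mul]
        ring
    _ ≤ c₁ * (ν Set.univ * V) := by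
        gcongr
    _ ≤ c₁ * (B * ∫⁻ x, ‖fderiv ℝ h x‖ₑ ^ 2 ∂bracketMeasure μ a) := by
        gcongr c₁ * ?_
        exact measure_univ_mul_lintegral_enorm_sub_average_sq_le_of_le_bracketMeasure μ ha hc₂
          hν₂ hh
    _ = B * ∫⁻ x, ‖fderiv ℝ h x‖ₑ ^ 2 ∂(c₁ • bracketMeasure μ a) := by
        rw [lintegral_smul_measure, smul_eq_mul, mul_left_comm]
    _ ≤ B * ∫⁻ x, ‖fderiv ℝ h x‖ₑ ^ 2 ∂σ := by
        gcongr

theorem exists_poincare_constant_of_bracketMeasure_comparable {a : ℝ}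
    (ha : (Module.finrank ℝ E : ℝ) / 2 < a) {c₁ c₂ : ℝ} (hc₁ : 0 < c₁) (hc₂ : 0 < c₂) :
    ∃ Λ : ℝ, 0 < Λ ∧ ∀ ν σ : Measure E,
      ENNReal.ofReal c₁ • bracketMeasure μ (a + 1) ≤ ν →
      ν ≤ ENNReal.ofReal c₂ • bracketMeasure μ (a + 1) →
      ENNReal.ofReal c₁ • bracketMeasure μ a ≤ σ →
      ∀ h : E → F, ContDiff ℝ 1 h →
        ENNReal.ofReal Λ * ∫⁻ x, ‖h x - ⨍ y, h y ∂ν‖ₑ ^ 2 ∂ν ≤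
          ∫⁻ x, ‖fderiv ℝ h x‖ₑ ^ 2 ∂σ := by
  have := isFiniteMeasure_bracketMeasure μ ha
  have := isFiniteMeasure_bracketMeasure μ (ha.trans (lt_add_one a))
  have hofReal {c : ℝ} (hc : 0 < c) : ENNReal.ofReal c ≠ 0 := (ENNReal.ofReal_pos.2 hc).ne'
  set A : ℝ≥0∞ := ENNReal.ofReal c₁ ^ 2 * bracketMeasure μ (a + 1) Set.univ
  set B : ℝ≥0∞ :=
    ENNReal.ofReal c₂ ^ 2 * ENNReal.ofReal (4 * 4 ^ a) * bracketMeasure μ a Set.univ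
  have hA₀ : A ≠ 0 := mul_ne_zero (pow_ne_zero 2 (hofReal hc₁)) (bracketMeasure_univ_ne_zero μ _)
  have hB₀ : B ≠ 0 := mul_ne_zero
    (mul_ne_zero (pow_ne_zero 2 (hofReal hc₂)) (hofReal (by positivity)))
    (bracketMeasure_univ_ne_zero μ _)
  have hA_top : A ≠ ∞ := by finiteness
  have hB_top : B ≠ ∞ := by finiteness
  have hAB_top : A / B ≠ ∞ := ENNReal.div_ne_top hA_top hB₀
  refine ⟨(A / B).toReal, ENNReal.toReal_pos (ENNReal.div_ne_zero.2 ⟨hA₀, hB_top⟩) hAB_top,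
    fun ν σ hν₁ hν₂ hσ h hh => ?_⟩
  rw [ENNReal.ofReal_toReal hAB_top, ENNReal.mul_comm_div, ← mul_div_assoc]
  exact ENNReal.div_le_of_le_mul'
    (mul_lintegral_enorm_sub_average_sq_le_of_bracketMeasure_comparable μ ha
      ENNReal.ofReal_ne_top hν₁ hν₂ hσ hh)

end Poincare

section Density

variable {α : Type*} [MeasurableSpace α] {μ : Measure α}
  {F : Type*} [NormedAddCommGroup F] {f : α → ℝ} {u : α → F}

theorem lintegral_withDensity_enorm_sq (hf : Measurable f) (hf₀ : ∀ x, 0 ≤ f x) :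
    ∫⁻ x, ‖u x‖ₑ ^ 2 ∂μ.withDensity (fun x => ENNReal.ofReal (f x)) =
      ∫⁻ x, ENNReal.ofReal (‖u x‖ ^ 2 * f x) ∂μ := by
  rw [lintegral_withDensity_eq_lintegral_mul_non_measurable _ hf.ennreal_ofReal
    (.of_forall fun _ => ENNReal.ofReal_lt_top)]
  congr with x
  rw [Pi.mul_apply, ← ofReal_norm, ← ENNReal.ofReal_pow (norm_nonneg _),
    ← ENNReal.ofReal_mul (hf₀ x), mul_comm]

theorem average_withDensity [NormedSpace ℝ F] (hf : Measurable f) (hf₀ : ∀ x, 0 ≤ f x) :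
    ⨍ x, u x ∂μ.withDensity (fun x => ENNReal.ofReal (f x)) =
      (∫ x, f x ∂μ)⁻¹ • ∫ x, f x • u x ∂μ := by
  rw [average_eq, measureReal_def, withDensity_apply _ .univ, setLIntegral_univ,
    integral_withDensity_eq_integral_toReal_smul hf.ennreal_ofReal
      (.of_forall fun _ => ENNReal.ofReal_lt_top),
    integral_eq_lintegral_of_nonneg_ae (.of_forall hf₀) hf.aestronglyMeasurable]
  simp only [ENNReal.toReal_ofReal (hf₀ _)]

end Density

theorem integrable_and_mul_integral_le_of_lintegral_ofReal_le {α : Type*} [MeasurableSpace α]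
    {μ : Measure α} {c : ℝ} (hc : 0 < c) {u v : α → ℝ} (hu : AEStronglyMeasurable u μ)
    (hu₀ : ∀ x, 0 ≤ u x) (hv : Integrable v μ) (hv₀ : ∀ x, 0 ≤ v x)
    (hle : ENNReal.ofReal c * ∫⁻ x, ENNReal.ofReal (u x) ∂μ ≤ ∫⁻ x, ENNReal.ofReal (v x) ∂μ) :
    Integrable u μ ∧ c * ∫ x, u x ∂μ ≤ ∫ x, v x ∂μ := by
  have hv_fin : ∫⁻ x, ENNReal.ofReal (v x) ∂μ ≠ ∞ :=
    ((hasFiniteIntegral_iff_ofReal (.of_forall hv₀)).1 hv.2).ne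
  have hu_fin : ∫⁻ x, ENNReal.ofReal (u x) ∂μ < ∞ :=
    ENNReal.lt_top_of_mul_ne_top_right (ne_top_of_le_ne_top hv_fin hle)
      (ENNReal.ofReal_pos.2 hc).ne'
  refine ⟨⟨hu, (hasFiniteIntegral_iff_ofReal (.of_forall hu₀)).2 hu_fin⟩, ?_⟩
  rw [integral_eq_lintegral_of_nonneg_ae (.of_forall hu₀) hu,
    integral_eq_lintegral_of_nonneg_ae (.of_forall hv₀) hv.1, ← ENNReal.toReal_ofReal hc.le,
    ← ENNReal.toReal_mul]
  exact ENNReal.toReal_mono hv_fin hle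

section HardyPoincare

variable {E : Type*} [NormedAddCommGroup E] [NormedSpace ℝ E] [FiniteDimensional ℝ E]
  [MeasurableSpace E] [BorelSpace E] (μ : Measure E) [μ.IsAddHaarMeasure]
  {F : Type*} [NormedAddCommGroup F] [NormedSpace ℝ F] [CompleteSpace F]

theorem exists_poincare_constant_of_bracketWeight_comparable {a : ℝ}
    (ha : (Module.finrank ℝ E : ℝ) / 2 < a) {c₁ c₂ : ℝ} (hc₁ : 0 < c₁) (hc₂ : 0 < c₂) :
    ∃ Λ : ℝ, 0 < Λ ∧ ∀ w : E → ℝ, Measurable w →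
      (∀ v, c₁ * bracketWeight a v ≤ w v) → (∀ v, w v ≤ c₂ * bracketWeight a v) →
      ∀ h : E → F, ContDiff ℝ 1 h → Integrable (fun v => ‖fderiv ℝ h v‖ ^ 2 * w v) μ →
        let u : E → ℝ := fun v => ‖h v - (∫ x, w x / (1 + ‖x‖ ^ 2) ∂μ)⁻¹ •
          ∫ x, (w x / (1 + ‖x‖ ^ 2)) • h x ∂μ‖ ^ 2 * (w v / (1 + ‖v‖ ^ 2))
        Integrable u μ ∧ Λ * ∫ v, u v ∂μ ≤ ∫ v, ‖fderiv ℝ h v‖ ^ 2 * w v ∂μ := by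
  obtain ⟨Λ, hΛ, poincare⟩ :=
    exists_poincare_constant_of_bracketMeasure_comparable μ (F := F) ha hc₁ hc₂
  refine ⟨Λ, hΛ, fun w hw hle hge h hh hint => ?_⟩
  have hw₀ (v : E) : 0 ≤ w v := (mul_pos hc₁ (bracketWeight_pos a v)).le.trans (hle v)
  set m : E → ℝ := fun v => w v / (1 + ‖v‖ ^ 2)
  have hm : Measurable m := by fun_prop
  have hm₀ (v : E) : 0 ≤ m v := div_nonneg (hw₀ v) (by positivity)
  have hm_le (v : E) : c₁ * bracketWeight (a + 1) v ≤ m v := by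
    rw [bracketWeight_add_one, ← mul_div_assoc]
    exact div_le_div_of_nonneg_right (hle v) (by positivity)
  have hm_ge (v : E) : m v ≤ c₂ * bracketWeight (a + 1) v := by
    rw [bracketWeight_add_one, ← mul_div_assoc]
    exact div_le_div_of_nonneg_right (hge v) (by positivity)
  have hν := poincare (μ.withDensity fun v => ENNReal.ofReal (m v))
    (μ.withDensity fun v => ENNReal.ofReal (w v))
    (ofReal_smul_bracketMeasure_le_withDensity μ hc₁.le hm_le)
    (withDensity_le_ofReal_smul_bracketMeasure μ hc₂.le hm_ge)
    (ofReal_smul_bracketMeasure_le_withDensity μ hc₁.le hle) h hh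
  rw [lintegral_withDensity_enorm_sq hm hm₀, lintegral_withDensity_enorm_sq hw hw₀,
    average_withDensity hm hm₀] at hν
  exact integrable_and_mul_integral_le_of_lintegral_ofReal_le hΛ
    (((hh.continuous.sub continuous_const).norm.pow 2).measurable.mul hm).aestronglyMeasurable
    (fun v => mul_nonneg (sq_nonneg _) (hm₀ v)) hint
    (fun v => mul_nonneg (sq_nonneg _) (hw₀ v)) hν

theorem hardy_poincare_projected_general {γ C₁ C₂ : ℝ} (hγ : (Module.finrank ℝ E : ℝ) / 2 < γ)
    (hC₁ : 0 < C₁) (hC₂ : 0 < C₂) :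
    ∃ Λ : ℝ, 0 < Λ ∧
      ∀ M : E → ℝ, ContDiff ℝ 1 M →
        (∀ v, C₁ * √(1 + ‖v‖ ^ 2) ^ (-γ) ≤ M v ∧ M v ≤ C₂ * √(1 + ‖v‖ ^ 2) ^ (-γ)) →
        ∀ g : E → F, ContDiff ℝ 1 g →
          Integrable (fun v => ‖fderiv ℝ (fun w => (M w)⁻¹ • g w) v‖ ^ 2 * M v ^ 2) μ →
          let P : F :=
            (∫ w, M w ^ 2 / (1 + ‖w‖ ^ 2) ∂μ)⁻¹ • ∫ w, (M w / (1 + ‖w‖ ^ 2)) • g w ∂μ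
          Integrable (fun v => ‖g v - M v • P‖ ^ 2 / (1 + ‖v‖ ^ 2)) μ ∧
            Λ * ∫ v, ‖g v - M v • P‖ ^ 2 / (1 + ‖v‖ ^ 2) ∂μ ≤
              ∫ v, ‖fderiv ℝ (fun w => (M w)⁻¹ • g w) v‖ ^ 2 * M v ^ 2 ∂μ := by
  obtain ⟨Λ, hΛ, poincare⟩ := exists_poincare_constant_of_bracketWeight_comparable μ (F := F) hγ
    (pow_pos hC₁ 2) (pow_pos hC₂ 2)
  refine ⟨Λ, hΛ, fun M hM hbounds g hg hint => ?_⟩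
  have hM₀ (v : E) : 0 < M v := (by positivity : 0 < C₁ * _).trans_le (hbounds v).1
  have hle (v : E) : C₁ ^ 2 * bracketWeight γ v ≤ M v ^ 2 := by
    rw [← sqrt_one_add_norm_sq_rpow_neg_sq, ← mul_pow]
    exact pow_le_pow_left₀ (by positivity) (hbounds v).1 2
  have hge (v : E) : M v ^ 2 ≤ C₂ ^ 2 * bracketWeight γ v := by
    rw [← sqrt_one_add_norm_sq_rpow_neg_sq, ← mul_pow]
    exact pow_le_pow_left₀ (hM₀ v).le (hbounds v).2 2
  have hh : ContDiff ℝ 1 fun v => (M v)⁻¹ • g v := (hM.inv fun v => (hM₀ v).ne').smul hg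
  have hmass (v : E) :
      (M v ^ 2 / (1 + ‖v‖ ^ 2)) • (M v)⁻¹ • g v = (M v / (1 + ‖v‖ ^ 2)) • g v := by
    rw [smul_smul, div_mul_eq_mul_div, sq, mul_inv_cancel_right₀ (hM₀ v).ne']
  have hdev (v : E) (c : F) : ‖(M v)⁻¹ • g v - c‖ ^ 2 * (M v ^ 2 / (1 + ‖v‖ ^ 2)) =
      ‖g v - M v • c‖ ^ 2 / (1 + ‖v‖ ^ 2) := by
    rw [← mul_div_assoc, ← mul_pow, mul_comm, ← norm_smul_of_nonneg (hM₀ v).le, smul_sub,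
      smul_inv_smul₀ (hM₀ v).ne']
  simpa only [hmass, hdev] using
    poincare (fun v => M v ^ 2) (hM.continuous.measurable.pow_const 2) hle hge _ hh hint

end HardyPoincare

/-- **Hardy–Poincaré inequality in projected form** (inequality (2.10) of the paper). -/
theorem hardy_poincare_projected (d : ℕ) (hd : 1 ≤ d) (γ C₁ C₂ : ℝ)
    (hγ₁ : (d : ℝ) / 2 < γ) (hγ₂ : γ < ((d : ℝ) + 4) / 2)
    (hC₁ : 0 < C₁) (hC₁₂ : C₁ ≤ C₂) :
    ∃ Λ : ℝ, 0 < Λ ∧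
      ∀ M : EuclideanSpace ℝ (Fin d) → ℝ, (∀ v, 0 < M v) → ContDiff ℝ 1 M →
        (∀ v, C₁ * Real.sqrt (1 + ‖v‖ ^ 2) ^ (-γ) ≤ M v ∧
              M v ≤ C₂ * Real.sqrt (1 + ‖v‖ ^ 2) ^ (-γ)) →
        ∀ g : EuclideanSpace ℝ (Fin d) → ℂ, ContDiff ℝ 1 g →
          Integrable (fun v => ‖fderiv ℝ (fun w => g w / (M w : ℂ)) v‖ ^ 2 * (M v) ^ 2) →
          Integrable (fun v => ‖g v‖ ^ 2 / (1 + ‖v‖ ^ 2)) →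
          Λ * ∫ v, ‖g v -
                (((∫ w, (M w) ^ 2 / (1 + ‖w‖ ^ 2) : ℝ)⁻¹ : ℝ) : ℂ) *
                  (∫ w, g w * ((M w : ℂ) / ((1 + ‖w‖ ^ 2 : ℝ) : ℂ))) * (M v : ℂ)‖ ^ 2 /
              (1 + ‖v‖ ^ 2) ≤
            ∫ v, ‖fderiv ℝ (fun w => g w / (M w : ℂ)) v‖ ^ 2 * (M v) ^ 2 := by
  obtain ⟨Λ, hΛ, poincare⟩ := hardy_poincare_projected_general volume (F := ℂ)
    (by rwa [finrank_euclideanSpace_fin]) hC₁ (hC₁.trans_le hC₁₂)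
  refine ⟨Λ, hΛ, fun M _ hM hbounds g hg hint _ => ?_⟩
  simp only [← Complex.ofReal_div, div_eq_inv_mul (g _), ← Complex.ofReal_inv, mul_comm (g _),
    mul_comm _ (M _ : ℂ), ← Complex.real_smul] at hint ⊢
  exact (poincare M hM hbounds g hg hint).2
end

section
/- There exist constants c₁, c₂ > 0 (depending only on d, γ, σ, C₁, C₂) such that for every continuously differentiable ψ : ℝ^d → ℂ with ‖ψ‖²_* := ∫_{ℝ^d} |∇(ψ/M)|² M² dv + ∫_{ℝ^d} ⟨v⟩^{−σ} |ψ|² dv < ∞, the quantity ‖ψ‖²_{H₀} := ∫_{ℝ^d} |∇(ψ/M)|² M² dv + ∫_{ℝ^d} |ψ|² ⟨v⟩^{−2} dv is also finite and c₁ ‖ψ‖_{H₀} ≤ ‖ψ‖_* ≤ c₂ ‖ψ‖_{H₀}. -/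
open MeasureTheory Real

open Module Filter

/-!
Put `φ = ψ / M`. Since `M` is comparable to `⟨v⟩^(-γ)`, everything reduces to the weighted Hardy
inequality `∫ ⟨v⟩^(q-2) |φ|² ≤ C (∫ ⟨v⟩^q |∇φ|² + ∫ ⟨v⟩^(q-σ) |φ|²)` with `q = -2γ < 2 - d`. The
field `⟨v⟩^(q-2) v` has divergence `-(2 - d - q) ⟨v⟩^(q-2) + (2 - q) ⟨v⟩^(q-4)`. Testing it against
`|φ|²` and using Young's inequality on the cross term, the first summand controls the left-hand
side; the second is of lower order, so for large `v` it is absorbed, and for bounded `v` it is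
dominated by `⟨v⟩^(q-σ)`. A radially decreasing cutoff makes the integration by parts legitimate,
because the term in which it is differentiated has a favourable sign.
-/

section EulerField

variable {E F : Type*} [NormedAddCommGroup E] [NormedSpace ℝ E] [MeasurableSpace E]
  [BorelSpace E] [NormedAddCommGroup F] [NormedSpace ℝ F] {μ : Measure E} [μ.IsAddHaarMeasure]

theorem integrable_smul_fderiv_apply (L : E →L[ℝ] ℝ) (e : E) {h : E → F} (hh : ContDiff ℝ 1 h)
    (hc : HasCompactSupport h) : Integrable (fun v => L v • fderiv ℝ h v e) μ :=
  (L.continuous.smul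
    ((hh.continuous_fderiv one_ne_zero).clm_apply continuous_const)).integrable_of_hasCompactSupport
      (hc.fderiv_apply ℝ e).smul_left

variable [FiniteDimensional ℝ E]

theorem integral_smul_fderiv_apply (L : E →L[ℝ] ℝ) (e : E) {h : E → F} (hh : ContDiff ℝ 1 h)
    (hc : HasCompactSupport h) :
    ∫ v, L v • fderiv ℝ h v e ∂μ = -(L e • ∫ v, h v ∂μ) := by
  have hh_int : Integrable h μ := hh.continuous.integrable_of_hasCompactSupport hc
  have hLh_int : Integrable (fun v => L v • h v) μ :=
    (L.continuous.smul hh.continuous).integrable_of_hasCompactSupport hc.smul_left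
  rw [integral_smul_fderiv_eq_neg_fderiv_smul_of_integrable
    (by simpa only [L.fderiv] using hh_int.fun_smul (L e)) (integrable_smul_fderiv_apply L e hh hc)
    hLh_int (fun v _ => L.differentiableAt) (fun v _ => hh.differentiable one_ne_zero v)]
  simp only [L.fderiv, integral_smul]

theorem integral_fderiv_apply_self_s2 {h : E → F} (hh : ContDiff ℝ 1 h) (hc : HasCompactSupport h) :
    ∫ v, fderiv ℝ h v v ∂μ = -((finrank ℝ E : ℝ) • ∫ v, h v ∂μ) := by
  let b := finBasis ℝ E
  let coord (i : Fin (finrank ℝ E)) : E →L[ℝ] ℝ := LinearMap.toContinuousLinearMap (b.coord i)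
  have fderiv_apply_self_eq_sum (v : E) :
      fderiv ℝ h v v = ∑ i, coord i v • fderiv ℝ h v (b i) := by
    conv_lhs => rw [← b.sum_repr v, map_sum]
    simp [coord]
  simp_rw [fderiv_apply_self_eq_sum]
  rw [integral_finsetSum _ fun i _ => integrable_smul_fderiv_apply (coord i) (b i) hh hc]
  simp_rw [integral_smul_fderiv_apply _ _ hh hc]
  simp [coord, Nat.cast_smul_eq_nsmul ℝ]

end EulerField

section RadialCutoff

variable {E : Type*} [NormedAddCommGroup E] {R : ℝ}

/-- A smooth cutoff, equal to `1` on the ball of radius `R` and to `0` outside the ball of radius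
`√2 R`. It depends on `‖v‖ ^ 2`, which keeps it smooth at the origin, and decreases along rays. -/
noncomputable def radialCutoff (R : ℝ) (v : E) : ℝ :=
  smoothTransition (2 - ‖v‖ ^ 2 / R ^ 2)

theorem radialCutoff_nonneg (R : ℝ) (v : E) : 0 ≤ radialCutoff R v :=
  smoothTransition.nonneg _

theorem radialCutoff_le_one (R : ℝ) (v : E) : radialCutoff R v ≤ 1 :=
  smoothTransition.le_one _

theorem radialCutoff_eq_one {v : E} (hv : ‖v‖ ≤ R) : radialCutoff R v = 1 := by
  have : ‖v‖ ^ 2 / R ^ 2 ≤ 1 := div_le_one_of_le₀ (by gcongr) (sq_nonneg R)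
  exact smoothTransition.one_of_one_le (by linarith)

theorem hasCompactSupport_radialCutoff [ProperSpace E] (hR : 0 < R) :
    HasCompactSupport (radialCutoff R : E → ℝ) := by
  refine HasCompactSupport.intro (isCompact_closedBall 0 (2 * R)) fun v hv => ?_
  have hv : 2 * R < ‖v‖ := by simpa using hv
  have : 2 ≤ ‖v‖ ^ 2 / R ^ 2 := by
    rw [le_div_iff₀ (by positivity)]
    nlinarith
  exact smoothTransition.zero_of_nonpos (by linarith)

variable [InnerProductSpace ℝ E]

theorem contDiff_radialCutoff (R : ℝ) {n : ℕ∞} : ContDiff ℝ n (radialCutoff R : E → ℝ) :=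
  smoothTransition.contDiff.comp (contDiff_const.sub ((contDiff_norm_sq ℝ).div_const _))

theorem fderiv_radialCutoff_apply_self_nonpos (R : ℝ) (v : E) :
    fderiv ℝ (radialCutoff R) v v ≤ 0 := by
  have hinner : HasFDerivAt (fun w : E => 2 - ‖w‖ ^ 2 / R ^ 2) _ v :=
    ((hasFDerivAt_id v).norm_sq.mul_const (R ^ 2)⁻¹).const_sub 2
  have hcutoff : HasFDerivAt (radialCutoff R) _ v :=
    (smoothTransition.contDiff (n := 1).differentiable one_ne_zero _).hasDerivAt.comp_hasFDerivAt
      v hinner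
  have hmono : 0 ≤ deriv smoothTransition (2 - ‖v‖ ^ 2 / R ^ 2) :=
    smoothTransition.monotone.deriv_nonneg
  suffices 0 ≤ deriv smoothTransition (2 - ‖v‖ ^ 2 / R ^ 2) * ((R ^ 2)⁻¹ * (2 * ‖v‖ ^ 2)) by
    simpa [hcutoff.fderiv] using this
  positivity

end RadialCutoff

section EulerInequality

variable {E : Type*} [NormedAddCommGroup E] [InnerProductSpace ℝ E] [FiniteDimensional ℝ E]
  [MeasurableSpace E] [BorelSpace E] {μ : Measure E} [μ.IsAddHaarMeasure] {u g : E → ℝ} {k : ℝ}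

theorem mul_integral_radialCutoff_mul_le (hu : ContDiff ℝ 1 u) (hu_nonneg : ∀ v, 0 ≤ u v)
    (hg : Integrable g μ) (hg_nonneg : ∀ v, 0 ≤ g v)
    (hug : ∀ v, k * u v + fderiv ℝ u v v ≤ g v) {R : ℝ} (hR : 0 < R) :
    (k - finrank ℝ E) * ∫ v, radialCutoff R v * u v ∂μ ≤ ∫ v, g v ∂μ := by
  set h : E → ℝ := fun v => radialCutoff R v * u v
  have hχ : ContDiff ℝ 1 (radialCutoff R : E → ℝ) := contDiff_radialCutoff R
  have hh : ContDiff ℝ 1 h := hχ.mul hu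
  have hh_supp : HasCompactSupport h := (hasCompactSupport_radialCutoff hR).mul_right
  have hh_int : Integrable h μ := hh.continuous.integrable_of_hasCompactSupport hh_supp
  have hDh_int : Integrable (fun v => fderiv ℝ h v v) μ :=
    ((hh.continuous_fderiv one_ne_zero).clm_apply continuous_id).integrable_of_hasCompactSupport
      ((hh_supp.fderiv ℝ).mono fun v hv hzero => hv (by simp [hzero]))
  have hpointwise (v : E) : k * h v + fderiv ℝ h v v ≤ g v := by
    have hDh : fderiv ℝ h v v =
        radialCutoff R v * fderiv ℝ u v v + u v * fderiv ℝ (radialCutoff R) v v := by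
      simp [h, fderiv_fun_mul (hχ.differentiable one_ne_zero v) (hu.differentiable one_ne_zero v)]
    calc k * h v + fderiv ℝ h v v
        = radialCutoff R v * (k * u v + fderiv ℝ u v v)
            + u v * fderiv ℝ (radialCutoff R) v v := by rw [hDh]; ring
      _ ≤ radialCutoff R v * g v + 0 := add_le_add
          (mul_le_mul_of_nonneg_left (hug v) (radialCutoff_nonneg R v))
          (mul_nonpos_of_nonneg_of_nonpos (hu_nonneg v) (fderiv_radialCutoff_apply_self_nonpos R v))
      _ ≤ g v := by
          simpa using mul_le_of_le_one_left (hg_nonneg v) (radialCutoff_le_one R v)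
  calc (k - finrank ℝ E) * ∫ v, h v ∂μ = ∫ v, (k * h v + fderiv ℝ h v v) ∂μ := by
        rw [integral_add (hh_int.const_mul k) hDh_int, integral_const_mul,
          integral_fderiv_apply_self_s2 hh hh_supp, smul_eq_mul]
        ring
    _ ≤ ∫ v, g v ∂μ := integral_mono ((hh_int.const_mul k).add hDh_int) hg hpointwise

theorem mul_setIntegral_ball_le (hk : finrank ℝ E ≤ k) (hu : ContDiff ℝ 1 u)
    (hu_nonneg : ∀ v, 0 ≤ u v) (hg : Integrable g μ) (hg_nonneg : ∀ v, 0 ≤ g v)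
    (hug : ∀ v, k * u v + fderiv ℝ u v v ≤ g v) {R : ℝ} (hR : 0 < R) :
    (k - finrank ℝ E) * ∫ v in Metric.ball 0 R, u v ∂μ ≤ ∫ v, g v ∂μ := by
  have hcut_int : Integrable (fun v => radialCutoff R v * u v) μ :=
    ((contDiff_radialCutoff R (n := 1)).continuous.mul
      hu.continuous).integrable_of_hasCompactSupport (hasCompactSupport_radialCutoff hR).mul_right
  have hball : ∫ v in Metric.ball 0 R, u v ∂μ ≤ ∫ v, radialCutoff R v * u v ∂μ :=
    calc ∫ v in Metric.ball 0 R, u v ∂μ = ∫ v in Metric.ball 0 R, radialCutoff R v * u v ∂μ :=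
          setIntegral_congr_fun measurableSet_ball fun v hv => by
            simp [radialCutoff_eq_one (mem_ball_zero_iff.mp hv).le]
      _ ≤ _ := setIntegral_le_integral hcut_int <| .of_forall fun v =>
          mul_nonneg (radialCutoff_nonneg R v) (hu_nonneg v)
  exact (mul_le_mul_of_nonneg_left hball (sub_nonneg.mpr hk)).trans
    (mul_integral_radialCutoff_mul_le hu hu_nonneg hg hg_nonneg hug hR)

theorem integrable_and_mul_integral_le_of_fderiv_apply_self_le (hk : finrank ℝ E < k)
    (hu : ContDiff ℝ 1 u) (hu_nonneg : ∀ v, 0 ≤ u v) (hg : Integrable g μ)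
    (hg_nonneg : ∀ v, 0 ≤ g v) (hug : ∀ v, k * u v + fderiv ℝ u v v ≤ g v) :
    Integrable u μ ∧ (k - finrank ℝ E) * ∫ v, u v ∂μ ≤ ∫ v, g v ∂μ := by
  have hk_pos : 0 < k - finrank ℝ E := sub_pos.mpr hk
  have hcover : AECover μ atTop (fun n : ℕ => Metric.ball (0 : E) (n + 1)) :=
    aecover_ball (tendsto_atTop_add_const_right _ _ tendsto_natCast_atTop_atTop)
  have hball (n : ℕ) := mul_setIntegral_ball_le hk.le hu hu_nonneg hg hg_nonneg hug
    n.cast_add_one_pos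
  have hu_int : Integrable u μ :=
    hcover.integrable_of_integral_bounded_of_nonneg_ae ((∫ v, g v ∂μ) / (k - finrank ℝ E))
      (fun n => (hu.continuous.continuousOn.integrableOn_compact
        (isCompact_closedBall 0 _)).mono_set Metric.ball_subset_closedBall)
      (.of_forall hu_nonneg) (.of_forall fun n => (le_div_iff₀' hk_pos).mpr (hball n))
  exact ⟨hu_int, le_of_tendsto
    ((hcover.integral_tendsto_of_countably_generated hu_int).const_mul _) (.of_forall hball)⟩

end EulerInequality

/-- The Japanese bracket `⟨v⟩ = (1 + ‖v‖²)^(1/2)`, the radial weight in which all the growth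
conditions are expressed. It is written `⟪v⟫` below, since `⟨v⟩` is an anonymous constructor. -/
noncomputable def japaneseBracket {E : Type*} [NormedAddCommGroup E] (v : E) : ℝ :=
  √(1 + ‖v‖ ^ 2)

local notation "⟪" v "⟫" => japaneseBracket v

section JapaneseBracket

variable {E : Type*} [NormedAddCommGroup E]

theorem japaneseBracket_sq (v : E) : ⟪v⟫ ^ 2 = 1 + ‖v‖ ^ 2 :=
  sq_sqrt (by positivity)

theorem one_le_japaneseBracket (v : E) : 1 ≤ ⟪v⟫ :=
  one_le_sqrt.mpr (le_add_of_nonneg_right (sq_nonneg _))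

theorem japaneseBracket_pos (v : E) : 0 < ⟪v⟫ :=
  one_pos.trans_le (one_le_japaneseBracket v)

theorem japaneseBracket_rpow_pos (v : E) (p : ℝ) : 0 < ⟪v⟫ ^ p :=
  rpow_pos_of_pos (japaneseBracket_pos v) p

theorem japaneseBracket_rpow_sub_two_mul (v : E) (p : ℝ) :
    ⟪v⟫ ^ (p - 2) * ⟪v⟫ ^ 2 = ⟪v⟫ ^ p := by
  rw [← rpow_natCast, ← rpow_add (japaneseBracket_pos v)]
  norm_num

theorem japaneseBracket_rpow_neg_two (v : E) : ⟪v⟫ ^ (-2 : ℝ) = (1 + ‖v‖ ^ 2)⁻¹ := by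
  rw [rpow_neg (japaneseBracket_pos v).le, rpow_two, japaneseBracket_sq]

theorem continuous_japaneseBracket_rpow (p : ℝ) : Continuous (fun v : E => ⟪v⟫ ^ p) :=
  (continuous_sqrt.comp (continuous_const.add (continuous_norm.pow 2))).rpow_const
    fun v => .inl (japaneseBracket_pos v).ne'

variable [InnerProductSpace ℝ E]

theorem contDiff_japaneseBracket_rpow (p : ℝ) {n : WithTop ℕ∞} :
    ContDiff ℝ n (fun v : E => ⟪v⟫ ^ p) :=
  ((contDiff_const.add (contDiff_norm_sq ℝ)).sqrt fun v => by positivity).rpow_const_of_ne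
    fun v => (japaneseBracket_pos v).ne'

theorem fderiv_japaneseBracket_rpow_apply_self (p : ℝ) (v : E) :
    fderiv ℝ (fun w : E => ⟪w⟫ ^ p) v v = p * (⟪v⟫ ^ p - ⟪v⟫ ^ (p - 2)) := by
  have hderiv : HasFDerivAt (fun w : E => ⟪w⟫ ^ p) _ v :=
    (((hasFDerivAt_id v).norm_sq.const_add 1).sqrt (by positivity)).rpow_const
      (.inl (japaneseBracket_pos v).ne')
  have hpos := japaneseBracket_pos v
  have hpow : ⟪v⟫ ^ (p - 1) = ⟪v⟫ ^ (p - 2) * ⟪v⟫ := by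
    rw [← rpow_add_one hpos.ne']; ring_nf
  have hnorm : ‖v‖ ^ 2 = ⟪v⟫ ^ 2 - 1 := by rw [japaneseBracket_sq]; ring
  calc fderiv ℝ (fun w : E => ⟪w⟫ ^ p) v v
      = p * ⟪v⟫ ^ (p - 1) * ((2 * ⟪v⟫)⁻¹ * (2 * ‖v‖ ^ 2)) := by
        rw [hderiv.fderiv]
        simp [japaneseBracket]
    _ = p * (⟪v⟫ ^ (p - 2) * ⟪v⟫ ^ 2 - ⟪v⟫ ^ (p - 2)) := by rw [hpow, hnorm]; field_simp
    _ = p * (⟪v⟫ ^ p - ⟪v⟫ ^ (p - 2)) := by rw [japaneseBracket_rpow_sub_two_mul]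

variable {F : Type*} [NormedAddCommGroup F] [InnerProductSpace ℝ F]

theorem fderiv_japaneseBracket_rpow_mul_norm_sq_apply_self (p : ℝ) {φ : E → F} {v : E}
    (hφ : DifferentiableAt ℝ φ v) :
    fderiv ℝ (fun w => ⟪w⟫ ^ p * ‖φ w‖ ^ 2) v v =
      p * (⟪v⟫ ^ p - ⟪v⟫ ^ (p - 2)) * ‖φ v‖ ^ 2
        + ⟪v⟫ ^ p * (2 * inner ℝ (φ v) (fderiv ℝ φ v v)) := by
  rw [fderiv_fun_mul ((contDiff_japaneseBracket_rpow p (n := 1)).differentiable one_ne_zero v)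
    (hφ.norm_sq ℝ)]
  simp [fderiv_japaneseBracket_rpow_apply_self, hφ.hasFDerivAt.norm_sq.fderiv]
  ring

theorem two_mul_inner_clm_apply_self_le {a : ℝ} (ha : 0 < a) (x : F) (L : E →L[ℝ] F) (v : E) :
    2 * inner ℝ x (L v) ≤ a * ‖x‖ ^ 2 + a⁻¹ * (⟪v⟫ ^ 2 * ‖L‖ ^ 2) := by
  have hLv : ‖L v‖ ^ 2 ≤ ⟪v⟫ ^ 2 * ‖L‖ ^ 2 :=
    calc ‖L v‖ ^ 2 ≤ (‖L‖ * ‖v‖) ^ 2 := by gcongr; exact L.le_opNorm v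
      _ = ‖v‖ ^ 2 * ‖L‖ ^ 2 := by ring
      _ ≤ ⟪v⟫ ^ 2 * ‖L‖ ^ 2 := by
        rw [japaneseBracket_sq]
        gcongr
        linarith
  calc 2 * inner ℝ x (L v) ≤ 2 * (‖x‖ * ‖L v‖) := by gcongr; exact real_inner_le_norm _ _
    _ ≤ a * ‖x‖ ^ 2 + a⁻¹ * ‖L v‖ ^ 2 := by
      have := mul_nonneg (inv_nonneg.mpr ha.le) (sq_nonneg (a * ‖x‖ - ‖L v‖))
      have hexpand : a⁻¹ * (a * ‖x‖ - ‖L v‖) ^ 2 =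
          a * ‖x‖ ^ 2 + a⁻¹ * ‖L v‖ ^ 2 - 2 * (‖x‖ * ‖L v‖) := by field_simp; ring
      linarith
    _ ≤ a * ‖x‖ ^ 2 + a⁻¹ * (⟪v⟫ ^ 2 * ‖L‖ ^ 2) := by gcongr

end JapaneseBracket

theorem exists_rpow_le_mul_rpow_add_mul_rpow {p r ε : ℝ} (hrp : r < p) (hε : 0 < ε) (s : ℝ) :
    ∃ K : ℝ, 0 ≤ K ∧ ∀ x : ℝ, 1 ≤ x → x ^ r ≤ ε * x ^ p + K * x ^ s := by
  obtain ⟨X, hX⟩ : ∃ X, ∀ x ≥ X, x ^ (-(p - r)) ≤ ε := eventually_atTop.mp <|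
    (tendsto_rpow_neg_atTop (sub_pos.mpr hrp)).eventually_le_const hε
  have hcont : ContinuousOn (fun x : ℝ => x ^ (r - s)) (Set.Icc 1 X) := fun x hx =>
    (continuousAt_rpow_const x _ (.inl (one_pos.trans_le hx.1).ne')).continuousWithinAt
  obtain ⟨K, hK⟩ := isCompact_Icc.bddAbove_image hcont
  refine ⟨max K 0, le_max_right _ _, fun x hx => ?_⟩
  have hx_pos : 0 < x := one_pos.trans_le hx
  rcases le_total X x with hXx | hxX
  · calc x ^ r = x ^ (-(p - r)) * x ^ p := by rw [← rpow_add hx_pos]; ring_nf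
      _ ≤ ε * x ^ p := by gcongr; exact hX x hXx
      _ ≤ ε * x ^ p + max K 0 * x ^ s := le_add_of_nonneg_right (by positivity)
  · calc x ^ r = x ^ (r - s) * x ^ s := by rw [← rpow_add hx_pos]; ring_nf
      _ ≤ max K 0 * x ^ s := by
        gcongr; exact (hK (Set.mem_image_of_mem _ ⟨hx, hxX⟩)).trans (le_max_left _ _)
      _ ≤ ε * x ^ p + max K 0 * x ^ s := le_add_of_nonneg_left (by positivity)

theorem integrable_and_integral_mul_le_of_weight_le {α : Type*} {_ : MeasurableSpace α}
    {μ : Measure α} {f w m : α → ℝ} {c : ℝ} (hf : AEStronglyMeasurable f μ)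
    (hf_nonneg : ∀ x, 0 ≤ f x) (hw : AEStronglyMeasurable w μ) (hw_nonneg : ∀ x, 0 ≤ w x)
    (hwm : ∀ x, w x ≤ c * m x) (hfm : Integrable (fun x => f x * m x) μ) :
    Integrable (fun x => f x * w x) μ ∧ ∫ x, f x * w x ∂μ ≤ c * ∫ x, f x * m x ∂μ := by
  have hle (x : α) : f x * w x ≤ c * (f x * m x) :=
    (mul_le_mul_of_nonneg_left (hwm x) (hf_nonneg x)).trans_eq (by ring)
  have hint : Integrable (fun x => f x * w x) μ := (hfm.const_mul c).mono' (hf.mul hw) <|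
    .of_forall fun x => (norm_of_nonneg (mul_nonneg (hf_nonneg x) (hw_nonneg x))).trans_le (hle x)
  exact ⟨hint, (integral_mono hint (hfm.const_mul c) hle).trans_eq (integral_const_mul c _)⟩

section Hardy

variable {E : Type*} [NormedAddCommGroup E] [InnerProductSpace ℝ E] {F : Type*}
  [NormedAddCommGroup F] [InnerProductSpace ℝ F]

theorem mul_japaneseBracket_rpow_mul_norm_sq_add_fderiv_le {n q σ a K : ℝ} (ha : 0 < a)
    (haq : n + q + a = 2)
    (hK : ∀ x : ℝ, 1 ≤ x → (2 - q) * x ^ (q - 4) ≤ a / 4 * x ^ (q - 2) + K * x ^ (q - σ))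
    {φ : E → F} {v : E} (hφ : DifferentiableAt ℝ φ v) :
    (n + a / 4) * (⟪v⟫ ^ (q - 2) * ‖φ v‖ ^ 2)
        + fderiv ℝ (fun w => ⟪w⟫ ^ (q - 2) * ‖φ w‖ ^ 2) v v ≤
      (a / 2)⁻¹ * (⟪v⟫ ^ q * ‖fderiv ℝ φ v‖ ^ 2) + K * (⟪v⟫ ^ (q - σ) * ‖φ v‖ ^ 2) := by
  have hcross : ⟪v⟫ ^ (q - 2) * (2 * inner ℝ (φ v) (fderiv ℝ φ v v)) ≤
      a / 2 * (⟪v⟫ ^ (q - 2) * ‖φ v‖ ^ 2) + (a / 2)⁻¹ * (⟪v⟫ ^ q * ‖fderiv ℝ φ v‖ ^ 2) := by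
    refine (mul_le_mul_of_nonneg_left (two_mul_inner_clm_apply_self_le (half_pos ha) (φ v)
      (fderiv ℝ φ v) v) (japaneseBracket_rpow_pos v _).le).trans_eq ?_
    rw [← japaneseBracket_rpow_sub_two_mul v q]
    ring
  have hlower : (2 - q) * ⟪v⟫ ^ (q - 4) * ‖φ v‖ ^ 2 ≤
      (a / 4 * ⟪v⟫ ^ (q - 2) + K * ⟪v⟫ ^ (q - σ)) * ‖φ v‖ ^ 2 := by
    gcongr
    exact hK _ (one_le_japaneseBracket v)
  rw [fderiv_japaneseBracket_rpow_mul_norm_sq_apply_self _ hφ, show q - 2 - 2 = q - 4 by ring]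
  obtain rfl : n = 2 - q - a := by linarith
  linarith

variable [FiniteDimensional ℝ E] [MeasurableSpace E] [BorelSpace E] {μ : Measure E}
  [μ.IsAddHaarMeasure] {q : ℝ}

variable (F μ) in
theorem exists_weighted_hardy (hq : finrank ℝ E + q < 2) (σ : ℝ) :
    ∃ C : ℝ, 0 ≤ C ∧ ∀ φ : E → F, ContDiff ℝ 1 φ →
      Integrable (fun v => ⟪v⟫ ^ q * ‖fderiv ℝ φ v‖ ^ 2) μ →
      Integrable (fun v => ⟪v⟫ ^ (q - σ) * ‖φ v‖ ^ 2) μ →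
      Integrable (fun v => ⟪v⟫ ^ (q - 2) * ‖φ v‖ ^ 2) μ ∧
        ∫ v, ⟪v⟫ ^ (q - 2) * ‖φ v‖ ^ 2 ∂μ ≤
          C * (∫ v, ⟪v⟫ ^ q * ‖fderiv ℝ φ v‖ ^ 2 ∂μ
            + ∫ v, ⟪v⟫ ^ (q - σ) * ‖φ v‖ ^ 2 ∂μ) := by
  obtain ⟨a, ha, haq⟩ : ∃ a : ℝ, 0 < a ∧ finrank ℝ E + q + a = 2 :=
    ⟨2 - (finrank ℝ E + q), sub_pos.mpr hq, by ring⟩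
  have hq_lt : 0 < 2 - q := by linarith [(finrank ℝ E).cast_nonneg (α := ℝ)]
  obtain ⟨K, hK_nonneg, hK⟩ := exists_rpow_le_mul_rpow_add_mul_rpow
    (p := q - 2) (r := q - 4) (ε := a / 4 / (2 - q)) (by linarith) (by positivity) (q - σ)
  have hK' (x : ℝ) (hx : 1 ≤ x) :
      (2 - q) * x ^ (q - 4) ≤ a / 4 * x ^ (q - 2) + (2 - q) * K * x ^ (q - σ) :=
    (mul_le_mul_of_nonneg_left (hK x hx) hq_lt.le).trans_eq (by field_simp)
  set A := max (a / 2)⁻¹ ((2 - q) * K)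
  have hA : 0 ≤ A := le_max_of_le_left (by positivity)
  refine ⟨A / (a / 4), div_nonneg hA (by positivity), fun φ hφ hD hS => ?_⟩
  have hpointwise (v : E) : (finrank ℝ E + a / 4) * (⟪v⟫ ^ (q - 2) * ‖φ v‖ ^ 2)
      + fderiv ℝ (fun w => ⟪w⟫ ^ (q - 2) * ‖φ w‖ ^ 2) v v ≤
        A * (⟪v⟫ ^ q * ‖fderiv ℝ φ v‖ ^ 2 + ⟪v⟫ ^ (q - σ) * ‖φ v‖ ^ 2) := by
    have := japaneseBracket_pos v
    refine (mul_japaneseBracket_rpow_mul_norm_sq_add_fderiv_le ha haq hK'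
      (hφ.differentiable one_ne_zero v)).trans ?_
    rw [mul_add]
    gcongr
    exacts [le_max_left _ _, le_max_right _ _]
  obtain ⟨hint, hle⟩ := integrable_and_mul_integral_le_of_fderiv_apply_self_le (by linarith)
    ((contDiff_japaneseBracket_rpow _).mul (hφ.norm_sq ℝ))
    (fun v => by have := japaneseBracket_pos v; positivity) ((hD.add hS).const_mul A)
    (fun v => by have := japaneseBracket_pos v; simp only [Pi.add_apply]; positivity) hpointwise
  refine ⟨hint, ?_⟩
  simp only [Pi.add_apply, add_sub_cancel_left, integral_const_mul, integral_add hD hS] at hle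
  rwa [div_mul_eq_mul_div, le_div_iff₀' (by positivity)]

variable (F μ) in
theorem exists_hardy_of_comparable_weight {A B : ℝ} (hq : finrank ℝ E + q < 2) (hA : 0 < A)
    (hB : 0 ≤ B) (σ : ℝ) :
    ∃ C : ℝ, 0 ≤ C ∧ ∀ m : E → ℝ, AEStronglyMeasurable m μ →
      (∀ v, A * ⟪v⟫ ^ q ≤ m v ∧ m v ≤ B * ⟪v⟫ ^ q) →
      ∀ φ : E → F, ContDiff ℝ 1 φ →
        Integrable (fun v => ‖fderiv ℝ φ v‖ ^ 2 * m v) μ →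
        Integrable (fun v => ⟪v⟫ ^ (-σ) * ‖φ v‖ ^ 2 * m v) μ →
        Integrable (fun v => ⟪v⟫ ^ (-2 : ℝ) * ‖φ v‖ ^ 2 * m v) μ ∧
          ∫ v, ⟪v⟫ ^ (-2 : ℝ) * ‖φ v‖ ^ 2 * m v ∂μ ≤
            C * (∫ v, ‖fderiv ℝ φ v‖ ^ 2 * m v ∂μ + ∫ v, ⟪v⟫ ^ (-σ) * ‖φ v‖ ^ 2 * m v ∂μ) := by
  obtain ⟨C, hC, hardy⟩ := exists_weighted_hardy F μ hq σ
  refine ⟨B * (C * A⁻¹), by positivity, fun m hm hm_bounds φ hφ hD hS => ?_⟩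
  have hpos := japaneseBracket_pos (E := E)
  have hw : AEStronglyMeasurable (fun v : E => ⟪v⟫ ^ q) μ :=
    (continuous_japaneseBracket_rpow q).aestronglyMeasurable
  have hw_nonneg (v : E) : 0 ≤ ⟪v⟫ ^ q := rpow_nonneg (hpos v).le q
  have hw_le (v : E) : ⟪v⟫ ^ q ≤ A⁻¹ * m v := (le_inv_mul_iff₀ hA).mpr (hm_bounds v).1
  have hφ_meas (τ : ℝ) : AEStronglyMeasurable (fun v => ⟪v⟫ ^ (-τ) * ‖φ v‖ ^ 2) μ :=
    ((continuous_japaneseBracket_rpow _).mul (hφ.continuous.norm.pow 2)).aestronglyMeasurable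
  have hφ_nonneg (τ : ℝ) (v : E) : 0 ≤ ⟪v⟫ ^ (-τ) * ‖φ v‖ ^ 2 := by
    have := hpos v
    positivity
  have hsplit (τ : ℝ) (v : E) :
      ⟪v⟫ ^ (q - τ) * ‖φ v‖ ^ 2 = ⟪v⟫ ^ (-τ) * ‖φ v‖ ^ 2 * ⟪v⟫ ^ q := by
    rw [sub_eq_neg_add, rpow_add (hpos v)]
    ring
  obtain ⟨hD', hD'_le⟩ := integrable_and_integral_mul_le_of_weight_le
    (f := fun v => ‖fderiv ℝ φ v‖ ^ 2)
    ((hφ.continuous_fderiv one_ne_zero).norm.pow 2).aestronglyMeasurable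
    (fun v => sq_nonneg _) hw hw_nonneg hw_le hD
  obtain ⟨hS', hS'_le⟩ := integrable_and_integral_mul_le_of_weight_le
    (hφ_meas σ) (hφ_nonneg σ) hw hw_nonneg hw_le hS
  have hardy_φ := hardy φ hφ
  simp only [hsplit, mul_comm (japaneseBracket _ ^ q)] at hardy_φ
  obtain ⟨hH, hH_le⟩ := hardy_φ hD' hS'
  obtain ⟨hint, hle⟩ := integrable_and_integral_mul_le_of_weight_le (hφ_meas 2) (hφ_nonneg 2) hm
    (fun v => (mul_nonneg hA.le (hw_nonneg v)).trans (hm_bounds v).1)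
    (fun v => (hm_bounds v).2) hH
  refine ⟨hint, hle.trans ?_⟩
  rw [mul_assoc B, mul_assoc C, mul_add A⁻¹]
  gcongr
  exact hH_le.trans (by gcongr)

end Hardy

section EnergyNorm

variable {E F : Type*} [NormedAddCommGroup E] [InnerProductSpace ℝ E] [MeasurableSpace E]
  [NormedAddCommGroup F] [InnerProductSpace ℝ F]

/-- The norm `(∫ |∇(ψ/M)|² M² + ∫ ⟨v⟩^(-τ) |ψ|²)^(1/2)`: the paper's `‖·‖_{H₀}` is the case `τ = 2`
and `‖·‖_*` the case `τ = σ`. Each integral is `0` when its integrand is not integrable. -/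
noncomputable def energyNorm (μ : Measure E) (M : E → ℝ) (τ : ℝ) (ψ : E → F) : ℝ :=
  √((∫ v, ‖fderiv ℝ (fun w => (M w)⁻¹ • ψ w) v‖ ^ 2 * M v ^ 2 ∂μ)
    + ∫ v, ⟪v⟫ ^ (-τ) * ‖ψ v‖ ^ 2 ∂μ)

theorem energyNorm_le_energyNorm {μ : Measure E} {M : E → ℝ} {τ τ' : ℝ} {ψ : E → F} (hτ : τ ≤ τ')
    (hψ : Integrable (fun v => ⟪v⟫ ^ (-τ) * ‖ψ v‖ ^ 2) μ) :
    energyNorm μ M τ' ψ ≤ energyNorm μ M τ ψ := by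
  refine sqrt_le_sqrt (add_le_add_right (integral_mono_of_nonneg (.of_forall fun v => ?_) hψ
    (.of_forall fun v => ?_)) _)
  · have := japaneseBracket_pos v
    dsimp only [Pi.zero_apply]
    positivity
  · dsimp only
    gcongr
    exact one_le_japaneseBracket v

variable [FiniteDimensional ℝ E] [BorelSpace E]

variable (F) in
theorem exists_integral_norm_sq_le_energyNorm_sq (μ : Measure E) [μ.IsAddHaarMeasure]
    {γ C₁ : ℝ} (hγ : finrank ℝ E < 2 * γ + 2) (hC₁ : 0 < C₁) (C₂ σ : ℝ) :
    ∃ L : ℝ, 0 ≤ L ∧ ∀ M : E → ℝ, ContDiff ℝ 1 M →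
      (∀ v, C₁ * ⟪v⟫ ^ (-γ) ≤ M v ∧ M v ≤ C₂ * ⟪v⟫ ^ (-γ)) →
      ∀ ψ : E → F, ContDiff ℝ 1 ψ →
        Integrable (fun v => ‖fderiv ℝ (fun w => (M w)⁻¹ • ψ w) v‖ ^ 2 * M v ^ 2) μ →
        Integrable (fun v => ⟪v⟫ ^ (-σ) * ‖ψ v‖ ^ 2) μ →
        Integrable (fun v => ⟪v⟫ ^ (-2 : ℝ) * ‖ψ v‖ ^ 2) μ ∧
          ∫ v, ⟪v⟫ ^ (-2 : ℝ) * ‖ψ v‖ ^ 2 ∂μ ≤ L * energyNorm μ M σ ψ ^ 2 := by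
  obtain ⟨L, hL, hardy⟩ := exists_hardy_of_comparable_weight F μ (q := -(2 * γ)) (A := C₁ ^ 2)
    (by linarith) (by positivity) (sq_nonneg C₂) σ
  refine ⟨L, hL, fun M hM hM_bounds ψ hψ hD hS => ?_⟩
  have hpos := japaneseBracket_pos (E := E)
  have hM_pos (v : E) : 0 < M v :=
    (mul_pos hC₁ (rpow_pos_of_pos (hpos v) _)).trans_le (hM_bounds v).1
  have hpow (v : E) : ⟪v⟫ ^ (-(2 * γ)) = (⟪v⟫ ^ (-γ)) ^ 2 := by
    rw [← rpow_natCast, ← rpow_mul (hpos v).le]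
    ring_nf
  have hM_sq_bounds (v : E) :
      C₁ ^ 2 * ⟪v⟫ ^ (-(2 * γ)) ≤ M v ^ 2 ∧ M v ^ 2 ≤ C₂ ^ 2 * ⟪v⟫ ^ (-(2 * γ)) := by
    have := hpos v
    rw [hpow, ← mul_pow, ← mul_pow]
    exact ⟨pow_le_pow_left₀ (by positivity) (hM_bounds v).1 2,
      pow_le_pow_left₀ (hM_pos v).le (hM_bounds v).2 2⟩
  have hψ_eq (τ : ℝ) (v : E) : ⟪v⟫ ^ (-τ) * ‖ψ v‖ ^ 2 =
      ⟪v⟫ ^ (-τ) * ‖(M v)⁻¹ • ψ v‖ ^ 2 * M v ^ 2 := by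
    have := (hM_pos v).ne'
    rw [norm_smul, mul_pow, norm_inv, inv_pow, norm_eq_abs, sq_abs]
    field_simp
  rw [energyNorm, sq_sqrt (add_nonneg (integral_nonneg fun v => by positivity)
    (integral_nonneg fun v => by have := hpos v; positivity))]
  simp only [hψ_eq] at hS ⊢
  exact hardy _ (hM.continuous.pow 2).aestronglyMeasurable hM_sq_bounds _
    ((hM.inv fun v => (hM_pos v).ne').smul hψ) hD hS

variable (F) in
theorem norm_equivalence_general (μ : Measure E) [μ.IsAddHaarMeasure] {γ σ C₁ : ℝ}
    (hγ : finrank ℝ E < 2 * γ + 2) (hσ : 2 ≤ σ) (hC₁ : 0 < C₁) (C₂ : ℝ) :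
    ∃ c : ℝ, 0 < c ∧ ∀ M : E → ℝ, ContDiff ℝ 1 M →
      (∀ v, C₁ * ⟪v⟫ ^ (-γ) ≤ M v ∧ M v ≤ C₂ * ⟪v⟫ ^ (-γ)) →
      ∀ ψ : E → F, ContDiff ℝ 1 ψ →
        Integrable (fun v => ‖fderiv ℝ (fun w => (M w)⁻¹ • ψ w) v‖ ^ 2 * M v ^ 2) μ →
        Integrable (fun v => ⟪v⟫ ^ (-σ) * ‖ψ v‖ ^ 2) μ →
        Integrable (fun v => ⟪v⟫ ^ (-2 : ℝ) * ‖ψ v‖ ^ 2) μ ∧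
          c * energyNorm μ M 2 ψ ≤ energyNorm μ M σ ψ ∧
          energyNorm μ M σ ψ ≤ energyNorm μ M 2 ψ := by
  obtain ⟨L, hL, hardy⟩ := exists_integral_norm_sq_le_energyNorm_sq F μ hγ hC₁ C₂ σ
  refine ⟨(√(1 + L))⁻¹, by positivity, fun M hM hM_bounds ψ hψ hD hS => ?_⟩
  obtain ⟨hint, hle⟩ := hardy M hM hM_bounds ψ hψ hD hS
  refine ⟨hint, ?_, energyNorm_le_energyNorm hσ hint⟩
  have hdirichlet_le : ∫ v, ‖fderiv ℝ (fun w => (M w)⁻¹ • ψ w) v‖ ^ 2 * M v ^ 2 ∂μ ≤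
      energyNorm μ M σ ψ ^ 2 := by
    have hS_nonneg : 0 ≤ ∫ v, ⟪v⟫ ^ (-σ) * ‖ψ v‖ ^ 2 ∂μ :=
      integral_nonneg fun v => by have := japaneseBracket_pos v; positivity
    rw [energyNorm, sq_sqrt (add_nonneg (integral_nonneg fun v => by positivity) hS_nonneg)]
    exact le_add_of_nonneg_right hS_nonneg
  rw [inv_mul_le_iff₀ (by positivity)]
  calc energyNorm μ M 2 ψ ≤ √((1 + L) * energyNorm μ M σ ψ ^ 2) := sqrt_le_sqrt (by linarith)
    _ = √(1 + L) * energyNorm μ M σ ψ := by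
      rw [sqrt_mul (by positivity), sqrt_sq (show 0 ≤ energyNorm μ M σ ψ from sqrt_nonneg _)]

end EnergyNorm

/-- **Equivalence of the norms `‖·‖_{H₀}` and `‖·‖_*`** (Lemma 2.2 of the paper). -/
theorem norm_equivalence (d : ℕ) (hd : 1 ≤ d) (γ C₁ C₂ σ : ℝ)
    (hγ₁ : (d : ℝ) / 2 < γ) (hγ₂ : γ < ((d : ℝ) + 4) / 2)
    (hC₁ : 0 < C₁) (hC₁₂ : C₁ ≤ C₂)
    (hσ₁ : 2 < σ) (hσ₂ : σ < 2 * γ - d + 4) :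
    ∃ c₁ c₂ : ℝ, 0 < c₁ ∧ 0 < c₂ ∧
      ∀ M : EuclideanSpace ℝ (Fin d) → ℝ, (∀ v, 0 < M v) → ContDiff ℝ 1 M →
        (∀ v, C₁ * Real.sqrt (1 + ‖v‖ ^ 2) ^ (-γ) ≤ M v ∧
              M v ≤ C₂ * Real.sqrt (1 + ‖v‖ ^ 2) ^ (-γ)) →
        Integrable (fun v => (M v) ^ 2) →
        ∀ ψ : EuclideanSpace ℝ (Fin d) → ℂ, ContDiff ℝ 1 ψ →
          Integrable (fun v => ‖fderiv ℝ (fun w => ψ w / (M w : ℂ)) v‖ ^ 2 * (M v) ^ 2) →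
          Integrable (fun v => Real.sqrt (1 + ‖v‖ ^ 2) ^ (-σ) * ‖ψ v‖ ^ 2) →
          Integrable (fun v => ‖ψ v‖ ^ 2 / (1 + ‖v‖ ^ 2)) ∧
          c₁ * Real.sqrt ((∫ v, ‖fderiv ℝ (fun w => ψ w / (M w : ℂ)) v‖ ^ 2 * (M v) ^ 2) +
                ∫ v, ‖ψ v‖ ^ 2 / (1 + ‖v‖ ^ 2)) ≤
              Real.sqrt ((∫ v, ‖fderiv ℝ (fun w => ψ w / (M w : ℂ)) v‖ ^ 2 * (M v) ^ 2) +
                ∫ v, Real.sqrt (1 + ‖v‖ ^ 2) ^ (-σ) * ‖ψ v‖ ^ 2) ∧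
          Real.sqrt ((∫ v, ‖fderiv ℝ (fun w => ψ w / (M w : ℂ)) v‖ ^ 2 * (M v) ^ 2) +
                ∫ v, Real.sqrt (1 + ‖v‖ ^ 2) ^ (-σ) * ‖ψ v‖ ^ 2) ≤
              c₂ * Real.sqrt ((∫ v, ‖fderiv ℝ (fun w => ψ w / (M w : ℂ)) v‖ ^ 2 * (M v) ^ 2) +
                ∫ v, ‖ψ v‖ ^ 2 / (1 + ‖v‖ ^ 2)) := by
  obtain ⟨c, hc, hequiv⟩ := norm_equivalence_general ℂ
    (volume : Measure (EuclideanSpace ℝ (Fin d))) (γ := γ) (σ := σ)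
    (by rw [finrank_euclideanSpace_fin]; linarith) hσ₁.le hC₁ C₂
  simp only [energyNorm, japaneseBracket_rpow_neg_two, ← div_eq_inv_mul, Complex.real_smul,
    Complex.ofReal_inv] at hequiv
  exact ⟨c, 1, hc, one_pos, fun M _ hM hM_bounds _ ψ hψ hD hS => by
    simpa only [one_mul, japaneseBracket] using hequiv M hM hM_bounds ψ hψ hD hS⟩
end

section
/- There exists a constant C₀ > 0, independent of η, such that for every η > 0 and every smooth compactly supported ψ : ℝ^d → ℂ one has ∫_{ℝ^d} |ψ(v)|² dv ≤ C₀² η^{−2/3} ( ∫_{ℝ^d} |∇(ψ/M)|² M² dv + ∫_{ℝ^d} |ψ|² ⟨v⟩^{−2} dv + η ∫_{ℝ^d} |v₁| |ψ|² dv ). -/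
open MeasureTheory Real

/-!
At scale `s = η^{-1/3}` a point `v` falls into one of three regions. Where `|v₁| ≥ s` the drift term
controls `|ψ|²`, and where `⟨v⟩ ≤ s` the term `|ψ|² ⟨v⟩⁻²` does. Elsewhere one moves from `v` by `s`
in the direction `± e₁` pointing away from the hyperplane `v₁ = 0`: this ends in the first region,
while `⟨v⟩` grows at most by a factor `2`, so that `M` decreases at most by a constant factor and
the increment of `ψ / M` is paid for by the gradient term. Integrating in `v`, translation
invariance removes the shifts.
-/

open scoped InnerProductSpace

section Interval

theorem sq_intervalIntegral_le {a b : ℝ} (hab : a ≤ b) {h : ℝ → ℝ}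
    (hh : IntervalIntegrable h volume a b)
    (hh2 : IntervalIntegrable (fun t ↦ h t ^ 2) volume a b) :
    (∫ t in a..b, h t) ^ 2 ≤ (b - a) * ∫ t in a..b, h t ^ 2 := by
  rcases hab.eq_or_lt with rfl | hlt
  · simp
  have hpos : 0 < b - a := sub_pos.2 hlt
  have jensen : (⨍ t in a..b, h t) ^ 2 ≤ ⨍ t in a..b, h t ^ 2 := by
    rw [intervalIntegrable_iff] at hh hh2
    refine even_two.convexOn_pow.map_set_average_le (continuous_pow 2).continuousOn isClosed_univ
      ?_ ?_ (by simp) hh hh2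
    all_goals simp [Set.uIoc_of_le hab, hlt]
  rw [interval_average_eq_div, interval_average_eq_div, div_pow,
    div_le_div_iff₀ (by positivity) hpos] at jensen
  nlinarith

variable {E F : Type*} [NormedAddCommGroup E] [NormedSpace ℝ E]
  [NormedAddCommGroup F] [NormedSpace ℝ F]

theorem norm_sub_le_integral_norm_fderiv {f : E → F} (hf : ContDiff ℝ 1 f) {e : E} (he : ‖e‖ ≤ 1)
    {s : ℝ} (hs : 0 ≤ s) (v : E) :
    ‖f (v + s • e) - f v‖ ≤ ∫ t in (0 : ℝ)..s, ‖fderiv ℝ f (v + t • e)‖ := by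
  have hderiv (t : ℝ) : HasDerivAt (fun t : ℝ ↦ f (v + t • e)) (fderiv ℝ f (v + t • e) e) t := by
    have hline : HasDerivAt (fun t : ℝ ↦ v + t • e) e t := by
      simpa using ((hasDerivAt_id t).smul_const e).const_add v
    exact (hf.differentiable one_ne_zero _).hasFDerivAt.comp_hasDerivAt t hline
  have := hf.continuous_fderiv one_ne_zero
  have key := norm_sub_le_integral_of_norm_deriv_le_of_le hs
    (fun t _ ↦ (hderiv t).continuousAt.continuousWithinAt)
    (fun t _ ↦ (hderiv t).differentiableAt.differentiableWithinAt)
    (.of_forall fun t _ ↦ by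
      simpa [(hderiv t).deriv] using (fderiv ℝ f (v + t • e)).le_of_opNorm_le_of_le le_rfl he)
    (Continuous.intervalIntegrable (by fun_prop) _ _)
  simpa using key

theorem norm_sq_le_add_integral_norm_fderiv_sq {f : E → F} (hf : ContDiff ℝ 1 f) {e : E}
    (he : ‖e‖ ≤ 1) {s : ℝ} (hs : 0 ≤ s) (v : E) :
    ‖f v‖ ^ 2 ≤ 2 * ‖f (v + s • e)‖ ^ 2
      + 2 * (s * ∫ t in (0 : ℝ)..s, ‖fderiv ℝ f (v + t • e)‖ ^ 2) := by
  have := hf.continuous_fderiv one_ne_zero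
  have increment : ‖f (v + s • e) - f v‖ ^ 2 ≤
      s * ∫ t in (0 : ℝ)..s, ‖fderiv ℝ f (v + t • e)‖ ^ 2 := by
    calc ‖f (v + s • e) - f v‖ ^ 2
        ≤ (∫ t in (0 : ℝ)..s, ‖fderiv ℝ f (v + t • e)‖) ^ 2 := by
          gcongr
          exact norm_sub_le_integral_norm_fderiv hf he hs v
      _ ≤ (s - 0) * ∫ t in (0 : ℝ)..s, ‖fderiv ℝ f (v + t • e)‖ ^ 2 :=
          sq_intervalIntegral_le hs (Continuous.intervalIntegrable (by fun_prop) _ _)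
            (Continuous.intervalIntegrable (by fun_prop) _ _)
      _ = s * ∫ t in (0 : ℝ)..s, ‖fderiv ℝ f (v + t • e)‖ ^ 2 := by rw [sub_zero]
  calc ‖f v‖ ^ 2
      ≤ (‖f (v + s • e)‖ + ‖f (v + s • e) - f v‖) ^ 2 := by
        gcongr
        exact norm_le_norm_add_norm_sub _ _
    _ ≤ 2 * (‖f (v + s • e)‖ ^ 2 + ‖f (v + s • e) - f v‖ ^ 2) := add_sq_le
    _ ≤ _ := by linarith

end Interval

section Translation

variable {α G F : Type*} [MeasurableSpace α] [AddGroup G] [MeasurableSpace G] [MeasurableAdd₂ G]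
  [NormedAddCommGroup F] {ν : Measure α} [IsFiniteMeasure ν]
  {μ : Measure G} [SFinite μ] [μ.IsAddRightInvariant] {g : G → F} {c : α → G}

theorem integrable_comp_add_prod (hg : Integrable g μ) (hc : Measurable c) :
    Integrable (fun p : α × G ↦ g (p.2 + c p.1)) (ν.prod μ) := by
  have shear : MeasurePreserving (fun p : α × G ↦ (p.1, p.2 + c p.1)) (ν.prod μ) (ν.prod μ) :=
    (MeasurePreserving.id ν).skew_product (g := fun a v ↦ v + c a)
      (measurable_snd.add (hc.comp measurable_fst))
      (.of_forall fun a ↦ map_add_right_eq_self μ (c a))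
  exact shear.integrable_comp_of_integrable (hg.comp_snd ν)

theorem integrable_integral_comp_add [NormedSpace ℝ F] (hg : Integrable g μ) (hc : Measurable c) :
    Integrable (fun v ↦ ∫ a, g (v + c a) ∂ν) μ :=
  (integrable_comp_add_prod hg hc).integral_prod_right

theorem integral_integral_comp_add [NormedSpace ℝ F] [CompleteSpace F] (hg : Integrable g μ)
    (hc : Measurable c) :
    ∫ v, ∫ a, g (v + c a) ∂ν ∂μ = ν.real Set.univ • ∫ v, g v ∂μ := by
  rw [← integral_integral_swap (f := fun a v ↦ g (v + c a)) (integrable_comp_add_prod hg hc)]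
  simp only [integral_add_right_eq_self, integral_const]

end Translation

section RayMajorant

variable {E : Type*} [AddCommGroup E] [Module ℝ E]

/-- The bound at `v` obtained by travelling from `v` for a time `s` in the direction `e`:
`P` is evaluated at the endpoint, `D` is integrated along the way. The weight `s⁻¹` comes from
`s ≤ |v₁|` at the endpoint, the weight `s` from the Cauchy-Schwarz inequality along the way. -/
noncomputable def rayMajorant (s : ℝ) (e : E) (P D : E → ℝ) (v : E) : ℝ :=
  s⁻¹ * P (v + s • e) + s * ∫ t in (0 : ℝ)..s, D (v + t • e)

theorem rayMajorant_nonneg {s : ℝ} (hs : 0 ≤ s) (e : E) {P D : E → ℝ} (hP : ∀ v, 0 ≤ P v)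
    (hD : ∀ v, 0 ≤ D v) (v : E) : 0 ≤ rayMajorant s e P D v :=
  add_nonneg (mul_nonneg (inv_nonneg.2 hs) (hP _))
    (mul_nonneg hs (intervalIntegral.integral_nonneg hs fun _ _ ↦ hD _))

variable [TopologicalSpace E] [ContinuousSMul ℝ E] [MeasurableSpace E] [BorelSpace E]
  [MeasurableAdd₂ E] {μ : Measure E} [SFinite μ] [μ.IsAddRightInvariant]
  {s : ℝ} {P D : E → ℝ}

theorem integrable_rayMajorant (hs : 0 ≤ s) (e : E) (hP : Integrable P μ) (hD : Integrable D μ) :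
    Integrable (rayMajorant s e P D) μ := by
  refine ((hP.comp_add_right (s • e)).const_mul s⁻¹).add (Integrable.const_mul ?_ s)
  simp only [intervalIntegral.integral_of_le hs]
  exact integrable_integral_comp_add hD (by fun_prop)

theorem integral_rayMajorant (hs : 0 ≤ s) (e : E) (hP : Integrable P μ) (hD : Integrable D μ) :
    ∫ v, rayMajorant s e P D v ∂μ = s⁻¹ * ∫ v, P v ∂μ + s ^ 2 * ∫ v, D v ∂μ := by
  have hc : Measurable fun t : ℝ ↦ t • e := by fun_prop
  simp only [rayMajorant, intervalIntegral.integral_of_le hs]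
  rw [integral_add ((hP.comp_add_right (s • e)).const_mul s⁻¹)
      ((integrable_integral_comp_add hD hc).const_mul s),
    integral_const_mul, integral_const_mul, integral_add_right_eq_self P (s • e),
    integral_integral_comp_add hD hc]
  simp [hs, sq, mul_assoc]

end RayMajorant

section Weight

theorem rpow_le_rpow_abs_mul_rpow {a b c : ℝ} (ha : 0 < a) (hab : a ≤ b) (hbc : b ≤ c * a)
    (r : ℝ) : a ^ r ≤ c ^ |r| * b ^ r := by
  have hb : 0 < b := ha.trans_le hab
  calc a ^ r = (b / a) ^ (-r) * b ^ r := by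
        rw [rpow_neg (by positivity), ← inv_rpow (by positivity), inv_div,
          ← mul_rpow (by positivity) hb.le, div_mul_cancel₀ _ hb.ne']
    _ ≤ (b / a) ^ |r| * b ^ r := by
        gcongr
        · exact (one_le_div ha).2 hab
        · exact neg_le_abs r
    _ ≤ c ^ |r| * b ^ r := by
        gcongr
        exact (div_le_iff₀ ha).2 hbc

theorem sqrt_one_add_norm_add_sq_le_two_mul {E : Type*} [SeminormedAddCommGroup E] {v u : E}
    (hu : ‖u‖ ≤ √(1 + ‖v‖ ^ 2)) :
    √(1 + ‖v + u‖ ^ 2) ≤ 2 * √(1 + ‖v‖ ^ 2) := by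
  have hbracket : √(1 + ‖v‖ ^ 2) ^ 2 = 1 + ‖v‖ ^ 2 := sq_sqrt (by positivity)
  have hsum : ‖v + u‖ ^ 2 ≤ (‖v‖ + ‖u‖) ^ 2 := by
    gcongr
    exact norm_add_le v u
  have husq : ‖u‖ ^ 2 ≤ √(1 + ‖v‖ ^ 2) ^ 2 := by gcongr
  refine sqrt_le_iff.2 ⟨by positivity, ?_⟩
  nlinarith [sq_nonneg (‖v‖ - ‖u‖)]

variable {E : Type*} [NormedAddCommGroup E] [InnerProductSpace ℝ E]

/-- The weight `w` decreases at most by a factor `K` under displacements `u` that point away from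
the origin and are no longer than the Japanese bracket `⟨v⟩ = √(1 + ‖v‖²)` of the base point. -/
def OutwardComparable (w : E → ℝ) (K : ℝ) : Prop :=
  ∀ ⦃v u : E⦄, 0 ≤ ⟪v, u⟫_ℝ → ‖u‖ ≤ √(1 + ‖v‖ ^ 2) → w v ≤ K * w (v + u)

theorem OutwardComparable.sq {w : E → ℝ} {K : ℝ} (hw : OutwardComparable w K)
    (hw0 : ∀ v, 0 ≤ w v) : OutwardComparable (fun v ↦ w v ^ 2) (K ^ 2) := fun v u hvu hu ↦ by
  rw [← mul_pow]
  exact pow_le_pow_left₀ (hw0 v) (hw hvu hu) 2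

theorem sqrt_one_add_norm_sq_le_of_inner_nonneg {v u : E} (hvu : 0 ≤ ⟪v, u⟫_ℝ) :
    √(1 + ‖v‖ ^ 2) ≤ √(1 + ‖v + u‖ ^ 2) := by
  have := norm_add_sq_real v u
  gcongr √(1 + ?_)
  nlinarith [sq_nonneg ‖u‖]

theorem OutwardComparable.apply_add_smul {w : E → ℝ} {K : ℝ} (hw : OutwardComparable w K) {e v : E}
    (he : ‖e‖ = 1) (hve : 0 ≤ ⟪v, e⟫_ℝ) {t : ℝ} (ht : 0 ≤ t) (htv : t ≤ √(1 + ‖v‖ ^ 2)) :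
    w v ≤ K * w (v + t • e) :=
  hw (by rw [real_inner_smul_right]; positivity) (by simpa [norm_smul, he, abs_of_nonneg ht])

theorem outwardComparable_of_rpow_bounds {γ C₁ C₂ : ℝ} (hC₁ : 0 < C₁) {M : E → ℝ}
    (hM : ∀ v, C₁ * √(1 + ‖v‖ ^ 2) ^ (-γ) ≤ M v ∧ M v ≤ C₂ * √(1 + ‖v‖ ^ 2) ^ (-γ)) :
    OutwardComparable M (C₂ / C₁ * 2 ^ |γ|) := fun v u hvu hu ↦ by
  have hC₂ : 0 ≤ C₂ := hC₁.le.trans (by simpa using (hM 0).1.trans (hM 0).2)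
  have hpow : √(1 + ‖v‖ ^ 2) ^ (-γ) ≤ 2 ^ |γ| * √(1 + ‖v + u‖ ^ 2) ^ (-γ) := by
    simpa only [abs_neg] using rpow_le_rpow_abs_mul_rpow (by positivity)
      (sqrt_one_add_norm_sq_le_of_inner_nonneg hvu) (sqrt_one_add_norm_add_sq_le_two_mul hu) (-γ)
  calc M v ≤ C₂ * √(1 + ‖v‖ ^ 2) ^ (-γ) := (hM v).2
    _ ≤ C₂ * (2 ^ |γ| * √(1 + ‖v + u‖ ^ 2) ^ (-γ)) := by gcongr
    _ = C₂ / C₁ * 2 ^ |γ| * (C₁ * √(1 + ‖v + u‖ ^ 2) ^ (-γ)) := by field_simp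
    _ ≤ C₂ / C₁ * 2 ^ |γ| * M (v + u) := by
        gcongr
        exact (hM _).1

end Weight

section Density

variable {E F : Type*} [NormedAddCommGroup E] [NormedAddCommGroup F] {f : E → F} {w : E → ℝ}

theorem integrable_norm_sq_mul [MeasurableSpace E] [OpensMeasurableSpace E] {μ : Measure E}
    [IsFiniteMeasureOnCompacts μ] (hf : Continuous f) (hfs : HasCompactSupport f)
    (hwc : Continuous w) : Integrable (fun v ↦ ‖f v‖ ^ 2 * w v) μ :=
  Continuous.integrable_of_hasCompactSupport (by fun_prop)
    (HasCompactSupport.mul_right (hfs.comp_left (g := fun x ↦ ‖x‖ ^ 2) (by simp)))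

/-- The integrand `|ψ|² ⟨v⟩⁻²` of the `H_η` norm, where `|ψ|² = |f|² w`. -/
noncomputable def bracketDensity (f : E → F) (w : E → ℝ) (v : E) : ℝ :=
  ‖f v‖ ^ 2 * w v / (1 + ‖v‖ ^ 2)

theorem bracketDensity_nonneg (hw0 : ∀ v, 0 ≤ w v) (v : E) : 0 ≤ bracketDensity f w v :=
  div_nonneg (mul_nonneg (sq_nonneg _) (hw0 v)) (by positivity)

theorem integrable_bracketDensity [MeasurableSpace E] [OpensMeasurableSpace E] {μ : Measure E}
    [IsFiniteMeasureOnCompacts μ] (hf : Continuous f) (hfs : HasCompactSupport f)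
    (hwc : Continuous w) : Integrable (bracketDensity f w) μ := by
  have hquot : Continuous fun v ↦ w v / (1 + ‖v‖ ^ 2) :=
    hwc.div (by fun_prop) fun v ↦ by positivity
  exact (integrable_norm_sq_mul hf hfs hquot).congr (.of_forall fun v ↦ (mul_div_assoc _ _ _).symm)

theorem norm_sq_mul_le_bracketDensity (hw0 : ∀ v, 0 ≤ w v) {s : ℝ} {v : E}
    (hs : √(1 + ‖v‖ ^ 2) ≤ s) : ‖f v‖ ^ 2 * w v ≤ s ^ 2 * bracketDensity f w v := by
  rw [bracketDensity, ← mul_div_assoc, le_div_iff₀' (by positivity)]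
  have := hw0 v
  gcongr
  exact (sqrt_le_iff.1 hs).2

section Gradient

variable [NormedSpace ℝ E] [NormedSpace ℝ F]

/-- The integrand `|∇f|² w` of the `H_η` norm, where `f = ψ / M` and `w = M²`. -/
noncomputable def gradientDensity (f : E → F) (w : E → ℝ) (v : E) : ℝ :=
  ‖fderiv ℝ f v‖ ^ 2 * w v

theorem gradientDensity_nonneg (hw0 : ∀ v, 0 ≤ w v) (v : E) : 0 ≤ gradientDensity f w v :=
  mul_nonneg (sq_nonneg _) (hw0 v)

theorem integrable_gradientDensity [MeasurableSpace E] [OpensMeasurableSpace E] {μ : Measure E}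
    [IsFiniteMeasureOnCompacts μ] (hf : ContDiff ℝ 1 f) (hfs : HasCompactSupport f)
    (hwc : Continuous w) : Integrable (gradientDensity f w) μ :=
  integrable_norm_sq_mul (hf.continuous_fderiv one_ne_zero) (hfs.fderiv (𝕜 := ℝ)) hwc

end Gradient

section Drift

variable [InnerProductSpace ℝ E]

/-- The integrand `|v₁| |ψ|²` of the `H_η` norm, where `|ψ|² = |f|² w` and `v₁` is the component of
`v` along `e`. -/
def driftDensity (e : E) (f : E → F) (w : E → ℝ) (v : E) : ℝ :=
  |⟪v, e⟫_ℝ| * (‖f v‖ ^ 2 * w v)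

theorem driftDensity_neg_left (e : E) (f : E → F) (w : E → ℝ) :
    driftDensity (-e) f w = driftDensity e f w := by
  ext v
  simp only [driftDensity, inner_neg_right, abs_neg]

theorem driftDensity_nonneg (hw0 : ∀ v, 0 ≤ w v) (e v : E) : 0 ≤ driftDensity e f w v :=
  mul_nonneg (abs_nonneg _) (mul_nonneg (sq_nonneg _) (hw0 v))

theorem integrable_driftDensity [MeasurableSpace E] [OpensMeasurableSpace E] {μ : Measure E}
    [IsFiniteMeasureOnCompacts μ] (e : E) (hf : Continuous f) (hfs : HasCompactSupport f)
    (hwc : Continuous w) : Integrable (driftDensity e f w) μ := by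
  have hprod : Continuous fun v ↦ |⟪v, e⟫_ℝ| * w v := by fun_prop
  exact (integrable_norm_sq_mul hf hfs hprod).congr (.of_forall fun v ↦ mul_left_comm _ _ _)

theorem norm_sq_mul_le_driftDensity (hw0 : ∀ v, 0 ≤ w v) {s : ℝ} (hs : 0 < s) {e v : E}
    (hsv : s ≤ |⟪v, e⟫_ℝ|) : ‖f v‖ ^ 2 * w v ≤ s⁻¹ * driftDensity e f w v := by
  rw [inv_mul_eq_div, le_div_iff₀' hs, driftDensity]
  have := hw0 v
  gcongr

end Drift

end Density

section Poincare

variable {E F : Type*} [NormedAddCommGroup E] [InnerProductSpace ℝ E]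
  [NormedAddCommGroup F] [NormedSpace ℝ F] {f : E → F} {w : E → ℝ} {K s : ℝ} {e : E}

theorem OutwardComparable.mul_integral_le (hw : OutwardComparable w K) (hwc : Continuous w)
    (he : ‖e‖ = 1) {v : E} (hve : 0 ≤ ⟪v, e⟫_ℝ) (hs : 0 ≤ s) (hsv : s ≤ √(1 + ‖v‖ ^ 2))
    {D : E → ℝ} (hDc : Continuous D) (hD : ∀ v, 0 ≤ D v) :
    w v * ∫ t in (0 : ℝ)..s, D (v + t • e) ≤
      K * ∫ t in (0 : ℝ)..s, D (v + t • e) * w (v + t • e) := by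
  rw [← intervalIntegral.integral_const_mul, ← intervalIntegral.integral_const_mul]
  refine intervalIntegral.integral_mono_on hs (Continuous.intervalIntegrable (by fun_prop) _ _)
    (Continuous.intervalIntegrable (by fun_prop) _ _) fun t ⟨ht0, hts⟩ ↦ ?_
  have hcomp : w v ≤ K * w (v + t • e) := hw.apply_add_smul he hve ht0 (hts.trans hsv)
  linarith [mul_le_mul_of_nonneg_right hcomp (hD (v + t • e))]

theorem norm_sq_mul_le_rayMajorant (hf : ContDiff ℝ 1 f) (hwc : Continuous w) (hw0 : ∀ v, 0 ≤ w v)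
    (hK : 0 ≤ K) (hw : OutwardComparable w K) (he : ‖e‖ = 1) {v : E} (hve : 0 ≤ ⟪v, e⟫_ℝ)
    (hs : 0 < s) (hsv : s ≤ √(1 + ‖v‖ ^ 2)) :
    ‖f v‖ ^ 2 * w v ≤
      2 * K * rayMajorant s e (driftDensity e f w) (gradientDensity f w) v := by
  have := hf.continuous_fderiv one_ne_zero
  have hfar : s ≤ |⟪v + s • e, e⟫_ℝ| := by
    rw [inner_add_left, real_inner_smul_left, real_inner_self_eq_norm_sq, he]
    exact le_abs.2 (.inl (by linarith))
  have endpoint : ‖f (v + s • e)‖ ^ 2 * w v ≤ K * (s⁻¹ * driftDensity e f w (v + s • e)) := by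
    calc ‖f (v + s • e)‖ ^ 2 * w v
        ≤ ‖f (v + s • e)‖ ^ 2 * (K * w (v + s • e)) := by
          gcongr
          exact hw.apply_add_smul he hve hs.le hsv
      _ = K * (‖f (v + s • e)‖ ^ 2 * w (v + s • e)) := mul_left_comm _ _ _
      _ ≤ K * (s⁻¹ * driftDensity e f w (v + s • e)) :=
          mul_le_mul_of_nonneg_left (norm_sq_mul_le_driftDensity hw0 hs hfar) hK
  have gradient : w v * ∫ t in (0 : ℝ)..s, ‖fderiv ℝ f (v + t • e)‖ ^ 2 ≤
      K * ∫ t in (0 : ℝ)..s, gradientDensity f w (v + t • e) :=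
    hw.mul_integral_le hwc he hve hs.le hsv (D := fun v ↦ ‖fderiv ℝ f v‖ ^ 2) (by fun_prop)
      fun _ ↦ sq_nonneg _
  have segment := mul_le_mul_of_nonneg_right
    (norm_sq_le_add_integral_norm_fderiv_sq hf he.le hs.le v) (hw0 v)
  rw [rayMajorant]
  linarith [mul_le_mul_of_nonneg_left gradient hs.le]

theorem norm_sq_mul_le_add_rayMajorant (hf : ContDiff ℝ 1 f) (hwc : Continuous w)
    (hw0 : ∀ v, 0 ≤ w v) (hK : 0 ≤ K) (hw : OutwardComparable w K) (he : ‖e‖ = 1) (hs : 0 < s)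
    (v : E) :
    ‖f v‖ ^ 2 * w v ≤ s⁻¹ * driftDensity e f w v + s ^ 2 * bracketDensity f w v
      + 2 * K * (rayMajorant s e (driftDensity e f w) (gradientDensity f w) v
        + rayMajorant s (-e) (driftDensity e f w) (gradientDensity f w) v) := by
  have drift_nonneg : 0 ≤ s⁻¹ * driftDensity e f w v :=
    mul_nonneg (by positivity) (driftDensity_nonneg hw0 e v)
  have bracket_nonneg : 0 ≤ s ^ 2 * bracketDensity f w v :=
    mul_nonneg (by positivity) (bracketDensity_nonneg hw0 v)
  have ray_nonneg (e' : E) :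
      0 ≤ 2 * K * rayMajorant s e' (driftDensity e f w) (gradientDensity f w) v :=
    mul_nonneg (by positivity) (rayMajorant_nonneg hs.le e' (driftDensity_nonneg hw0 e)
      (gradientDensity_nonneg hw0) v)
  rcases le_total s |⟪v, e⟫_ℝ| with hdrift | -
  · linarith [norm_sq_mul_le_driftDensity (f := f) hw0 hs hdrift, ray_nonneg e, ray_nonneg (-e)]
  rcases le_total (√(1 + ‖v‖ ^ 2)) s with hbracket | hsv
  · linarith [norm_sq_mul_le_bracketDensity (f := f) hw0 hbracket, ray_nonneg e, ray_nonneg (-e)]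
  rcases le_total 0 ⟪v, e⟫_ℝ with hve | hve
  · linarith [norm_sq_mul_le_rayMajorant hf hwc hw0 hK hw he hve hs hsv, ray_nonneg (-e)]
  · have hray := norm_sq_mul_le_rayMajorant hf hwc hw0 hK hw (e := -e) (by rwa [norm_neg])
      (by rwa [inner_neg_right, Left.nonneg_neg_iff]) hs hsv
    rw [driftDensity_neg_left] at hray
    linarith [ray_nonneg e]

variable [FiniteDimensional ℝ E] [MeasurableSpace E] [BorelSpace E] {μ : Measure E}
  [μ.IsAddHaarMeasure]

theorem integral_norm_sq_mul_le (hf : ContDiff ℝ 1 f) (hfs : HasCompactSupport f)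
    (hwc : Continuous w) (hw0 : ∀ v, 0 ≤ w v) (hK : 0 ≤ K) (hw : OutwardComparable w K)
    (he : ‖e‖ = 1) (hs : 0 < s) :
    ∫ v, ‖f v‖ ^ 2 * w v ∂μ ≤ (1 + 4 * K) *
      (s ^ 2 * ∫ v, gradientDensity f w v ∂μ + s ^ 2 * ∫ v, bracketDensity f w v ∂μ
        + s⁻¹ * ∫ v, driftDensity e f w v ∂μ) := by
  have hP : Integrable (driftDensity e f w) μ := integrable_driftDensity e hf.continuous hfs hwc
  have hQ : Integrable (bracketDensity f w) μ := integrable_bracketDensity hf.continuous hfs hwc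
  have hD : Integrable (gradientDensity f w) μ := integrable_gradientDensity hf hfs hwc
  have hray (e' : E) := integrable_rayMajorant hs.le e' hP hD
  have hlocal : Integrable (fun v ↦ s⁻¹ * driftDensity e f w v + s ^ 2 * bracketDensity f w v) μ :=
    (hP.const_mul s⁻¹).add (hQ.const_mul (s ^ 2))
  have hrays : Integrable (fun v ↦ 2 * K *
      (rayMajorant s e (driftDensity e f w) (gradientDensity f w) v
        + rayMajorant s (-e) (driftDensity e f w) (gradientDensity f w) v)) μ :=
    ((hray e).add (hray (-e))).const_mul (2 * K)
  calc ∫ v, ‖f v‖ ^ 2 * w v ∂μ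
      ≤ ∫ v, (s⁻¹ * driftDensity e f w v + s ^ 2 * bracketDensity f w v
          + 2 * K * (rayMajorant s e (driftDensity e f w) (gradientDensity f w) v
            + rayMajorant s (-e) (driftDensity e f w) (gradientDensity f w) v)) ∂μ :=
        integral_mono (integrable_norm_sq_mul hf.continuous hfs hwc) (hlocal.add hrays)
          (norm_sq_mul_le_add_rayMajorant hf hwc hw0 hK hw he hs)
    _ = s⁻¹ * ∫ v, driftDensity e f w v ∂μ + s ^ 2 * ∫ v, bracketDensity f w v ∂μ
          + 4 * K * (s⁻¹ * ∫ v, driftDensity e f w v ∂μ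
            + s ^ 2 * ∫ v, gradientDensity f w v ∂μ) := by
        rw [integral_add hlocal hrays, integral_add (hP.const_mul s⁻¹) (hQ.const_mul (s ^ 2)),
          integral_const_mul, integral_const_mul, integral_const_mul,
          integral_add (hray e) (hray (-e)), integral_rayMajorant hs.le e hP hD,
          integral_rayMajorant hs.le (-e) hP hD]
        ring
    _ ≤ _ := by
        have gradient : 0 ≤ s ^ 2 * ∫ v, gradientDensity f w v ∂μ :=
          mul_nonneg (by positivity) (integral_nonneg (gradientDensity_nonneg hw0))
        have bracket : 0 ≤ K * (s ^ 2 * ∫ v, bracketDensity f w v ∂μ) :=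
          mul_nonneg hK (mul_nonneg (by positivity) (integral_nonneg (bracketDensity_nonneg hw0)))
        linarith

theorem poincare_eta_general {γ C₁ C₂ : ℝ} (hC₁ : 0 < C₁) {M : E → ℝ} (hM : ContDiff ℝ 1 M)
    (hA1 : ∀ v, C₁ * √(1 + ‖v‖ ^ 2) ^ (-γ) ≤ M v ∧ M v ≤ C₂ * √(1 + ‖v‖ ^ 2) ^ (-γ))
    (he : ‖e‖ = 1) :
    ∃ C₀ : ℝ, 0 < C₀ ∧ ∀ η : ℝ, 0 < η → ∀ ψ : E → F, ContDiff ℝ 1 ψ → HasCompactSupport ψ →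
      ∫ v, ‖ψ v‖ ^ 2 ∂μ ≤ C₀ ^ 2 * η ^ (-(2 : ℝ) / 3) *
        (∫ v, ‖fderiv ℝ (fun u ↦ (M u)⁻¹ • ψ u) v‖ ^ 2 * M v ^ 2 ∂μ
          + ∫ v, ‖ψ v‖ ^ 2 / (1 + ‖v‖ ^ 2) ∂μ + η * ∫ v, |⟪v, e⟫_ℝ| * ‖ψ v‖ ^ 2 ∂μ) := by
  have hM0 (v : E) : 0 < M v := lt_of_lt_of_le (by positivity) (hA1 v).1
  set K := (C₂ / C₁ * 2 ^ |γ|) ^ 2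
  have hw : OutwardComparable (fun v ↦ M v ^ 2) K :=
    (outwardComparable_of_rpow_bounds hC₁ hA1).sq fun v ↦ (hM0 v).le
  refine ⟨√(1 + 4 * K), by positivity, fun η hη ψ hψ hψs ↦ ?_⟩
  have hf : ContDiff ℝ 1 (fun u ↦ (M u)⁻¹ • ψ u) := (hM.inv fun v ↦ (hM0 v).ne').smul hψ
  have hnorm (v : E) : ‖(M v)⁻¹ • ψ v‖ ^ 2 * M v ^ 2 = ‖ψ v‖ ^ 2 := by
    rw [← mul_pow, norm_smul, norm_inv, norm_of_nonneg (hM0 v).le, mul_comm,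
      mul_inv_cancel_left₀ (hM0 v).ne']
  have hmain := integral_norm_sq_mul_le (μ := μ) hf hψs.smul_left
    (w := fun v ↦ M v ^ 2) (hM.continuous.pow 2) (fun v ↦ sq_nonneg _) (sq_nonneg _) hw he
    (rpow_pos_of_pos hη (-1 / 3))
  have hsq : (η ^ (-1 / 3 : ℝ)) ^ 2 = η ^ (-(2 : ℝ) / 3) := by
    rw [← rpow_mul_natCast hη.le]
    norm_num
  have hinv : (η ^ (-1 / 3 : ℝ))⁻¹ = η ^ (-(2 : ℝ) / 3) * η := by
    rw [← rpow_neg hη.le, ← rpow_add_one hη.ne']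
    norm_num
  simp only [driftDensity, bracketDensity, gradientDensity, hnorm, hsq, hinv] at hmain
  rw [sq_sqrt (by positivity)]
  linarith

end Poincare

/-- **Poincaré-type inequality at scale `η^{-1/3}`** (Lemma 2.5 of the paper). -/
theorem poincare_eta (d : ℕ) (h0 : 0 < d) (γ C₁ C₂ : ℝ)
    (hγ₁ : (d : ℝ) / 2 < γ) (hγ₂ : γ < ((d : ℝ) + 4) / 2)
    (hC₁ : 0 < C₁) (hC₁₂ : C₁ ≤ C₂)
    (M : EuclideanSpace ℝ (Fin d) → ℝ) (hMpos : ∀ v, 0 < M v) (hM : ContDiff ℝ 1 M)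
    (hA1 : ∀ v, C₁ * Real.sqrt (1 + ‖v‖ ^ 2) ^ (-γ) ≤ M v ∧
              M v ≤ C₂ * Real.sqrt (1 + ‖v‖ ^ 2) ^ (-γ)) :
    ∃ C₀ : ℝ, 0 < C₀ ∧
      ∀ η : ℝ, 0 < η →
        ∀ ψ : EuclideanSpace ℝ (Fin d) → ℂ, ContDiff ℝ (⊤ : ℕ∞) ψ → HasCompactSupport ψ →
          (∫ v, ‖ψ v‖ ^ 2) ≤ C₀ ^ 2 * η ^ (-(2 : ℝ) / 3) *
            ((∫ v, ‖fderiv ℝ (fun w => ψ w / (M w : ℂ)) v‖ ^ 2 * (M v) ^ 2) +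
              (∫ v, ‖ψ v‖ ^ 2 / (1 + ‖v‖ ^ 2)) +
              η * ∫ v, |v (⟨0, h0⟩ : Fin d)| * ‖ψ v‖ ^ 2) := by
  obtain ⟨C₀, hC₀, h⟩ := poincare_eta_general (F := ℂ) (μ := volume) hC₁ hM hA1
    (e := EuclideanSpace.single ⟨0, h0⟩ 1) (by simp)
  exact ⟨C₀, hC₀, fun η hη ψ hψ hψs ↦ by
    simpa [div_eq_inv_mul, EuclideanSpace.inner_single_right] using
      h η hη ψ (hψ.of_le (mod_cast le_top)) hψs⟩
end
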